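/- Let α, β > -1, 1 ≤ p ≤ ∞, and fix an admissible function η. There is a constant c > 0, depending only on α, β, p, η, such that for every f ∈ L^p(w_{α,β}) if 1 ≤ p < ∞ (f ∈ C[-1,1] if p = ∞) and every n ≥ 1, ‖f - V_n^{α,β} f‖_{L^p(w_{α,β})} ≤ c · E_n(f)_{L^p(w_{α,β})}. -/

import Mathlib

open MeasureTheory Set ENNReal NNReal

noncomputable section

namespace JacobiApprox

/-- The Jacobi weight `w_{α,β}(x) = (1-x)^α (1+x)^β` on `(-1,1)`. -/
def w (α β x : ℝ) : ℝ := (1 - x) ^ α * (1 + x) ^ β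

/-- The weighted `L^p` norm `‖f‖_{L^p(w_{α,β})}`; for `p = ∞` it is the uniform
norm on `[-1,1]`. -/
def LpW (α β : ℝ) (p : ℝ≥0∞) (f : ℝ → ℝ) : ℝ :=
  if p = ⊤ then sSup ((fun x => |f x|) '' Icc (-1 : ℝ) 1)
  else (∫ x in Ioo (-1 : ℝ) 1, |f x| ^ p.toReal * w α β x) ^ (1 / p.toReal)

/-- Membership in `L^p(w_{α,β})` (`f ∈ C[-1,1]` when `p = ∞`). -/
def MemLpW (α β : ℝ) (p : ℝ≥0∞) (f : ℝ → ℝ) : Prop :=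
  Measurable f ∧
    (p ≠ ⊤ → IntegrableOn (fun x => |f x| ^ p.toReal * w α β x) (Ioo (-1 : ℝ) 1)) ∧
    (p = ⊤ → ContinuousOn f (Icc (-1 : ℝ) 1))

/-- `E_n(f)_{L^p(w_{α,β})}`: the error of best approximation of `f` by polynomials
of degree at most `n` in `L^p(w_{α,β})`. -/
def E (α β : ℝ) (p : ℝ≥0∞) (n : ℕ) (f : ℝ → ℝ) : ℝ :=
  sInf {r : ℝ | ∃ q : Polynomial ℝ, q.natDegree ≤ n ∧
    r = LpW α β p (fun x => f x - q.eval x)}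

/-- Membership in the Sobolev space `W_p^s(w_{α,β})`: `f` has `s` continuous
derivatives and `f^{(s)} ∈ L^p(w_{α,β})` (for `p = ∞` this is `f ∈ C^s[-1,1]`). -/
def MemW (α β : ℝ) (p : ℝ≥0∞) (s : ℕ) (f : ℝ → ℝ) : Prop :=
  ContDiff ℝ (s : ℕ∞) f ∧
    (p ≠ ⊤ → IntegrableOn (fun x => |iteratedDeriv s f x| ^ p.toReal * w α β x)
      (Ioo (-1 : ℝ) 1))

/-- The Sobolev norm `‖f‖_{W_p^s(w_{α,β})}` (max over derivatives when `p = ∞`). -/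
def WNorm (α β : ℝ) (p : ℝ≥0∞) (s : ℕ) (f : ℝ → ℝ) : ℝ :=
  if p = ⊤ then
    (Finset.range (s + 1)).sup' (Finset.nonempty_range_iff.mpr (Nat.succ_ne_zero s))
      (fun k => LpW α β ⊤ (iteratedDeriv k f))
  else (∑ k ∈ Finset.range (s + 1), (LpW α β p (iteratedDeriv k f)) ^ p.toReal) ^
    (1 / p.toReal)

/-- Pochhammer symbol (rising factorial) `(a)_k`. -/
def poch (a : ℝ) (k : ℕ) : ℝ := ∏ i ∈ Finset.range k, (a + i)

/-- The Jacobi polynomial `P_n^{(α,β)}`. -/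
def JP (α β : ℝ) (n : ℕ) (t : ℝ) : ℝ :=
  (poch (α + 1) n / n.factorial) *
    ∑ k ∈ Finset.range (n + 1),
      poch (-(n : ℝ)) k * poch ((n : ℝ) + α + β + 1) k /
        (poch (α + 1) k * k.factorial) * ((1 - t) / 2) ^ k

/-- The renormalized Jacobi polynomial `J_n^{α,β} = 2^n/(n+α+β+1)_n · P_n^{(α,β)}`. -/
def J (α β : ℝ) (n : ℕ) (t : ℝ) : ℝ :=
  2 ^ n / poch ((n : ℝ) + α + β + 1) n * JP α β n t

/-- The inner product `⟨f,g⟩_{α,β} = ∫_{-1}^1 f g w_{α,β}`. -/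
def ip (α β : ℝ) (f g : ℝ → ℝ) : ℝ := ∫ x in Ioo (-1 : ℝ) 1, f x * g x * w α β x

/-- `h_n^{α,β} = ⟨J_n^{α,β}, J_n^{α,β}⟩_{α,β}`. -/
def hJ (α β : ℝ) (n : ℕ) : ℝ := ip α β (J α β n) (J α β n)

/-- The Fourier–Jacobi coefficient `\hat f_n^{α,β}`. -/
def coeff (α β : ℝ) (n : ℕ) (f : ℝ → ℝ) : ℝ := ip α β f (J α β n) / hJ α β n

/-- The `n`-th partial sum `S_n^{α,β} f` of the Fourier–Jacobi series. -/
def S (α β : ℝ) (n : ℕ) (f : ℝ → ℝ) (x : ℝ) : ℝ :=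
  ∑ k ∈ Finset.range (n + 1), coeff α β k f * J α β k x

/-- An admissible cut-off function: `C^∞`, `η ≡ 1` on `[0,1]`, `η ≡ 0` on `[2,∞)`. -/
def Admissible (η : ℝ → ℝ) : Prop :=
  ContDiff ℝ (⊤ : ℕ∞) η ∧ (∀ t : ℝ, 0 ≤ t → t ≤ 1 → η t = 1) ∧ ∀ t : ℝ, 2 ≤ t → η t = 0

/-- The de la Vallée Poussin type operator `V_n^{α,β} f`. -/
def V (η : ℝ → ℝ) (α β : ℝ) (n : ℕ) (f : ℝ → ℝ) (x : ℝ) : ℝ :=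
  ∑ k ∈ Finset.range (2 * n + 1), η ((k : ℝ) / (n : ℝ)) * coeff α β k f * J α β k x

/-- The Sobolev orthogonal polynomial `𝒥_{n,θ}^{α-s,β-s}`. -/
def SJ (α β : ℝ) (s : ℕ) (θ : ℝ) (n : ℕ) (x : ℝ) : ℝ :=
  if n < s then (x - θ) ^ n / n.factorial
  else ∫ t in θ..x, (x - t) ^ (s - 1) / (s - 1).factorial * J α β (n - s) t

/-- The Sobolev inner product `⟨f,g⟩_{α,β}^{-s}`. -/
def ipS (α β : ℝ) (s : ℕ) (θ : ℝ) (lam : ℕ → ℝ) (f g : ℝ → ℝ) : ℝ :=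
  ip α β (iteratedDeriv s f) (iteratedDeriv s g) +
    ∑ k ∈ Finset.range s, lam k * iteratedDeriv k f θ * iteratedDeriv k g θ

/-- The Fourier coefficient `\hat{𝔣}_n^{α-s,β-s}` in the Sobolev orthogonal system. -/
def coeffS (α β : ℝ) (s : ℕ) (θ : ℝ) (lam : ℕ → ℝ) (n : ℕ) (f : ℝ → ℝ) : ℝ :=
  ipS α β s θ lam f (SJ α β s θ n) / ipS α β s θ lam (SJ α β s θ n) (SJ α β s θ n)

/-- The `n`-th partial sum `𝒮_{n,θ}^{α-s,β-s} f` of the Sobolev orthogonal expansion. -/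
def SS (α β : ℝ) (s : ℕ) (θ : ℝ) (lam : ℕ → ℝ) (n : ℕ) (f : ℝ → ℝ) (x : ℝ) : ℝ :=
  ∑ k ∈ Finset.range (n + 1), coeffS α β s θ lam k f * SJ α β s θ k x

/-- The operator `𝒱_{n,θ}^{α-s,β-s} f`. -/
def VS (η : ℝ → ℝ) (α β : ℝ) (s : ℕ) (θ : ℝ) (n : ℕ) (f : ℝ → ℝ) (x : ℝ) : ℝ :=
  (∑ k ∈ Finset.range s, iteratedDeriv k f θ * (x - θ) ^ k / k.factorial) +
    ∫ t in θ..x, (x - t) ^ (s - 1) / (s - 1).factorial *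
      V η α β n (iteratedDeriv s f) t

/-- `A_j^{α,β} = (α+β+2)_{2j}/(α+1)_j`. -/
def Acoef (α β : ℝ) (j : ℕ) : ℝ := poch (α + β + 2) (2 * j) / poch (α + 1) j

/-- `B_n^{α,β} = (α+1)_{n+1}/(α+β+2)_{2n+1}`. -/
def Bcoef (α β : ℝ) (n : ℕ) : ℝ := poch (α + 1) (n + 1) / poch (α + β + 2) (2 * n + 1)

/-- `D_j^{α,β} = (j+β+1)/((2j+α+β+2)(2j+α+β+3))`. -/
def Dcoef (α β : ℝ) (j : ℕ) : ℝ :=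
  ((j : ℝ) + β + 1) / ((2 * (j : ℝ) + α + β + 2) * (2 * (j : ℝ) + α + β + 3))

/-- The function `u_{g,k}` of the Aubin–Nitsche duality argument. -/
def u (α β : ℝ) (s k : ℕ) (g : ℝ → ℝ) (x : ℝ) : ℝ :=
  ∫ t in (-1 : ℝ)..x, (x - t) ^ (s - 1) / (s - 1).factorial * (1 / w α β t) *
    ∫ y in t..(1 : ℝ), (y - t) ^ (s - k - 1) / (s - k - 1).factorial * g y * w α β y

/-- The `s`-th derivative of `u_{g,k}`, given by its explicit formula. -/
def uDs (α β : ℝ) (s k : ℕ) (g : ℝ → ℝ) (x : ℝ) : ℝ :=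
  (1 / w α β x) *
    ∫ y in x..(1 : ℝ), (y - x) ^ (s - k - 1) / (s - k - 1).factorial * g y * w α β y

/-!
The operator `V η α β n` has the kernel `K x y = ∑ k, η (k / n) * v k x * v k y / h k`, where the
`v k` are the Jacobi polynomials and the `h k` their square norms. Multiplying `K x y` by
`(y - x) ^ j` acts on its coefficient sequence by the `j`-th power of the Jacobi matrix minus `x`.
As the cutoff is smooth and the recurrence coefficients converge at a polynomial rate, a symbol
calculus shows that each application gains a factor `σ / n`, with `σ = √(1 - x ^ 2) + 1 / n`, and
Parseval's identity bounds the moments `∫ ((y - x) ^ j * K x y) ^ 2`. Weighted AM-GM, with a weight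
localised at scale `σ / n` around `x`, turns these moments into a uniform bound for
`∫ |K x y|`, and Schur's test makes the operators bounded on every `L ^ p` uniformly in `n`. Since
they reproduce the polynomials `q` of degree at most `n`, the error of `f` is the error of `f - q`,
which the uniform bound controls by the norm of `f - q`.
-/

/-! ### Symbol classes -/

section Symbols

open scoped fwdDiff

variable {ι : Type*}

/-- The family of sequences `f i` is dominated by the weights `B i`, uniformly in the parameter
`i`, on the tails `k ≥ d i`. -/
def TailBounded (d : ι → ℕ) (B : ι → ℝ) (f : ι → ℕ → ℝ) : Prop :=
  ∃ C : ℝ, 0 ≤ C ∧ ∀ i k, d i ≤ k → |f i k| ≤ C * B i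

/-- The discrete analogue of a symbol class: every forward difference of `f i` gains a factor
`1 / N i` over the weight `B i`, uniformly in the parameter `i` and on the tail `k ≥ d i`. -/
def IsSymbol (N : ι → ℝ) (d : ι → ℕ) (B : ι → ℝ) (f : ι → ℕ → ℝ) : Prop :=
  ∀ j, TailBounded d (fun i => B i / N i ^ j) fun i => (Δ_[1])^[j] (f i)

variable {N : ι → ℝ} {d : ι → ℕ} {A B B' : ι → ℝ} {f g : ι → ℕ → ℝ}

lemma TailBounded.congr (h : TailBounded d B f) (hfg : ∀ i k, d i ≤ k → g i k = f i k) :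
    TailBounded d B g := by
  obtain ⟨C, hC, h⟩ := h
  exact ⟨C, hC, fun i k hk => hfg i k hk ▸ h i k hk⟩

lemma TailBounded.mono (h : TailBounded d B f) (hB : ∀ i, B i ≤ B' i) : TailBounded d B' f := by
  obtain ⟨C, hC, h⟩ := h
  exact ⟨C, hC, fun i k hk => (h i k hk).trans (mul_le_mul_of_nonneg_left (hB i) hC)⟩

lemma TailBounded.add (hf : TailBounded d B f) (hg : TailBounded d B g) :
    TailBounded d B fun i => f i + g i := by
  obtain ⟨C, hC, hf⟩ := hf
  obtain ⟨C', hC', hg⟩ := hg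
  refine ⟨C + C', by positivity, fun i k hk => ?_⟩
  rw [add_mul]
  exact (abs_add_le _ _).trans (add_le_add (hf i k hk) (hg i k hk))

lemma TailBounded.mul (hf : TailBounded d B f) (hg : TailBounded d B' g) :
    TailBounded d (fun i => B i * B' i) fun i => f i * g i := by
  obtain ⟨C, hC, hf⟩ := hf
  obtain ⟨C', hC', hg⟩ := hg
  refine ⟨C * C', by positivity, fun i k hk => ?_⟩
  calc |f i k * g i k| = |f i k| * |g i k| := abs_mul _ _
    _ ≤ (C * B i) * (C' * B' i) :=
      mul_le_mul (hf i k hk) (hg i k hk) (abs_nonneg _) ((abs_nonneg _).trans (hf i k hk))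
    _ = C * C' * (B i * B' i) := by ring

lemma fwdDiff_iter_congr_of_le {u v : ℕ → ℝ} {m : ℕ} (h : ∀ k, m ≤ k → u k = v k) (j : ℕ) :
    ∀ k, m ≤ k → (Δ_[1])^[j] u k = (Δ_[1])^[j] v k := by
  induction j with
  | zero => exact h
  | succ j ih =>
    intro k hk
    simp only [Function.iterate_succ_apply', fwdDiff, ih k hk, ih (k + 1) (by omega)]

namespace IsSymbol

lemma tailBounded (h : IsSymbol N d B f) : TailBounded d B f := by
  simpa using h 0

lemma congr (h : IsSymbol N d B f) (hfg : ∀ i k, d i ≤ k → g i k = f i k) : IsSymbol N d B g :=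
  fun j => (h j).congr fun i => fwdDiff_iter_congr_of_le (hfg i) j

lemma mono (h : IsSymbol N d B f) (hN : ∀ i, 0 ≤ N i) (hB : ∀ i, B i ≤ B' i) :
    IsSymbol N d B' f :=
  fun j => (h j).mono fun i => div_le_div_of_nonneg_right (hB i) (pow_nonneg (hN i) j)

lemma shift (h : IsSymbol N d B f) (a : ℕ) : IsSymbol N d B fun i k => f i (k + a) := by
  intro j
  obtain ⟨C, hC, h⟩ := h j
  refine ⟨C, hC, fun i k hk => ?_⟩
  have hshift := fwdDiff_iter_comp_add 1 (f i) a j k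
  simpa only [hshift] using h i (k + a) (by omega)

lemma fwdDiff (h : IsSymbol N d B f) : IsSymbol N d (fun i => B i / N i) fun i => Δ_[1] (f i) := by
  intro j
  have := h (j + 1)
  simpa only [Function.iterate_succ_apply, div_div, ← pow_succ'] using this

lemma add (hf : IsSymbol N d B f) (hg : IsSymbol N d B g) :
    IsSymbol N d B fun i k => f i k + g i k := by
  intro j
  refine ((hf j).add (hg j)).congr fun i k _ => ?_
  exact congrFun (fwdDiff_iter_add 1 (f i) (g i) j) k

lemma const_mul (h : IsSymbol N d B f) {c : ι → ℝ} (hc : ∀ i, |c i| ≤ A i) :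
    IsSymbol N d (fun i => A i * B i) fun i k => c i * f i k := by
  intro j
  obtain ⟨C, hC, h⟩ := h j
  refine ⟨C, hC, fun i k hk => ?_⟩
  have : (Δ_[1])^[j] (fun k => c i * f i k) k = c i * (Δ_[1])^[j] (f i) k :=
    congrFun (fwdDiff_iter_const_smul 1 (c i) (f i) j) k
  calc |(Δ_[1])^[j] (fun k => c i * f i k) k|
      = |c i| * |(Δ_[1])^[j] (f i) k| := by rw [this, abs_mul]
    _ ≤ A i * (C * (B i / N i ^ j)) :=
      mul_le_mul (hc i) (h i k hk) (abs_nonneg _) ((abs_nonneg _).trans (hc i))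
    _ = C * (A i * B i / N i ^ j) := by ring

lemma const_smul (h : IsSymbol N d B f) (c : ℝ) : IsSymbol N d B fun i k => c * f i k := by
  intro j
  obtain ⟨C, hC, h⟩ := h.const_mul (c := fun _ => c) (fun _ => le_rfl) j
  exact ⟨C * |c|, by positivity, fun i k hk => (h i k hk).trans_eq (by ring)⟩

lemma sub (hf : IsSymbol N d B f) (hg : IsSymbol N d B g) :
    IsSymbol N d B fun i k => f i k - g i k :=
  (hf.add (hg.const_smul (-1))).congr fun i k _ => by ring

lemma mul (hf : IsSymbol N d B f) (hg : IsSymbol N d B' g) :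
    IsSymbol N d (fun i => B i * B' i) fun i k => f i k * g i k := by
  intro j
  induction j generalizing B B' f g with
  | zero => simpa using! hf.tailBounded.mul hg.tailBounded
  | succ j ih =>
    have leibniz : ∀ i, Δ_[1] (fun k => f i k * g i k) =
        (fun k => Δ_[1] (f i) k * g i k) + fun k => f i (k + 1) * Δ_[1] (g i) k := by
      intro i
      ext k
      simp only [_root_.fwdDiff, Pi.add_apply]
      ring
    simp only [Function.iterate_succ_apply, leibniz, fwdDiff_iter_add]
    refine TailBounded.add ?_ ?_
    · exact (ih hf.fwdDiff hg).mono fun i => le_of_eq (by ring)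
    · exact (ih (hf.shift 1) hg.fwdDiff).mono fun i => le_of_eq (by ring)

lemma zero : IsSymbol N d B fun _ _ => 0 := by
  intro j
  refine ⟨0, le_rfl, fun i k _ => ?_⟩
  have : (Δ_[1])^[j] (fun _ : ℕ => (0 : ℝ)) = 0 :=
    Function.iterate_fixed (f := Δ_[1]) (x := (0 : ℕ → ℝ)) (fwdDiff_const 1 (0 : ℝ)) j
  simp [this]

end IsSymbol

lemma fwdDiff_iter_one_div_affine {a b : ℝ} {m : ℕ} (h : ∀ k, m ≤ k → a * (k : ℕ) + b ≠ 0)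
    (j : ℕ) : ∀ k, m ≤ k → (Δ_[1])^[j] (fun k : ℕ => 1 / (a * k + b)) k =
      (-a) ^ j * j.factorial * ∏ i ∈ Finset.range (j + 1), 1 / (a * ((k + i : ℕ) : ℝ) + b) := by
  induction j with
  | zero => simp
  | succ j ih =>
    intro k hk
    have h0 := h k hk
    have hlast := h (k + (j + 1)) (by omega)
    rw [Function.iterate_succ_apply', _root_.fwdDiff, ih k hk, ih (k + 1) (by omega),
      Finset.prod_range_succ (n := j), Finset.prod_range_succ' (n := j),
      Finset.prod_range_succ (n := j + 1), Finset.prod_range_succ' (n := j)]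
    simp only [add_zero, show ∀ i, k + 1 + i = k + (i + 1) by omega]
    generalize ∏ i ∈ Finset.range j, 1 / (a * ((k + (i + 1) : ℕ) : ℝ) + b) = P
    push_cast [Nat.factorial_succ] at hlast ⊢
    field_simp
    ring

lemma IsSymbol.one_div_affine {a b c : ℝ} (hc : 0 < c) (hN : ∀ i, 0 < N i)
    (hlow : ∀ i k, d i ≤ k → c * N i ≤ a * (k : ℕ) + b) :
    IsSymbol N d (fun i => 1 / N i) fun _ k => 1 / (a * k + b) := by
  intro j
  refine ⟨|a| ^ j * j.factorial * (1 / c) ^ (j + 1), by positivity, fun i k hk => ?_⟩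
  have hcN : 0 < c * N i := mul_pos hc (hN i)
  have hpos : ∀ l, d i ≤ l → 0 < a * (l : ℕ) + b := fun l hl => hcN.trans_le (hlow i l hl)
  have hprod : |∏ l ∈ Finset.range (j + 1), 1 / (a * ((k + l : ℕ) : ℝ) + b)| ≤
      (1 / (c * N i)) ^ (j + 1) := by
    rw [Finset.abs_prod]
    refine (Finset.prod_le_prod (g := fun _ => 1 / (c * N i)) (fun l _ => abs_nonneg _)
      fun l _ => ?_).trans_eq (by simp)
    rw [abs_of_pos (one_div_pos.mpr (hpos (k + l) (by omega)))]
    exact one_div_le_one_div_of_le hcN (hlow i (k + l) (by omega))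
  have hdiff := fwdDiff_iter_one_div_affine (fun l hl => (hpos l hl).ne') j k hk
  simp only [hdiff, abs_mul, abs_pow, abs_neg, Nat.abs_cast]
  refine (mul_le_mul_of_nonneg_left hprod (by positivity)).trans_eq ?_
  have := (hN i).ne'
  rw [← one_div_mul_one_div, mul_pow, pow_succ (1 / N i), one_div_pow (N i)]
  field_simp

lemma abs_iteratedDeriv_comp_add_sub_le {ψ : ℝ → ℝ} (hψ : ContDiff ℝ (⊤ : ℕ∞) ψ) {C s t : ℝ}
    {i : ℕ} (hC : ∀ y, 0 ≤ y → |iteratedDeriv (i + 1) ψ y| ≤ C) (hs : 0 ≤ s) (ht : 0 ≤ t) :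
    |iteratedDeriv i (fun y => ψ (y + s) - ψ y) t| ≤ C * s := by
  have hψi : ContDiff ℝ i ψ := hψ.of_le (by exact_mod_cast le_top)
  have hshift : ContDiff ℝ i fun y => ψ (y + s) := hψi.comp (contDiff_id.add contDiff_const)
  rw [iteratedDeriv_fun_sub hshift.contDiffAt hψi.contDiffAt, iteratedDeriv_comp_add_const]
  have hdiff : Differentiable ℝ (iteratedDeriv i ψ) :=
    hψ.differentiable_iteratedDeriv i (by exact_mod_cast WithTop.coe_lt_top i)
  have hmvt := (convex_Ici (0 : ℝ)).norm_image_sub_le_of_norm_deriv_le (f := iteratedDeriv i ψ)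
    (fun y _ => hdiff y) (fun y hy => by rw [← iteratedDeriv_succ]; exact hC y hy)
    (mem_Ici.mpr ht) (mem_Ici.mpr (add_nonneg ht hs))
  simpa [abs_of_nonneg hs] using hmvt

lemma IsSymbol.of_contDiff {ψ : ι → ℝ → ℝ} (hN : ∀ i, 0 < N i)
    (hψ : ∀ i, ContDiff ℝ (⊤ : ℕ∞) (ψ i))
    (hbound : ∀ l, ∃ C, 0 ≤ C ∧ ∀ i t, 0 ≤ t → |iteratedDeriv l (ψ i) t| ≤ C * B i) :
    IsSymbol N d B fun i k => ψ i (k / N i) := by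
  intro j
  induction j generalizing ψ B with
  | zero =>
    obtain ⟨C, hC, h⟩ := hbound 0
    refine ⟨C, hC, fun i k _ => ?_⟩
    simpa using h i (k / N i) (div_nonneg k.cast_nonneg (hN i).le)
  | succ j ih =>
    have hstep : ∀ i, Δ_[1] (fun k : ℕ => ψ i (k / N i)) =
        fun k : ℕ => (fun t => ψ i (t + 1 / N i) - ψ i t) (k / N i) := by
      intro i
      ext k
      simp only [_root_.fwdDiff, Nat.cast_add, Nat.cast_one, add_div]
    simp only [Function.iterate_succ_apply, hstep]
    have := ih (ψ := fun i t => ψ i (t + 1 / N i) - ψ i t) (B := fun i => B i / N i)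
      (fun i => ((hψ i).comp (contDiff_id.add contDiff_const)).sub (hψ i)) fun l => by
        obtain ⟨C, hC, h⟩ := hbound (l + 1)
        refine ⟨C, hC, fun i t ht => ?_⟩
        refine (abs_iteratedDeriv_comp_add_sub_le (hψ i) (h i)
          (one_div_nonneg.mpr (hN i).le) ht).trans_eq (by ring)
    simpa only [div_div, ← pow_succ'] using this

end Symbols

/-! ### Powers of a Jacobi matrix acting on symbols -/

section JacobiMatrix

open scoped fwdDiff

/-- The operator `T - x`, where `T` is the tridiagonal (Jacobi) matrix with rows
`(c k / 2, b k / 2, 1 / 2)`. It is the action of multiplication by `y - x` on the coefficients of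
an expansion in orthogonal polynomials satisfying `v (k+1) = (2 y - b k) v k - c k v (k-1)`. -/
def jacobiMatrixSub (b c : ℕ → ℝ) (x : ℝ) (F : ℕ → ℝ) (k : ℕ) : ℝ :=
  (F (k + 1) + (b k - 2 * x) * F k + c k * F (k - 1)) / 2

/-- First component of the action of `jacobiMatrixSub` on a pair of symbols `(f, g)`, which stands
for the sequence `f k * v k + g k * (v (k + 1) - x * v k)`. -/
def symbolStepFst (b c : ℕ → ℝ) (x : ℝ) (f g : ℕ → ℝ) (k : ℕ) : ℝ :=
  (x * Δ_[1] (Δ_[1] f) k + b (k + 1) * Δ_[1] f k - (1 - x ^ 2) * (g (k + 2) - g k)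
    - g (k + 2) * Δ_[1] (fun l => x * b l + (c l - 1)) (k + 1)
    - (x * b (k + 1) + (c (k + 1) - 1)) * (g (k + 2) - g k)) / 2

/-- Second component of the action of `jacobiMatrixSub` on a pair of symbols `(f, g)`; see
`symbolStepFst`. -/
def symbolStepSnd (b : ℕ → ℝ) (x : ℝ) (f g : ℕ → ℝ) (k : ℕ) : ℝ :=
  ((f (k + 2) - f k) + x * Δ_[1] (Δ_[1] g) k - Δ_[1] (fun l => b l * g l) (k + 1)) / 2

lemma jacobiMatrixSub_symbol {b c f g v : ℕ → ℝ} {x : ℝ} {k : ℕ}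
    (hv : ∀ l, k ≤ l → v (l + 2) = (2 * x - b (l + 1)) * v (l + 1) - c (l + 1) * v l) :
    jacobiMatrixSub b c x (fun l => f l * v l + g l * (v (l + 1) - x * v l)) (k + 1) =
      symbolStepFst b c x f g k * v (k + 1) +
        symbolStepSnd b x f g k * (v (k + 2) - x * v (k + 1)) := by
  have h0 := hv k le_rfl
  have h1 := hv (k + 1) (by omega)
  simp only [jacobiMatrixSub, symbolStepFst, symbolStepSnd, fwdDiff, Nat.add_sub_cancel]
  rw [show k + 1 + 1 + 1 = k + 3 from rfl, show k + 1 + 1 = k + 2 from rfl] at *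
  rw [h1]
  linear_combination (1 / 2 * (f k - x * g k)) * h0

variable {ι : Type*} {N σ Q x : ι → ℝ} {d : ι → ℕ} {b c : ℕ → ℝ} {f g : ι → ℕ → ℝ}

lemma IsSymbol.sub_shift_two (h : IsSymbol N d Q f) :
    IsSymbol N d (fun i => Q i / N i) fun i k => f i (k + 2) - f i k :=
  ((h.fwdDiff.shift 1).add h.fwdDiff).congr fun i k _ => by simp only [_root_.fwdDiff]; ring

lemma IsSymbol.div_two (h : IsSymbol N d Q f) : IsSymbol N d Q fun i k => f i k / 2 :=
  (h.const_smul (1 / 2)).congr fun i k _ => by ring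

section Step

variable (hN : ∀ i, 1 ≤ N i) (hσN : ∀ i, 1 ≤ σ i * N i) (hQ : ∀ i, 0 ≤ Q i) (hx : ∀ i, |x i| ≤ 1)
  (hb : IsSymbol N d (fun i => 1 / N i ^ 2) fun _ => b)
  (hf : IsSymbol N d Q f) (hg : IsSymbol N d (fun i => Q i / σ i) g)
include hN hσN hQ hx hb hf hg

lemma IsSymbol.symbolStepFst (hσx : ∀ i, 1 - x i ^ 2 ≤ σ i ^ 2)
    (hc : IsSymbol N d (fun i => 1 / N i ^ 2) fun _ k => c k - 1) :
    IsSymbol N d (fun i => Q i * σ i / N i) fun i => symbolStepFst b c (x i) (f i) (g i) := by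
  have hN0 : ∀ i, 0 < N i := fun i => one_pos.trans_le (hN i)
  have hσ : ∀ i, 0 < σ i := fun i => pos_of_mul_pos_left (one_pos.trans_le (hσN i)) (hN0 i).le
  have hζ : IsSymbol N d (fun i => 1 / N i ^ 2) fun i l => x i * b l + (c l - 1) := by
    have := hb.const_mul (A := fun _ => 1) hx
    simp only [one_mul] at this
    exact this.add hc
  have hx2 : ∀ i, |1 - x i ^ 2| ≤ σ i ^ 2 := fun i => by
    rw [abs_of_nonneg (by nlinarith [abs_le.1 (hx i)])]
    exact hσx i
  have hinv : ∀ i, 1 / N i ≤ 1 := fun i => (div_le_one (hN0 i)).2 (hN i)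
  have hσinv : ∀ i, 1 / (σ i * N i) ≤ 1 := fun i =>
    (div_le_one (mul_pos (hσ i) (hN0 i))).2 (hσN i)
  have hmono {B : ι → ℝ} {u : ι → ℕ → ℝ} {r : ι → ℝ} (hu : IsSymbol N d B u)
      (hB : ∀ i, B i = Q i * σ i / N i * r i) (hr : ∀ i, r i ≤ 1) :
      IsSymbol N d (fun i => Q i * σ i / N i) u := hu.mono (fun i => (hN0 i).le) fun i => by
    have := hQ i; have := hσ i; have := hN0 i
    exact (hB i).trans_le (mul_le_of_le_one_right (by positivity) (hr i))
  have hΔΔf := hmono (hf.fwdDiff.fwdDiff.const_mul (A := fun _ => 1) hx)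
    (r := fun i => 1 / (σ i * N i)) (fun i => by have := hσ i; have := hN0 i; field_simp) hσinv
  have hbΔf := hmono ((hb.shift 1).mul hf.fwdDiff) (r := fun i => 1 / (σ i * N i) * (1 / N i))
    (fun i => by have := hσ i; have := hN0 i; field_simp)
    fun i => mul_le_one₀ (hσinv i) (one_div_nonneg.2 (hN0 i).le) (hinv i)
  have hΔg := hmono (hg.sub_shift_two.const_mul hx2) (r := fun _ => 1)
    (fun i => by have := hσ i; have := hN0 i; field_simp) fun _ => le_rfl
  have hsq : ∀ i, (1 / (σ i * N i)) ^ 2 ≤ 1 := fun i =>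
    pow_le_one₀ (one_div_nonneg.2 (mul_pos (hσ i) (hN0 i)).le) (hσinv i)
  have hgΔζ := hmono ((hg.shift 2).mul (hζ.fwdDiff.shift 1)) (r := fun i => (1 / (σ i * N i)) ^ 2)
    (fun i => by have := hσ i; have := hN0 i; field_simp) hsq
  have hζΔg := hmono ((hζ.shift 1).mul hg.sub_shift_two) (r := fun i => (1 / (σ i * N i)) ^ 2)
    (fun i => by have := hσ i; have := hN0 i; field_simp) hsq
  exact ((((hΔΔf.add hbΔf).sub hΔg).sub hgΔζ).sub hζΔg).div_two

lemma IsSymbol.symbolStepSnd :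
    IsSymbol N d (fun i => Q i / N i) fun i => symbolStepSnd b (x i) (f i) (g i) := by
  have hN0 : ∀ i, 0 < N i := fun i => one_pos.trans_le (hN i)
  have hσ : ∀ i, 0 < σ i := fun i => pos_of_mul_pos_left (one_pos.trans_le (hσN i)) (hN0 i).le
  have hinv : ∀ i, 1 / N i ≤ 1 := fun i => (div_le_one (hN0 i)).2 (hN i)
  have hσinv : ∀ i, 1 / (σ i * N i) ≤ 1 := fun i =>
    (div_le_one (mul_pos (hσ i) (hN0 i))).2 (hσN i)
  have hmono {B : ι → ℝ} {u : ι → ℕ → ℝ} {r : ι → ℝ} (hu : IsSymbol N d B u)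
      (hB : ∀ i, B i = Q i / N i * r i) (hr : ∀ i, r i ≤ 1) :
      IsSymbol N d (fun i => Q i / N i) u := hu.mono (fun i => (hN0 i).le) fun i => by
    have := hQ i; have := hN0 i
    exact (hB i).trans_le (mul_le_of_le_one_right (by positivity) (hr i))
  have hΔΔg := hmono (hg.fwdDiff.fwdDiff.const_mul (A := fun _ => 1) hx)
    (r := fun i => 1 / (σ i * N i)) (fun i => by have := hσ i; have := hN0 i; field_simp) hσinv
  have hΔbg := hmono ((hb.mul hg).fwdDiff.shift 1) (r := fun i => 1 / (σ i * N i) * (1 / N i))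
    (fun i => by have := hσ i; have := hN0 i; field_simp)
    fun i => mul_le_one₀ (hσinv i) (one_div_nonneg.2 (hN0 i).le) (hinv i)
  exact ((hf.sub_shift_two.add hΔΔg).sub hΔbg).div_two

end Step

lemma jacobiMatrixSub_shift {F G : ℕ → ℝ} {y : ℝ} {m j : ℕ} (h : ∀ k, m ≤ k → F (k + j) = G k)
    {k : ℕ} (hk : m ≤ k) : jacobiMatrixSub b c y F (k + 1 + j) =
      jacobiMatrixSub (fun l => b (l + j)) (fun l => c (l + j)) y G (k + 1) := by
  have e0 := h k hk
  have e1 := h (k + 1) (by omega)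
  have e2 := h (k + 2) (by omega)
  rw [show k + 1 + j = k + j + 1 by omega] at *
  rw [show k + 2 + j = k + j + 1 + 1 by omega] at e2
  simp only [jacobiMatrixSub, Nat.add_sub_cancel, e0, e1, e2,
    show k + 1 + j = k + j + 1 by omega]

theorem exists_symbol_jacobiMatrixSub_iterate (hN : ∀ i, 1 ≤ N i) (hσN : ∀ i, 1 ≤ σ i * N i)
    (hx : ∀ i, |x i| ≤ 1) (hσx : ∀ i, 1 - x i ^ 2 ≤ σ i ^ 2)
    (hb : IsSymbol N d (fun i => 1 / N i ^ 2) fun _ => b)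
    (hc : IsSymbol N d (fun i => 1 / N i ^ 2) fun _ k => c k - 1) {v : ι → ℕ → ℝ}
    (hv : ∀ i k, v i (k + 2) = (2 * x i - b (k + 1)) * v i (k + 1) - c (k + 1) * v i k)
    (hf : IsSymbol N d (fun _ => 1) f) (j : ℕ) :
    ∃ f' g' : ι → ℕ → ℝ, IsSymbol N d (fun i => (σ i / N i) ^ j) f' ∧
      IsSymbol N d (fun i => (σ i / N i) ^ j / σ i) g' ∧
      ∀ i k, d i ≤ k →
        (jacobiMatrixSub b c (x i))^[j] (fun l => f i l * v i l) (k + j) =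
          f' i k * v i (k + j) + g' i k * (v i (k + j + 1) - x i * v i (k + j)) := by
  have hN0 : ∀ i, 0 < N i := fun i => one_pos.trans_le (hN i)
  have hσ : ∀ i, 0 < σ i := fun i => pos_of_mul_pos_left (one_pos.trans_le (hσN i)) (hN0 i).le
  induction j with
  | zero => exact ⟨f, fun _ _ => 0, by simpa using hf, .zero, by simp⟩
  | succ j ih =>
    obtain ⟨f', g', hf', hg', h⟩ := ih
    have hQ : ∀ i, 0 ≤ (σ i / N i) ^ j := fun i => pow_nonneg (div_nonneg (hσ i).le (hN0 i).le) j
    refine ⟨fun i => symbolStepFst (fun l => b (l + j)) (fun l => c (l + j)) (x i) (f' i) (g' i),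
      fun i => symbolStepSnd (fun l => b (l + j)) (x i) (f' i) (g' i),
      (IsSymbol.symbolStepFst hN hσN hQ hx (hb.shift j) hf' hg' hσx (hc.shift j)).mono
        (fun i => (hN0 i).le) fun i => le_of_eq (by ring),
      (IsSymbol.symbolStepSnd hN hσN hQ hx (hb.shift j) hf' hg').mono
        (fun i => (hN0 i).le) fun i => le_of_eq (by
          have := hσ i; have := hN0 i; rw [pow_succ]; field_simp),
      fun i k hk => ?_⟩
    rw [Function.iterate_succ_apply', show k + (j + 1) = k + 1 + j by omega]
    refine (jacobiMatrixSub_shift (h i) hk).trans ?_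
    have hstep := jacobiMatrixSub_symbol (f := f' i) (g := g' i) (v := fun l => v i (l + j))
      (b := fun l => b (l + j)) (c := fun l => c (l + j)) (x := x i) (k := k) fun l _ => by
        simpa only [show ∀ a : ℕ, l + a + j = l + j + a by omega] using hv i (l + j)
    simp only [show ∀ l, l + j + 1 = l + 1 + j by omega] at hstep ⊢
    exact hstep

end JacobiMatrix

/-! ### The Jacobi measure -/

section Measure

variable {α β : ℝ}

lemma w_pos {x : ℝ} (hx : x ∈ Ioo (-1 : ℝ) 1) : 0 < w α β x :=
  mul_pos (Real.rpow_pos_of_pos (by linarith [hx.2]) _)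
    (Real.rpow_pos_of_pos (by linarith [hx.1]) _)

lemma measurable_w : Measurable (w α β) := by
  unfold w
  fun_prop

lemma w_neg (x : ℝ) : w β α (-x) = w α β x := by
  simp only [w, sub_neg_eq_add, ← sub_eq_add_neg, mul_comm]

lemma intervalIntegrable_w_zero_one (hα : -1 < α) : IntervalIntegrable (w α β) volume 0 1 := by
  have h : IntervalIntegrable (fun x : ℝ => (1 - x) ^ α) volume 0 1 := by
    simpa using (intervalIntegral.intervalIntegrable_rpow' (a := 1) (b := 0) hα).comp_sub_left 1
  refine h.mul_continuousOn (ContinuousOn.rpow_const (by fun_prop) fun x hx => Or.inl ?_)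
  rw [uIcc_of_le zero_le_one] at hx
  linarith [hx.1]

lemma integrableOn_w (hα : -1 < α) (hβ : -1 < β) : IntegrableOn (w α β) (Ioo (-1 : ℝ) 1) := by
  rw [← intervalIntegrable_iff_integrableOn_Ioo_of_le (by norm_num)]
  refine IntervalIntegrable.trans (b := 0) ?_ (intervalIntegrable_w_zero_one hα)
  have h := (intervalIntegrable_w_zero_one (β := α) hβ).comp_sub_left 0
  simp only [zero_sub, sub_zero] at h
  exact h.symm.congr fun x _ => w_neg x

variable (α β) in
/-- The measure `w_{α,β}(x) dx` on `(-1, 1)`, as a measure on `ℝ`. -/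
def jacobiMeasure : Measure ℝ :=
  (volume.restrict (Ioo (-1 : ℝ) 1)).withDensity fun x => ENNReal.ofReal (w α β x)

lemma jacobiMeasure_absolutelyContinuous :
    jacobiMeasure α β ≪ volume.restrict (Ioo (-1 : ℝ) 1) :=
  withDensity_absolutelyContinuous _ _

lemma ae_jacobiMeasure_mem_Ioo : ∀ᵐ x ∂jacobiMeasure α β, x ∈ Ioo (-1 : ℝ) 1 :=
  jacobiMeasure_absolutelyContinuous.ae_le (ae_restrict_mem measurableSet_Ioo)

lemma integral_jacobiMeasure (f : ℝ → ℝ) :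
    ∫ x, f x ∂jacobiMeasure α β = ∫ x in Ioo (-1 : ℝ) 1, f x * w α β x := by
  rw [jacobiMeasure, integral_withDensity_eq_integral_toReal_smul measurable_w.ennreal_ofReal
    (Filter.Eventually.of_forall fun x => ENNReal.ofReal_lt_top)]
  refine setIntegral_congr_fun measurableSet_Ioo fun x hx => ?_
  simp only [smul_eq_mul, ENNReal.toReal_ofReal (w_pos hx).le, mul_comm]

lemma integrable_jacobiMeasure_iff {f : ℝ → ℝ} :
    Integrable f (jacobiMeasure α β) ↔
      IntegrableOn (fun x => f x * w α β x) (Ioo (-1 : ℝ) 1) := by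
  rw [jacobiMeasure, integrable_withDensity_iff measurable_w.ennreal_ofReal
    (Filter.Eventually.of_forall fun x => ENNReal.ofReal_lt_top)]
  refine integrableOn_congr_fun (fun x hx => ?_) measurableSet_Ioo
  simp only [ENNReal.toReal_ofReal (w_pos hx).le]

lemma isFiniteMeasure_jacobiMeasure (hα : -1 < α) (hβ : -1 < β) :
    IsFiniteMeasure (jacobiMeasure α β) :=
  isFiniteMeasure_withDensity_ofReal (integrableOn_w hα hβ).2

lemma jacobiMeasure_ne_zero : jacobiMeasure α β ≠ 0 := by
  intro h
  rw [jacobiMeasure, withDensity_eq_zero_iff measurable_w.ennreal_ofReal.aemeasurable] at h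
  have hfalse : ∀ᵐ _ ∂volume.restrict (Ioo (-1 : ℝ) 1), False := by
    filter_upwards [h, ae_restrict_mem measurableSet_Ioo] with _ hx hmem
    exact (ENNReal.ofReal_pos.2 (w_pos hmem)).ne' hx
  exact absurd (ae_iff.1 hfalse) (by norm_num)

variable {f g : ℝ → ℝ}

lemma integrable_mul_continuous (hf : Integrable f (jacobiMeasure α β)) (hg : Continuous g) :
    Integrable (fun x => f x * g x) (jacobiMeasure α β) := by
  obtain ⟨C, hC⟩ := isCompact_Icc.exists_bound_of_continuousOn (s := Icc (-1 : ℝ) 1) hg.continuousOn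
  exact hf.mul_bdd (c := C) hg.aestronglyMeasurable
    (ae_jacobiMeasure_mem_Ioo.mono fun x hx => hC x (Ioo_subset_Icc_self hx))

lemma integrable_of_continuous (hα : -1 < α) (hβ : -1 < β) (hg : Continuous g) :
    Integrable g (jacobiMeasure α β) := by
  have := isFiniteMeasure_jacobiMeasure hα hβ
  simpa only [one_mul] using integrable_mul_continuous (integrable_const (1 : ℝ)) hg

lemma integral_sq_pos (hα : -1 < α) (hβ : -1 < β) {p : Polynomial ℝ} (hp : p ≠ 0) :
    0 < ∫ x, p.eval x ^ 2 ∂jacobiMeasure α β := by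
  rw [integral_pos_iff_support_of_nonneg (fun x => sq_nonneg _)
    (integrable_of_continuous hα hβ (p.continuous.pow 2))]
  have hroots : jacobiMeasure α β (p.roots.toFinset : Set ℝ) = 0 :=
    jacobiMeasure_absolutelyContinuous (p.roots.toFinset.finite_toSet.measure_zero _)
  have hsupp : Function.support (fun x => p.eval x ^ 2) = (p.roots.toFinset : Set ℝ)ᶜ := by
    ext x
    simp [hp]
  rw [hsupp, measure_of_measure_compl_eq_zero (by rwa [compl_compl])]
  exact Measure.measure_univ_pos.2 jacobiMeasure_ne_zero

end Measure

/-! ### Orthogonal polynomials for a positive linear functional -/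

section OrthogonalPolynomials

open Polynomial

variable {I : ℝ[X] →ₗ[ℝ] ℝ} {P : Polynomial.Sequence ℝ}

/-- The polynomials `P k` are orthogonal for the functional `I`, that is, for the bilinear form
`(p, q) ↦ I (p * q)`. -/
def IsOrthogonalSequence (I : ℝ[X] →ₗ[ℝ] ℝ) (P : Polynomial.Sequence ℝ) : Prop :=
  ∀ (k : ℕ) (q : ℝ[X]), q.degree < k → I (P k * q) = 0

namespace IsOrthogonalSequence

lemma eq_zero_of_ne (hP : IsOrthogonalSequence I P) {j k : ℕ} (hjk : j ≠ k) :
    I (P k * P j) = 0 := by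
  rcases hjk.lt_or_gt with h | h
  · exact hP k _ (by simpa using h)
  · rw [mul_comm]
    exact hP j _ (by simpa using h)

lemma eq_sum (hP : IsOrthogonalSequence I P) (hI : ∀ p ≠ 0, 0 < I (p ^ 2)) {n : ℕ} {q : ℝ[X]}
    (hq : q.degree < n) :
    q = ∑ j ∈ Finset.range n, (I (P j * q) / I (P j ^ 2)) • P j := by
  have hspan : q ∈ Submodule.span ℝ (P '' Set.Iio n) := by
    rw [P.span_degreeLT fun i _ => (leadingCoeff_ne_zero.2 (P.ne_zero i)).isUnit]
    exact mem_degreeLT.2 hq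
  clear hq
  induction hspan using Submodule.span_induction with
  | mem x hx =>
    obtain ⟨i, hi, rfl⟩ := hx
    rw [Finset.sum_eq_single_of_mem i (Finset.mem_range.2 hi) fun j _ hj => by
      rw [hP.eq_zero_of_ne hj.symm, zero_div, zero_smul], ← sq, div_self (hI _ (P.ne_zero i)).ne',
      one_smul]
  | zero => simp
  | add x y _ _ hx hy =>
    conv_lhs => rw [hx, hy]
    simp only [mul_add, map_add, add_div, add_smul, Finset.sum_add_distrib]
  | smul a x _ hx =>
    conv_lhs => rw [hx]
    simp only [mul_smul_comm, map_smul, smul_eq_mul, mul_div_assoc, Finset.smul_sum, mul_smul]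

lemma eq_of_orthogonal (hP : IsOrthogonalSequence I P) (hI : ∀ p ≠ 0, 0 < I (p ^ 2)) {k : ℕ}
    {p : ℝ[X]} (hlead : (p - P k).degree < k) (hp : ∀ q : ℝ[X], q.degree < k → I (p * q) = 0) :
    p = P k := by
  by_contra h
  have hpos := hI _ (sub_ne_zero.2 h)
  rw [sq, sub_mul, map_sub, hp _ hlead, hP k _ hlead, sub_zero] at hpos
  exact lt_irrefl _ hpos

variable (I P) in
/-- The diagonal coefficient in the three-term recurrence for multiplication by `L`. -/
def recurrenceDiag (L : ℝ[X]) (k : ℕ) : ℝ := I (L * P k ^ 2) / I (P k ^ 2)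

variable (I P) in
/-- The coefficient of `P (k - 1)` in the three-term recurrence, set to `0` at `k = 0`. -/
def recurrenceOffDiag : ℕ → ℝ
  | 0 => 0
  | k + 1 => I (P (k + 1) ^ 2) / I (P k ^ 2)

lemma mul_eq_succ (hP : IsOrthogonalSequence I P) (hI : ∀ p ≠ 0, 0 < I (p ^ 2)) {L : ℝ[X]}
    (hL : L.degree = 1) (hlead : ∀ k : ℕ, (L * P k - P (k + 1)).degree < (k + 1 : ℕ)) (k : ℕ) :
    L * P (k + 1) = P (k + 2) + recurrenceDiag I P L (k + 1) • P (k + 1) +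
      recurrenceOffDiag I P (k + 1) • P k := by
  have hdeg (j : ℕ) : (L * P j).degree = (j + 1 : ℕ) := by
    rw [degree_mul, hL, P.degree_eq, add_comm]
    rfl
  have hlow (j : ℕ) (hj : j < k) : I (P j * (L * P (k + 1) - P (k + 2))) = 0 := by
    rw [mul_sub, map_sub, hP.eq_zero_of_ne (show k + 2 ≠ j by omega), mul_left_comm, ← mul_assoc,
      mul_comm, hP _ _ (by rw [hdeg]; exact_mod_cast Nat.succ_lt_succ hj), sub_zero]
  have hmid : I (P k * (L * P (k + 1) - P (k + 2))) = I (P (k + 1) ^ 2) := by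
    have h := hP (k + 1) _ (hlead k)
    have h' := hP.eq_zero_of_ne (show k ≠ k + 2 by omega)
    rw [mul_sub, map_sub, ← sq, sub_eq_zero] at h
    rw [mul_sub, map_sub, mul_comm (P k) (P (k + 2)), h', sub_zero, ← h]
    congr 1
    ring
  have htop : I (P (k + 1) * (L * P (k + 1) - P (k + 2))) = I (L * P (k + 1) ^ 2) := by
    rw [mul_sub, map_sub, mul_comm (P (k + 1)) (P (k + 2)),
      hP.eq_zero_of_ne (show k + 1 ≠ k + 2 by omega), sub_zero]
    congr 1
    ring
  have h := hP.eq_sum hI (hlead (k + 1))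
  rw [Finset.sum_range_succ, Finset.sum_range_succ, hmid, htop,
    Finset.sum_eq_zero fun j hj => by rw [hlow j (Finset.mem_range.1 hj), zero_div, zero_smul]] at h
  rw [eq_add_of_sub_eq h]
  simp only [recurrenceDiag, recurrenceOffDiag]
  abel

lemma mul_eq (hP : IsOrthogonalSequence I P) (hI : ∀ p ≠ 0, 0 < I (p ^ 2)) {L : ℝ[X]}
    (hL : L.degree = 1) (hlead : ∀ k : ℕ, (L * P k - P (k + 1)).degree < (k + 1 : ℕ)) (k : ℕ) :
    L * P k = P (k + 1) + recurrenceDiag I P L k • P k + recurrenceOffDiag I P k • P (k - 1) := by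
  cases k with
  | zero =>
    have h := hP.eq_sum hI (hlead 0)
    rw [Finset.sum_range_one, mul_sub, map_sub, zero_add, mul_comm (P 0) (P 1),
      hP.eq_zero_of_ne zero_ne_one, sub_zero, mul_left_comm, ← sq] at h
    rw [eq_add_of_sub_eq h, add_comm, recurrenceOffDiag, zero_smul, add_zero, recurrenceDiag]
  | succ k => exact hP.mul_eq_succ hI hL hlead k

end IsOrthogonalSequence

end OrthogonalPolynomials

/-! ### Jacobi polynomials in the variable `z = (1 - x) / 2` -/

section JacobiPolynomials

open Polynomial
open scoped Nat

variable {α β : ℝ}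

lemma poch_succ (a : ℝ) (k : ℕ) : poch a (k + 1) = poch a k * (a + k) :=
  Finset.prod_range_succ _ _

lemma poch_pos {a : ℝ} (ha : 0 < a) (k : ℕ) : 0 < poch a k :=
  Finset.prod_pos fun _ _ => by positivity

lemma poch_add_sub_one_pos (hα : -1 < α) (hβ : -1 < β) (k : ℕ) :
    0 < poch (k + α + β + 1) k := by
  rcases k with _ | k
  · simp [poch]
  · exact poch_pos (by push_cast; linarith [k.cast_nonneg (α := ℝ)]) _

variable (α β) in
/-- The coefficients of the hypergeometric series `₂F₁(-k, k + α + β + 1; α + 1; z)`. -/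
def jacobiSeriesCoeff (k i : ℕ) : ℝ :=
  poch (-(k : ℝ)) i * poch ((k : ℝ) + α + β + 1) i / (poch (α + 1) i * i !)

lemma jacobiSeriesCoeff_zero (k : ℕ) : jacobiSeriesCoeff α β k 0 = 1 := by
  simp [jacobiSeriesCoeff, poch]

lemma jacobiSeriesCoeff_succ (hα : -1 < α) (k i : ℕ) :
    ((i + 1) * (α + 1 + i)) * jacobiSeriesCoeff α β k (i + 1) =
      (i * (i + α + β + 1) - k * (k + α + β + 1)) * jacobiSeriesCoeff α β k i := by
  have h1 : poch (α + 1) i ≠ 0 := (poch_pos (by linarith) i).ne'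
  have h2 : α + 1 + (i : ℝ) ≠ 0 := by linarith [i.cast_nonneg (α := ℝ)]
  simp only [jacobiSeriesCoeff, poch_succ, Nat.factorial_succ, Nat.cast_mul, Nat.cast_succ]
  field_simp
  ring

lemma jacobiSeriesCoeff_eq_zero {k i : ℕ} (h : k < i) : jacobiSeriesCoeff α β k i = 0 := by
  have : poch (-(k : ℝ)) i = 0 := Finset.prod_eq_zero (Finset.mem_range.2 h) (neg_add_cancel _)
  rw [jacobiSeriesCoeff, this, zero_mul, zero_div]

variable (α β) in
/-- The hypergeometric polynomial `₂F₁(-k, k + α + β + 1; α + 1; X)`, which is the Jacobi polynomial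
of degree `k` in the variable `z = (1 - x) / 2`, normalized to be `1` at `z = 0`. -/
def jacobiSeries (k : ℕ) : ℝ[X] :=
  ∑ i ∈ Finset.range (k + 1), monomial i (jacobiSeriesCoeff α β k i)

lemma coeff_jacobiSeries (k i : ℕ) : (jacobiSeries α β k).coeff i = jacobiSeriesCoeff α β k i := by
  simp only [jacobiSeries, finsetSum_coeff, coeff_monomial, Finset.sum_ite_eq', Finset.mem_range]
  exact ite_eq_left_iff.2 fun h => (jacobiSeriesCoeff_eq_zero (by omega)).symm

variable (α β) in
/-- The Jacobi differential operator in the variable `z = (1 - x) / 2`. -/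
def jacobiOperator (p : ℝ[X]) : ℝ[X] :=
  X * (1 - X) * derivative (derivative p) + (C (α + 1) - C (α + β + 2) * X) * derivative p

lemma coeff_jacobiOperator (p : ℝ[X]) (i : ℕ) :
    (jacobiOperator α β p).coeff i =
      (i + 1) * (α + 1 + i) * p.coeff (i + 1) - i * (i + α + β + 1) * p.coeff i := by
  have h : jacobiOperator α β p = X * derivative (derivative p) -
      X ^ 2 * derivative (derivative p) + (α + 1) • derivative p
        - (α + β + 2) • (X * derivative p) := by
    simp only [jacobiOperator, smul_eq_C_mul]
    ring
  simp only [h, coeff_sub, coeff_add, coeff_smul, smul_eq_mul, coeff_X_pow_mul', coeff_derivative]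
  rcases i with _ | _ | i
  · simp
  · simp [coeff_X_mul, coeff_derivative]
    ring
  · simp [coeff_X_mul, coeff_derivative]
    ring

lemma jacobiOperator_jacobiSeries (hα : -1 < α) (k : ℕ) :
    jacobiOperator α β (jacobiSeries α β k) =
      (-(k * (k + α + β + 1)) : ℝ) • jacobiSeries α β k := by
  ext i
  rw [coeff_jacobiOperator, coeff_smul, coeff_jacobiSeries, coeff_jacobiSeries,
    jacobiSeriesCoeff_succ hα, smul_eq_mul]
  ring

lemma jacobiOperator_X_pow (i : ℕ) :
    jacobiOperator α β (X ^ i) =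
      (i * (α + i) : ℝ) • X ^ (i - 1) - (i * (i + α + β + 1) : ℝ) • X ^ i := by
  ext l
  rw [coeff_jacobiOperator, coeff_sub, coeff_smul, coeff_smul, smul_eq_mul, smul_eq_mul]
  rcases i with _ | i
  · rcases l with _ | l <;> simp [coeff_one]
  · simp only [coeff_X_pow, Nat.add_sub_cancel, Nat.add_right_cancel_iff]
    split_ifs with h1 h2 <;> subst_vars <;> first | omega | (push_cast; ring)

/-- Integration against the Jacobi weight of a polynomial in `z = (1 - x) / 2`. -/
def jacobiIntegral (hα : -1 < α) (hβ : -1 < β) : ℝ[X] →ₗ[ℝ] ℝ where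
  toFun p := ∫ x, p.eval ((1 - x) / 2) ∂jacobiMeasure α β
  map_add' p q := by
    simp only [eval_add]
    exact integral_add (integrable_of_continuous hα hβ (by fun_prop))
      (integrable_of_continuous hα hβ (by fun_prop))
  map_smul' a p := by
    simp only [eval_smul, smul_eq_mul, integral_const_mul, RingHom.id_apply]

lemma jacobiIntegral_apply (hα : -1 < α) (hβ : -1 < β) (p : ℝ[X]) :
    jacobiIntegral hα hβ p = ∫ x, p.eval ((1 - x) / 2) ∂jacobiMeasure α β :=
  rfl

lemma jacobiIntegral_sq_pos (hα : -1 < α) (hβ : -1 < β) {p : ℝ[X]} (hp : p ≠ 0) :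
    0 < jacobiIntegral hα hβ (p ^ 2) := by
  have hcomp : p.comp (C (1 / 2) * (1 - X)) ≠ 0 := by
    rw [Ne, comp_eq_zero_iff, not_or]
    refine ⟨hp, fun h => ?_⟩
    simpa [coeff_one, coeff_X, coeff_C] using congrArg (fun q : ℝ[X] => q.coeff 1) h.2
  simpa [jacobiIntegral_apply, mul_comm, div_eq_mul_inv] using integral_sq_pos hα hβ hcomp

/-- The integrand is, up to a constant factor, the derivative of
`(1 - x) ^ (α + 1) * (1 + x) ^ (β + 1) * p ((1 - x) / 2)`. -/
lemma jacobiIntegral_divergence (hα : -1 < α) (hβ : -1 < β) (p : ℝ[X]) :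
    jacobiIntegral hα hβ
      (X * (1 - X) * derivative p + (C (α + 1) - C (α + β + 2) * X) * p) = 0 := by
  set F : ℝ → ℝ := fun x => (1 - x) ^ (α + 1) * (1 + x) ^ (β + 1) * p.eval ((1 - x) / 2)
  set q : ℝ[X] := X * (1 - X) * derivative p + (C (α + 1) - C (α + β + 2) * X) * p
  have hF : ContinuousOn F (Icc (-1) 1) := by
    refine Continuous.continuousOn (Continuous.mul (Continuous.mul ?_ ?_) (by fun_prop))
    · exact Continuous.rpow_const (by fun_prop) fun x => Or.inr (by linarith)
    · exact Continuous.rpow_const (by fun_prop) fun x => Or.inr (by linarith)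
  have hF' : ∀ x ∈ Ioo (-1 : ℝ) 1,
      HasDerivAt F (-2 * (q.eval ((1 - x) / 2) * w α β x)) x := fun x hx => by
    have h1 : 0 < 1 - x := by linarith [hx.2]
    have h2 : 0 < 1 + x := by linarith [hx.1]
    have d1 := ((hasDerivAt_id x).const_sub 1).rpow_const (p := α + 1) (Or.inl h1.ne')
    have d2 := ((hasDerivAt_id x).const_add 1).rpow_const (p := β + 1) (Or.inl h2.ne')
    have d3 := (p.hasDerivAt ((1 - x) / 2)).comp x (((hasDerivAt_id x).const_sub 1).div_const 2)
    refine ((d1.mul d2).mul d3).congr_deriv ?_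
    simp only [w, q, id, Pi.mul_apply, Function.comp, add_sub_cancel_right, eval_add, eval_mul,
      eval_sub, eval_X, eval_C, eval_one, Real.rpow_add h1, Real.rpow_add h2, Real.rpow_one]
    ring
  have hintegrable : IntervalIntegrable (fun x => -2 * (q.eval ((1 - x) / 2) * w α β x))
      volume (-1) 1 := by
    rw [intervalIntegrable_iff_integrableOn_Ioo_of_le (by norm_num)]
    exact (integrable_jacobiMeasure_iff.1 (integrable_of_continuous hα hβ
      (g := fun x => q.eval ((1 - x) / 2)) (by fun_prop))).const_mul _
  have h := intervalIntegral.integral_eq_sub_of_hasDerivAt_of_le (by norm_num) hF hF' hintegrable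
  have hF1 : F 1 = 0 := by simp [F, Real.zero_rpow (show α + 1 ≠ 0 by linarith)]
  have hF2 : F (-1) = 0 := by simp [F, Real.zero_rpow (show β + 1 ≠ 0 by linarith)]
  rw [hF1, hF2, intervalIntegral.integral_const_mul, intervalIntegral.integral_of_le (by norm_num),
    integral_Ioc_eq_integral_Ioo, ← integral_jacobiMeasure] at h
  rw [jacobiIntegral_apply]
  linarith

lemma jacobiIntegral_jacobiOperator_mul (hα : -1 < α) (hβ : -1 < β) (p q : ℝ[X]) :
    jacobiIntegral hα hβ (jacobiOperator α β p * q) =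
      jacobiIntegral hα hβ (p * jacobiOperator α β q) := by
  rw [← sub_eq_zero, ← map_sub,
    ← jacobiIntegral_divergence hα hβ (derivative p * q - p * derivative q)]
  congr 1
  simp only [jacobiOperator, derivative_sub, derivative_mul]
  ring

lemma jacobiIntegral_jacobiSeries_mul_X_pow (hα : -1 < α) (hβ : -1 < β) {k i : ℕ} (h : i < k) :
    jacobiIntegral hα hβ (jacobiSeries α β k * X ^ i) = 0 := by
  induction i using Nat.strong_induction_on with | _ i ih
  have hop := jacobiIntegral_jacobiOperator_mul hα hβ (jacobiSeries α β k) (X ^ i)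
  simp only [jacobiOperator_jacobiSeries hα, jacobiOperator_X_pow, smul_mul_assoc, mul_sub,
    mul_smul_comm, map_sub, map_smul, smul_eq_mul] at hop
  have hprev : (i * (α + i) : ℝ) * jacobiIntegral hα hβ (jacobiSeries α β k * X ^ (i - 1)) = 0 := by
    rcases i with _ | i
    · simp
    · rw [Nat.add_sub_cancel, ih i i.lt_succ_self (by omega), mul_zero]
  have hik : (i : ℝ) + 1 ≤ k := by exact_mod_cast h
  have hne : ((k - i) * (k + i + α + β + 1) : ℝ) ≠ 0 :=
    mul_ne_zero (by linarith) (by linarith [i.cast_nonneg (α := ℝ)])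
  refine (mul_eq_zero.1 ?_).resolve_left hne
  linear_combination -hop - hprev

lemma jacobiIntegral_jacobiSeries_mul (hα : -1 < α) (hβ : -1 < β) {k : ℕ} {q : ℝ[X]}
    (hq : q.degree < k) : jacobiIntegral hα hβ (jacobiSeries α β k * q) = 0 := by
  rw [q.as_sum_support_C_mul_X_pow, Finset.mul_sum, map_sum]
  refine Finset.sum_eq_zero fun i hi => ?_
  have hik : i < k := by exact_mod_cast (le_degree_of_mem_supp i hi).trans_lt hq
  rw [← smul_eq_C_mul, mul_smul_comm, map_smul,
    jacobiIntegral_jacobiSeries_mul_X_pow hα hβ hik, smul_zero]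

variable (α β) in
/-- The value `4 ^ k (α + 1)_k / (k + α + β + 1)_k` at `x = 1` of the `k`-th Jacobi polynomial with
leading coefficient `2 ^ k`. -/
def jacobiScale (k : ℕ) : ℝ := 4 ^ k * poch (α + 1) k / poch (k + α + β + 1) k

lemma jacobiScale_pos (hα : -1 < α) (hβ : -1 < β) (k : ℕ) : 0 < jacobiScale α β k :=
  div_pos (mul_pos (by positivity) (poch_pos (by linarith) k)) (poch_add_sub_one_pos hα hβ k)

lemma poch_neg_self (k : ℕ) : poch (-(k : ℝ)) k = (-1) ^ k * k ! := by
  rw [poch, ← Finset.prod_range_reflect, ← Finset.prod_range_add_one_eq_factorial, Nat.cast_prod,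
    Finset.pow_eq_prod_const, ← Finset.prod_mul_distrib]
  refine Finset.prod_congr rfl fun i hi => ?_
  rw [Nat.sub_sub, Nat.cast_sub (by have := Finset.mem_range.1 hi; omega)]
  push_cast
  ring

lemma jacobiScale_mul_coeff_self (hα : -1 < α) (hβ : -1 < β) (k : ℕ) :
    jacobiScale α β k * jacobiSeriesCoeff α β k k = (-4) ^ k := by
  have h1 := (poch_pos (show 0 < α + 1 by linarith) k).ne'
  have h2 := (poch_add_sub_one_pos hα hβ k).ne'
  have h3 : (k ! : ℝ) ≠ 0 := by exact_mod_cast k.factorial_ne_zero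
  rw [jacobiScale, jacobiSeriesCoeff, poch_neg_self, show (-4 : ℝ) = 4 * -1 by norm_num, mul_pow]
  field_simp

/-- The Jacobi polynomials with leading coefficient `2 ^ k` in `x`, that is `(-4) ^ k` in the
variable `z = (1 - x) / 2` used here. -/
def jacobiSequence (hα : -1 < α) (hβ : -1 < β) : Polynomial.Sequence ℝ where
  elems' k := jacobiScale α β k • jacobiSeries α β k
  degree_eq' k := by
    refine degree_eq_of_le_of_coeff_ne_zero ?_ ?_
    · rw [degree_le_iff_coeff_zero]
      intro i hi
      rw [coeff_smul, coeff_jacobiSeries, jacobiSeriesCoeff_eq_zero (by exact_mod_cast hi),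
        smul_zero]
    · rw [coeff_smul, coeff_jacobiSeries, smul_eq_mul, jacobiScale_mul_coeff_self hα hβ]
      exact pow_ne_zero _ (by norm_num)

lemma jacobiSequence_apply (hα : -1 < α) (hβ : -1 < β) (k : ℕ) :
    jacobiSequence hα hβ k = jacobiScale α β k • jacobiSeries α β k :=
  rfl

lemma coeff_jacobiSequence (hα : -1 < α) (hβ : -1 < β) (k i : ℕ) :
    (jacobiSequence hα hβ k).coeff i = jacobiScale α β k * jacobiSeriesCoeff α β k i := by
  rw [jacobiSequence_apply, coeff_smul, coeff_jacobiSeries, smul_eq_mul]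

lemma isOrthogonalSequence_jacobiSequence (hα : -1 < α) (hβ : -1 < β) :
    IsOrthogonalSequence (jacobiIntegral hα hβ) (jacobiSequence hα hβ) := fun k q hq => by
  rw [jacobiSequence_apply, smul_mul_assoc, map_smul, jacobiIntegral_jacobiSeries_mul hα hβ hq,
    smul_zero]

end JacobiPolynomials

/-! ### The scaled Jacobi polynomials and their recurrence -/

section ScaledJacobi

open Polynomial
open scoped Nat

variable {α β : ℝ}

variable (α β) in
/-- The Jacobi polynomial with leading coefficient `2 ^ k`, for which the three-term recurrence
reads `v (k + 1) = (2 * x - b k) * v k - c k * v (k - 1)` with `b k → 0` and `c k → 1`. -/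
def scaledJacobi (k : ℕ) (x : ℝ) : ℝ :=
  jacobiScale α β k * (jacobiSeries α β k).eval ((1 - x) / 2)

variable (α β) in
/-- The squared norm of `scaledJacobi α β k` in `L²` of the Jacobi weight. -/
def scaledJacobiNormSq (k : ℕ) : ℝ := ∫ x, scaledJacobi α β k x ^ 2 ∂jacobiMeasure α β

variable (α β) in
/-- The coefficient `b k` in `v (k + 1) = (2 * x - b k) * v k - c k * v (k - 1)`. -/
def jacobiDiag (k : ℕ) : ℝ :=
  (∫ x, 2 * x * scaledJacobi α β k x ^ 2 ∂jacobiMeasure α β) / scaledJacobiNormSq α β k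

variable (α β) in
/-- The coefficient `c k` in `v (k + 1) = (2 * x - b k) * v k - c k * v (k - 1)`, set to `0` at
`k = 0`. -/
def jacobiOffDiag : ℕ → ℝ
  | 0 => 0
  | k + 1 => scaledJacobiNormSq α β (k + 1) / scaledJacobiNormSq α β k

@[fun_prop]
lemma continuous_scaledJacobi (k : ℕ) : Continuous (scaledJacobi α β k) := by
  unfold scaledJacobi
  fun_prop

lemma eval_jacobiSequence (hα : -1 < α) (hβ : -1 < β) (k : ℕ) (x : ℝ) :
    (jacobiSequence hα hβ k).eval ((1 - x) / 2) = scaledJacobi α β k x := by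
  rw [jacobiSequence_apply, eval_smul, smul_eq_mul, scaledJacobi]

lemma scaledJacobi_eq_J (k : ℕ) (x : ℝ) :
    scaledJacobi α β k x = 2 ^ k * k ! * J α β k x := by
  have h : (k ! : ℝ) ≠ 0 := by exact_mod_cast k.factorial_ne_zero
  simp only [scaledJacobi, jacobiScale, J, JP, jacobiSeries, eval_finsetSum, eval_monomial,
    jacobiSeriesCoeff]
  rw [show (4 : ℝ) = 2 * 2 by norm_num, mul_pow]
  field_simp

lemma scaledJacobi_one (k : ℕ) : scaledJacobi α β k 1 = jacobiScale α β k := by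
  have h : (jacobiSeries α β k).eval 0 = 1 := by
    rw [← coeff_zero_eq_eval_zero, coeff_jacobiSeries, jacobiSeriesCoeff_zero]
  rw [scaledJacobi, sub_self, zero_div, h, mul_one]

lemma jacobiIntegral_jacobiSequence_mul (hα : -1 < α) (hβ : -1 < β) (k : ℕ) (p : ℝ[X]) :
    jacobiIntegral hα hβ (jacobiSequence hα hβ k * p) =
      ∫ x, scaledJacobi α β k x * p.eval ((1 - x) / 2) ∂jacobiMeasure α β := by
  simp only [jacobiIntegral_apply, eval_mul, eval_jacobiSequence]

lemma jacobiIntegral_jacobiSequence_sq (hα : -1 < α) (hβ : -1 < β) (k : ℕ) :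
    jacobiIntegral hα hβ (jacobiSequence hα hβ k ^ 2) = scaledJacobiNormSq α β k := by
  rw [sq, jacobiIntegral_jacobiSequence_mul, scaledJacobiNormSq]
  simp only [eval_jacobiSequence, sq]

lemma scaledJacobiNormSq_pos (hα : -1 < α) (hβ : -1 < β) (k : ℕ) :
    0 < scaledJacobiNormSq α β k := by
  rw [← jacobiIntegral_jacobiSequence_sq hα hβ]
  exact jacobiIntegral_sq_pos hα hβ ((jacobiSequence hα hβ).ne_zero k)

lemma integral_scaledJacobi_mul_eq_zero (hα : -1 < α) (hβ : -1 < β) {j k : ℕ} (h : j ≠ k) :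
    ∫ x, scaledJacobi α β k x * scaledJacobi α β j x ∂jacobiMeasure α β = 0 := by
  have := (isOrthogonalSequence_jacobiSequence hα hβ).eq_zero_of_ne h
  simpa only [jacobiIntegral_jacobiSequence_mul, eval_jacobiSequence] using this

lemma scaledJacobiNormSq_succ (hα : -1 < α) (hβ : -1 < β) (k : ℕ) :
    scaledJacobiNormSq α β (k + 1) = jacobiOffDiag α β (k + 1) * scaledJacobiNormSq α β k :=
  (div_mul_cancel₀ _ (scaledJacobiNormSq_pos hα hβ k).ne').symm

lemma coeff_jacobiSequence_self (hα : -1 < α) (hβ : -1 < β) (k : ℕ) :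
    (jacobiSequence hα hβ k).coeff k = (-4) ^ k := by
  rw [coeff_jacobiSequence, jacobiScale_mul_coeff_self hα hβ]

lemma degree_two_sub_four_mul_X : (C (2 : ℝ) - C 4 * X).degree = 1 := by
  rw [sub_eq_neg_add, ← neg_mul, ← C_neg]
  exact degree_linear (by norm_num)

lemma degree_mul_jacobiSequence_sub_lt (hα : -1 < α) (hβ : -1 < β) (k : ℕ) :
    ((C 2 - C 4 * X) * jacobiSequence hα hβ k - jacobiSequence hα hβ (k + 1)).degree <
      ((k + 1 : ℕ) : WithBot ℕ) := by
  have hdeg : ((C 2 - C 4 * X) * jacobiSequence hα hβ k).degree = ((k + 1 : ℕ) : WithBot ℕ) := by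
    rw [degree_mul, degree_two_sub_four_mul_X, (jacobiSequence hα hβ).degree_eq, add_comm]
    rfl
  rw [← hdeg]
  refine degree_sub_lt_left (by rw [hdeg, (jacobiSequence hα hβ).degree_eq])
    (by rw [← degree_ne_bot, hdeg]; exact WithBot.natCast_ne_bot _) ?_
  rw [leadingCoeff_mul, leadingCoeff, leadingCoeff, leadingCoeff,
    natDegree_eq_of_degree_eq_some degree_two_sub_four_mul_X, (jacobiSequence hα hβ).natDegree_eq,
    (jacobiSequence hα hβ).natDegree_eq, coeff_jacobiSequence_self, coeff_jacobiSequence_self]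
  have hlin : (C (2 : ℝ) - C 4 * X).coeff 1 = -4 := by simp [coeff_C]
  exact (congrArg (· * (-4 : ℝ) ^ k) hlin).trans (pow_succ' _ _).symm

lemma jacobiSequence_recurrence (hα : -1 < α) (hβ : -1 < β) (k : ℕ) :
    (C 2 - C 4 * X) * jacobiSequence hα hβ k =
      jacobiSequence hα hβ (k + 1) + jacobiDiag α β k • jacobiSequence hα hβ k +
        jacobiOffDiag α β k • jacobiSequence hα hβ (k - 1) := by
  have hI : ∀ p ≠ 0, 0 < jacobiIntegral hα hβ (p ^ 2) := fun p => jacobiIntegral_sq_pos hα hβ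
  have hdiag : IsOrthogonalSequence.recurrenceDiag (jacobiIntegral hα hβ) (jacobiSequence hα hβ)
      (C 2 - C 4 * X) k = jacobiDiag α β k := by
    rw [IsOrthogonalSequence.recurrenceDiag, jacobiIntegral_jacobiSequence_sq, jacobiDiag,
      jacobiIntegral_apply]
    congr 2 with x
    rw [eval_mul, eval_pow, eval_jacobiSequence]
    simp only [eval_sub, eval_mul, eval_C, eval_X]
    ring
  have hoff : IsOrthogonalSequence.recurrenceOffDiag (jacobiIntegral hα hβ)
      (jacobiSequence hα hβ) k = jacobiOffDiag α β k := by
    cases k <;> simp only [IsOrthogonalSequence.recurrenceOffDiag, jacobiOffDiag,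
      jacobiIntegral_jacobiSequence_sq]
  rw [← hdiag, ← hoff]
  exact (isOrthogonalSequence_jacobiSequence hα hβ).mul_eq hI degree_two_sub_four_mul_X
    (degree_mul_jacobiSequence_sub_lt hα hβ) k

lemma scaledJacobi_succ (hα : -1 < α) (hβ : -1 < β) (k : ℕ) (x : ℝ) :
    scaledJacobi α β (k + 1) x =
      (2 * x - jacobiDiag α β k) * scaledJacobi α β k x -
        jacobiOffDiag α β k * scaledJacobi α β (k - 1) x := by
  have h := congrArg (fun p : ℝ[X] => p.eval ((1 - x) / 2)) (jacobiSequence_recurrence hα hβ k)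
  simp only [eval_mul, eval_add, eval_smul, eval_sub, eval_C, eval_X, eval_jacobiSequence,
    smul_eq_mul] at h
  linear_combination -h

lemma jacobiScale_succ (hα : -1 < α) (hβ : -1 < β) (k : ℕ) :
    jacobiScale α β (k + 1) * ((2 * k + α + β + 1) * (2 * k + α + β + 2)) =
      4 * (k + α + 1) * (k + α + β + 1) * jacobiScale α β k := by
  set a : ℝ := k + α + β + 1
  have hshift : a * poch (a + 1) (k + 1) = poch a k * (a + k) * (a + (k + 1)) := by
    have h : poch a (k + 2) = poch (a + 1) (k + 1) * a := by
      simp only [poch, Finset.prod_range_succ' _ (k + 1), Nat.cast_add, Nat.cast_one,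
        Nat.cast_zero, add_zero, add_assoc, add_comm (1 : ℝ)]
    rw [mul_comm, ← h, poch_succ, poch_succ]
    push_cast
    ring
  have h1 : poch a k ≠ 0 := (poch_add_sub_one_pos hα hβ k).ne'
  have h2 : poch (a + 1) (k + 1) ≠ 0 := by
    have := (poch_add_sub_one_pos hα hβ (k + 1)).ne'
    rwa [show ((k + 1 : ℕ) : ℝ) + α + β + 1 = a + 1 by push_cast; ring] at this
  rw [jacobiScale, jacobiScale, show ((k + 1 : ℕ) : ℝ) + α + β + 1 = a + 1 by push_cast; ring,
    poch_succ, div_mul_eq_mul_div, mul_div_assoc', div_eq_div_iff h2 h1]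
  linear_combination (4 ^ (k + 1) * poch (α + 1) k * (α + 1 + k)) * (-hshift)

lemma jacobiScale_succ_eq_ratio_mul (hα : -1 < α) (hβ : -1 < β) {k : ℕ} (hk : 1 ≤ k) :
    jacobiScale α β (k + 1) = 4 * (k + α + 1) * (k + α + β + 1) /
      ((2 * k + α + β + 1) * (2 * k + α + β + 2)) * jacobiScale α β k := by
  have hk' : (1 : ℝ) ≤ k := by exact_mod_cast hk
  rw [div_mul_eq_mul_div, _root_.eq_div_iff (mul_ne_zero (by linarith) (by linarith)),
    jacobiScale_succ hα hβ]

lemma coeff_jacobiSequence_succ_self (hα : -1 < α) (hβ : -1 < β) (k : ℕ) :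
    (2 * k + α + β + 2) * (jacobiSequence hα hβ (k + 1)).coeff k =
      -((k + 1) * (k + α + 1)) * (-4) ^ (k + 1) := by
  have h := jacobiSeriesCoeff_succ hα (k + 1) k (β := β)
  rw [coeff_jacobiSequence, ← jacobiScale_mul_coeff_self hα hβ]
  push_cast at h
  linear_combination jacobiScale α β (k + 1) * h

lemma jacobiDiag_eq (hα : -1 < α) (hβ : -1 < β) {k : ℕ} (hk : 1 ≤ k) :
    jacobiDiag α β k = 2 * (β ^ 2 - α ^ 2) / ((2 * k + α + β) * (2 * k + α + β + 2)) := by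
  obtain ⟨k, rfl⟩ := Nat.exists_eq_add_of_le' hk
  have := k.cast_nonneg (α := ℝ)
  have hrec := congrArg (fun p => p.coeff (k + 1)) (jacobiSequence_recurrence hα hβ (k + 1))
  have hprev : (jacobiSequence hα hβ k).coeff (k + 1) = 0 :=
    coeff_eq_zero_of_degree_lt
      (by rw [(jacobiSequence hα hβ).degree_eq]; exact_mod_cast k.lt_succ_self)
  simp only [sub_mul, mul_assoc, coeff_sub, coeff_add, coeff_C_mul, coeff_X_mul, coeff_smul,
    smul_eq_mul, Nat.add_sub_cancel, hprev, coeff_jacobiSequence_self] at hrec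
  have h1 := coeff_jacobiSequence_succ_self hα hβ k
  have h2 := coeff_jacobiSequence_succ_self hα hβ (k + 1)
  have hpow : ((-4 : ℝ)) ^ (k + 1) ≠ 0 := pow_ne_zero _ (by norm_num)
  rw [pow_succ] at h2
  push_cast at h2 ⊢
  rw [_root_.eq_div_iff (mul_ne_zero (by linarith) (by linarith))]
  refine mul_right_cancel₀ hpow ?_
  linear_combination (-((2 * k + α + β + 2) * (2 * k + α + β + 4))) * hrec -
    4 * (2 * k + α + β + 4) * h1 - (2 * k + α + β + 2) * h2

lemma jacobiOffDiag_eq (hα : -1 < α) (hβ : -1 < β) {k : ℕ} (hk : 2 ≤ k) :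
    jacobiOffDiag α β k = 16 * k * (k + α) * (k + β) * (k + α + β) /
      ((2 * k + α + β) ^ 2 * (2 * k + α + β + 1) * (2 * k + α + β - 1)) := by
  obtain ⟨k, rfl⟩ := Nat.exists_eq_add_of_le' hk
  have := k.cast_nonneg (α := ℝ)
  have hrec := scaledJacobi_succ hα hβ (k + 2) 1
  rw [show k + 2 - 1 = k + 1 from rfl] at hrec
  simp only [scaledJacobi_one] at hrec
  have hpos := jacobiScale_pos hα hβ (k + 1)
  rw [jacobiDiag_eq hα hβ (by omega), jacobiScale_succ_eq_ratio_mul hα hβ (by omega),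
    jacobiScale_succ_eq_ratio_mul hα hβ (show 1 ≤ k + 1 by omega)] at hrec
  push_cast at hrec ⊢
  have hc : jacobiOffDiag α β (k + 2) = ((2 * 1 - 2 * (β ^ 2 - α ^ 2) /
      ((2 * (k + 2) + α + β) * (2 * (k + 2) + α + β + 2))) -
      4 * (k + 2 + α + 1) * (k + 2 + α + β + 1) /
        ((2 * (k + 2) + α + β + 1) * (2 * (k + 2) + α + β + 2))) *
      (4 * (k + 1 + α + 1) * (k + 1 + α + β + 1) /
        ((2 * (k + 1) + α + β + 1) * (2 * (k + 1) + α + β + 2))) := by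
    refine mul_right_cancel₀ hpos.ne' ?_
    linear_combination hrec
  rw [hc]
  have e1 : (2 * (k + 2) + α + β : ℝ) ≠ 0 := by linarith
  have e2 : (2 * (k + 2) + α + β + 2 : ℝ) ≠ 0 := by linarith
  have e3 : (2 * (k + 2) + α + β + 1 : ℝ) ≠ 0 := by linarith
  have e4 : (2 * (k + 1) + α + β + 1 : ℝ) ≠ 0 := by linarith
  have e5 : (2 * (k + 1) + α + β + 2 : ℝ) ≠ 0 := by linarith
  have e6 : (2 * (k + 2) + α + β - 1 : ℝ) ≠ 0 := by linarith
  field_simp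
  ring

lemma integral_jacobiMeasure_comp_neg (f : ℝ → ℝ) :
    ∫ x, f (-x) ∂jacobiMeasure α β = ∫ x, f x ∂jacobiMeasure β α := by
  have h := intervalIntegral.integral_comp_neg (a := -1) (b := 1) fun x => f x * w β α x
  simp only [w_neg, neg_neg] at h
  rwa [intervalIntegral.integral_of_le (by norm_num), intervalIntegral.integral_of_le (by norm_num),
    integral_Ioc_eq_integral_Ioo, integral_Ioc_eq_integral_Ioo, ← integral_jacobiMeasure,
    ← integral_jacobiMeasure] at h

lemma jacobiIntegral_comp_one_sub_X (hα : -1 < α) (hβ : -1 < β) (p : ℝ[X]) :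
    jacobiIntegral hα hβ (p.comp (1 - X)) = jacobiIntegral hβ hα p := by
  rw [jacobiIntegral_apply, jacobiIntegral_apply, ← integral_jacobiMeasure_comp_neg]
  congr 1 with x
  rw [eval_comp, eval_sub, eval_one, eval_X]
  congr 1
  ring

lemma one_sub_X_eq : (1 - X : ℝ[X]) = C (-1) * X + C 1 := by
  simp only [map_neg, map_one, neg_mul, one_mul, neg_add_eq_sub]

lemma degree_comp_one_sub_X (p : ℝ[X]) : (p.comp (1 - X)).degree = p.degree := by
  have hX : (1 - X : ℝ[X]).degree = 1 := by rw [one_sub_X_eq, degree_linear (by norm_num)]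
  rw [degree_comp (by rw [hX]; exact zero_lt_one), hX, mul_one]

lemma leadingCoeff_comp_one_sub_X (p : ℝ[X]) :
    (p.comp (1 - X)).leadingCoeff = p.leadingCoeff * (-1) ^ p.natDegree := by
  rw [one_sub_X_eq, leadingCoeff_comp (by rw [natDegree_linear (by norm_num)]; exact one_ne_zero),
    leadingCoeff_linear (by norm_num)]

lemma jacobiSequence_symm (hα : -1 < α) (hβ : -1 < β) (k : ℕ) :
    (-1 : ℝ) ^ k • (jacobiSequence hβ hα k).comp (1 - X) = jacobiSequence hα hβ k := by
  have hdeg : ((-1 : ℝ) ^ k • (jacobiSequence hβ hα k).comp (1 - X)).degree = k := by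
    rw [smul_eq_C_mul, degree_C_mul (pow_ne_zero _ (by norm_num)), degree_comp_one_sub_X,
      (jacobiSequence hβ hα).degree_eq]
  have hlead : ((-1 : ℝ) ^ k • (jacobiSequence hβ hα k).comp (1 - X)).leadingCoeff =
      (jacobiSequence hα hβ k).leadingCoeff := by
    rw [smul_eq_C_mul, leadingCoeff_mul, leadingCoeff_C, leadingCoeff_comp_one_sub_X,
      leadingCoeff, leadingCoeff, (jacobiSequence hβ hα).natDegree_eq,
      (jacobiSequence hα hβ).natDegree_eq, coeff_jacobiSequence_self, coeff_jacobiSequence_self,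
      mul_left_comm, ← mul_pow]
    norm_num
  refine (isOrthogonalSequence_jacobiSequence hα hβ).eq_of_orthogonal
    (fun p => jacobiIntegral_sq_pos hα hβ) ?_ fun q hq => ?_
  · conv_rhs => rw [← hdeg]
    exact degree_sub_lt_left (by rw [hdeg, (jacobiSequence hα hβ).degree_eq])
      (by rw [← degree_ne_bot, hdeg]; exact WithBot.natCast_ne_bot _) hlead
  · have hq' : (q.comp (1 - X)).degree < k := by rwa [degree_comp_one_sub_X]
    rw [smul_mul_assoc, map_smul, ← jacobiIntegral_comp_one_sub_X hβ hα, mul_comp, comp_assoc]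
    simp [isOrthogonalSequence_jacobiSequence hβ hα k _ hq']

lemma scaledJacobi_neg (hα : -1 < α) (hβ : -1 < β) (k : ℕ) (x : ℝ) :
    scaledJacobi β α k (-x) = (-1) ^ k * scaledJacobi α β k x := by
  rw [← eval_jacobiSequence hα hβ, ← jacobiSequence_symm, eval_smul, eval_comp, smul_eq_mul,
    ← mul_assoc, ← mul_pow, ← eval_jacobiSequence hβ hα]
  norm_num
  congr 1
  ring

lemma scaledJacobiNormSq_symm (hα : -1 < α) (hβ : -1 < β) (k : ℕ) :
    scaledJacobiNormSq β α k = scaledJacobiNormSq α β k := by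
  rw [scaledJacobiNormSq, ← integral_jacobiMeasure_comp_neg]
  simp only [scaledJacobi_neg hα hβ, mul_pow, pow_right_comm _ k 2, neg_one_sq, one_pow, one_mul,
    scaledJacobiNormSq]

end ScaledJacobi

/-! ### The kernel of the operator -/

section Kernel

open Polynomial
open scoped Nat

variable {α β : ℝ} {η : ℝ → ℝ}

variable (α β) in
/-- The polynomial whose integral against the `k`-th scaled Jacobi polynomial is `F k` for
`k < M`, and `0` for `M ≤ k`. -/
def jacobiSum (M : ℕ) (F : ℕ → ℝ) (y : ℝ) : ℝ :=
  ∑ k ∈ Finset.range M, F k * scaledJacobi α β k y / scaledJacobiNormSq α β k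

variable (α β η) in
/-- The kernel of `V η α β n` with respect to `jacobiMeasure α β`. -/
def valleePoussinKernel (n : ℕ) (x : ℝ) : ℝ → ℝ :=
  jacobiSum α β (2 * n + 1) fun k => η (k / n) * scaledJacobi α β k x

lemma coeff_mul_J (hα : -1 < α) (hβ : -1 < β) (k : ℕ) (f : ℝ → ℝ) (x : ℝ) :
    coeff α β k f * J α β k x =
      (∫ y, f y * scaledJacobi α β k y ∂jacobiMeasure α β) * scaledJacobi α β k x /
        scaledJacobiNormSq α β k := by
  have : (2 : ℝ) ^ k * k ! ≠ 0 := by positivity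
  have hh := (scaledJacobiNormSq_pos hα hβ k).ne'
  have hf : ∫ y, f y * scaledJacobi α β k y ∂jacobiMeasure α β =
      2 ^ k * k ! * ip α β f (J α β k) := by
    rw [integral_jacobiMeasure, ip, ← integral_const_mul]
    simp only [scaledJacobi_eq_J]
    exact integral_congr_ae (.of_forall fun y => by ring)
  have hsq : scaledJacobiNormSq α β k = (2 ^ k * k !) ^ 2 * hJ α β k := by
    rw [scaledJacobiNormSq, integral_jacobiMeasure, hJ, ip, ← integral_const_mul]
    simp only [scaledJacobi_eq_J]
    exact integral_congr_ae (.of_forall fun y => by ring)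
  rw [hsq] at hh ⊢
  have hJ_ne := right_ne_zero_of_mul hh
  rw [coeff, hf, scaledJacobi_eq_J]
  field_simp

lemma V_eq_integral (hα : -1 < α) (hβ : -1 < β) {f : ℝ → ℝ}
    (hf : Integrable f (jacobiMeasure α β)) (n : ℕ) (x : ℝ) :
    V η α β n f x = ∫ y, f y * valleePoussinKernel α β η n x y ∂jacobiMeasure α β := by
  simp only [valleePoussinKernel, jacobiSum, Finset.mul_sum]
  rw [V, integral_finsetSum]
  · refine Finset.sum_congr rfl fun k _ => ?_
    rw [mul_assoc, coeff_mul_J hα hβ, mul_div_assoc, mul_comm, mul_assoc, ← integral_mul_const]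
    exact integral_congr_ae (.of_forall fun y => by ring)
  · exact fun k _ => integrable_mul_continuous hf (by fun_prop)

lemma degree_comp_one_sub_two_mul_X_lt {M : ℕ} {q : ℝ[X]} (hq : q.natDegree < M) :
    (q.comp (1 - 2 * X)).degree < (M : WithBot ℕ) := by
  have hlin : (1 - 2 * X : ℝ[X]).natDegree ≤ 1 := by compute_degree
  exact degree_le_natDegree.trans_lt (Nat.cast_lt.2
    (natDegree_comp_le.trans_lt ((mul_le_of_le_one_right (Nat.zero_le _) hlin).trans_lt hq)))

lemma eval_comp_one_sub_two_mul_X (q : ℝ[X]) (x : ℝ) :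
    (q.comp (1 - 2 * X)).eval ((1 - x) / 2) = q.eval x := by
  simp only [eval_comp, eval_sub, eval_one, eval_mul, eval_ofNat, eval_X]
  ring_nf

lemma jacobiIntegral_jacobiSequence_mul_comp (hα : -1 < α) (hβ : -1 < β) (k : ℕ) (q : ℝ[X]) :
    jacobiIntegral hα hβ (jacobiSequence hα hβ k * q.comp (1 - 2 * X)) =
      ∫ y, q.eval y * scaledJacobi α β k y ∂jacobiMeasure α β := by
  simp only [jacobiIntegral_jacobiSequence_mul, eval_comp_one_sub_two_mul_X]
  simp only [mul_comm]

lemma integral_eval_mul_scaledJacobi_eq_zero (hα : -1 < α) (hβ : -1 < β) {k : ℕ} {q : ℝ[X]}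
    (hq : q.natDegree < k) :
    ∫ y, q.eval y * scaledJacobi α β k y ∂jacobiMeasure α β = 0 := by
  rw [← jacobiIntegral_jacobiSequence_mul_comp hα hβ]
  exact isOrthogonalSequence_jacobiSequence hα hβ k _ (degree_comp_one_sub_two_mul_X_lt hq)

lemma jacobiSum_integral_eval (hα : -1 < α) (hβ : -1 < β) {M : ℕ} {q : ℝ[X]}
    (hq : q.natDegree < M) (x : ℝ) :
    jacobiSum α β M (fun k => ∫ y, q.eval y * scaledJacobi α β k y ∂jacobiMeasure α β) x =
      q.eval x := by
  have h := (isOrthogonalSequence_jacobiSequence hα hβ).eq_sum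
    (fun p hp => jacobiIntegral_sq_pos hα hβ hp) (degree_comp_one_sub_two_mul_X_lt hq)
  have h := congrArg (fun p : ℝ[X] => p.eval ((1 - x) / 2)) h
  simp only [eval_comp_one_sub_two_mul_X, eval_finsetSum, eval_smul, smul_eq_mul,
    eval_jacobiSequence, jacobiIntegral_jacobiSequence_mul_comp,
    jacobiIntegral_jacobiSequence_sq] at h
  rw [h, jacobiSum]
  exact Finset.sum_congr rfl fun k _ => mul_div_right_comm _ _ _

lemma V_eval (hα : -1 < α) (hβ : -1 < β) (hη : Admissible η) {n : ℕ} (hn : 1 ≤ n) {q : ℝ[X]}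
    (hq : q.natDegree ≤ n) (x : ℝ) : V η α β n (fun y => q.eval y) x = q.eval x := by
  rw [← jacobiSum_integral_eval hα hβ (show q.natDegree < 2 * n + 1 by omega), V, jacobiSum]
  refine Finset.sum_congr rfl fun k _ => ?_
  rw [mul_assoc, coeff_mul_J hα hβ]
  rcases le_or_gt k n with hk | hk
  · rw [hη.2.1 _ (by positivity) (div_le_one_of_le₀ (by exact_mod_cast hk) n.cast_nonneg), one_mul]
  · rw [integral_eval_mul_scaledJacobi_eq_zero hα hβ (hq.trans_lt hk)]
    simp

lemma jacobiMatrixSub_iterate_eq_zero {b c : ℕ → ℝ} {x : ℝ} {F : ℕ → ℝ} {M : ℕ}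
    (hF : ∀ k, M ≤ k → F k = 0) (j : ℕ) {k : ℕ} (hk : M + j ≤ k) :
    (jacobiMatrixSub b c x)^[j] F k = 0 := by
  induction j generalizing k with
  | zero => exact hF k hk
  | succ j ih =>
    rw [Function.iterate_succ_apply', jacobiMatrixSub, ih (by omega), ih (by omega),
      ih (by omega)]
    simp

lemma jacobiMatrixSub_iterate_scaledJacobi_eq_zero (hα : -1 < α) (hβ : -1 < β) {x : ℝ}
    {F : ℕ → ℝ} {m : ℕ} (hF : ∀ k, k ≤ m → F k = scaledJacobi α β k x) (j : ℕ) {k : ℕ}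
    (hk : k + (j + 1) ≤ m) :
    (jacobiMatrixSub (jacobiDiag α β) (jacobiOffDiag α β) x)^[j + 1] F k = 0 := by
  induction j generalizing k with
  | zero =>
    rw [zero_add, Function.iterate_one, jacobiMatrixSub, hF _ (by omega), hF _ (by omega),
      hF _ (by omega), scaledJacobi_succ hα hβ]
    ring
  | succ j ih =>
    rw [Function.iterate_succ_apply', jacobiMatrixSub, ih (by omega), ih (by omega),
      ih (by omega)]
    simp

lemma sub_mul_jacobiSum (hα : -1 < α) (hβ : -1 < β) (F : ℕ → ℝ) (x y : ℝ) (M : ℕ) :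
    (y - x) * jacobiSum α β M F y =
      jacobiSum α β M (jacobiMatrixSub (jacobiDiag α β) (jacobiOffDiag α β) x F) y +
      jacobiOffDiag α β M * (F (M - 1) * scaledJacobi α β M y - F M * scaledJacobi α β (M - 1) y) /
        (2 * scaledJacobiNormSq α β M) := by
  induction M with
  | zero => simp [jacobiSum, jacobiOffDiag]
  | succ M ih =>
    have hM := (scaledJacobiNormSq_pos hα hβ M).ne'
    have hM' := (scaledJacobiNormSq_pos hα hβ (M + 1)).ne'
    simp only [jacobiSum] at ih ⊢
    rw [Finset.sum_range_succ, Finset.sum_range_succ, mul_add, ih, Nat.add_sub_cancel,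
      jacobiMatrixSub, scaledJacobi_succ hα hβ M y, jacobiOffDiag]
    field_simp
    ring

lemma sub_pow_mul_jacobiSum (hα : -1 < α) (hβ : -1 < β) {F : ℕ → ℝ} {M : ℕ}
    (hF : ∀ k, M ≤ k → F k = 0) (x y : ℝ) (j : ℕ) :
    (y - x) ^ j * jacobiSum α β M F y = jacobiSum α β (M + j)
      ((jacobiMatrixSub (jacobiDiag α β) (jacobiOffDiag α β) x)^[j] F) y := by
  induction j with
  | zero => simp
  | succ j ih =>
    have hzero (k : ℕ) (hk : M + j ≤ k) := jacobiMatrixSub_iterate_eq_zero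
      (b := jacobiDiag α β) (c := jacobiOffDiag α β) (x := x) hF j hk
    have hext (G : ℕ → ℝ) (hG : G (M + j) = 0) :
        jacobiSum α β (M + j) G y = jacobiSum α β (M + (j + 1)) G y := by
      simp only [jacobiSum, ← add_assoc, Finset.sum_range_succ, hG, zero_mul, zero_div, add_zero]
    rw [pow_succ', mul_assoc, ih, hext _ (hzero _ le_rfl), sub_mul_jacobiSum hα hβ,
      hzero _ (by omega), hzero (M + (j + 1)) (by omega), Function.iterate_succ']
    simp

lemma integral_jacobiSum_sq (hα : -1 < α) (hβ : -1 < β) (F : ℕ → ℝ) (M : ℕ) :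
    ∫ y, jacobiSum α β M F y ^ 2 ∂jacobiMeasure α β =
      ∑ k ∈ Finset.range M, F k ^ 2 / scaledJacobiNormSq α β k := by
  have hcont (a : ℝ) (k l : ℕ) :
      Integrable (fun y => a * (scaledJacobi α β l y * scaledJacobi α β k y))
        (jacobiMeasure α β) := integrable_of_continuous hα hβ (by fun_prop)
  have hexpand (y : ℝ) : jacobiSum α β M F y ^ 2 = ∑ k ∈ Finset.range M, ∑ l ∈ Finset.range M,
      F k / scaledJacobiNormSq α β k * (F l / scaledJacobiNormSq α β l) *
        (scaledJacobi α β l y * scaledJacobi α β k y) := by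
    rw [jacobiSum, sq, Finset.sum_mul_sum]
    exact Finset.sum_congr rfl fun k _ => Finset.sum_congr rfl fun l _ => by ring
  simp only [hexpand]
  rw [integral_finsetSum _ fun k _ => integrable_finsetSum _ fun l _ => hcont _ k l]
  refine Finset.sum_congr rfl fun k hk => ?_
  rw [integral_finsetSum _ fun l _ => hcont _ k l, Finset.sum_eq_single_of_mem k hk fun l _ hl => by
    rw [integral_const_mul, integral_scaledJacobi_mul_eq_zero hα hβ hl.symm, mul_zero]]
  simp only [integral_const_mul, ← sq]
  rw [← scaledJacobiNormSq]
  have := (scaledJacobiNormSq_pos hα hβ k).ne'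
  field_simp

lemma integral_sub_pow_mul_valleePoussinKernel_sq (hα : -1 < α) (hβ : -1 < β)
    (hη : Admissible η) {n : ℕ} (hn : 1 ≤ n) (x : ℝ) (j : ℕ) :
    ∫ y, ((y - x) ^ j * valleePoussinKernel α β η n x y) ^ 2 ∂jacobiMeasure α β =
      ∑ k ∈ Finset.range (2 * n + 1 + j),
        ((jacobiMatrixSub (jacobiDiag α β) (jacobiOffDiag α β) x)^[j]
          (fun k => η (k / n) * scaledJacobi α β k x) k) ^ 2 / scaledJacobiNormSq α β k := by
  have hn' : (0 : ℝ) < n := by exact_mod_cast hn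
  have hvanish (k : ℕ) (hk : 2 * n + 1 ≤ k) : η (k / n) * scaledJacobi α β k x = 0 := by
    rw [hη.2.2 _ ((le_div_iff₀ hn').2 (by exact_mod_cast (Nat.le_succ _).trans hk)), zero_mul]
  simp only [valleePoussinKernel, sub_pow_mul_jacobiSum hα hβ hvanish]
  exact integral_jacobiSum_sq hα hβ _ _

lemma Admissible.exists_abs_iteratedDeriv_le (hη : Admissible η) (i : ℕ) :
    ∃ C, 0 ≤ C ∧ ∀ t, 0 ≤ t → |iteratedDeriv i η t| ≤ C := by
  have hcont : Continuous (iteratedDeriv i η) :=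
    hη.1.continuous_iteratedDeriv i (by exact_mod_cast le_top)
  obtain ⟨C, hC⟩ :=
    isCompact_Icc.exists_bound_of_continuousOn (s := Icc (0 : ℝ) 3) hcont.continuousOn
  have hC0 : 0 ≤ C := (norm_nonneg _).trans (hC 0 (by norm_num))
  refine ⟨C, hC0, fun t ht => ?_⟩
  rcases le_or_gt t 3 with h | h
  · exact hC t ⟨ht, h⟩
  · have hzero : η =ᶠ[nhds t] fun _ => (0 : ℝ) := by
      filter_upwards [lt_mem_nhds (show (2 : ℝ) < t by linarith)] with s hs using hη.2.2 s hs.le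
    rw [hzero.iteratedDeriv_eq]
    simpa [iteratedDeriv_const] using hC0

end Kernel

/-! ### Asymptotics of the recurrence coefficients -/

section Coefficients

open Filter

variable {α β : ℝ}

lemma jacobiOffDiag_sub_one_eq (hα : -1 < α) (hβ : -1 < β) {k : ℕ} (hk : 2 ≤ k) :
    jacobiOffDiag α β k - 1 =
      (1 - (α + β) ^ 2 - (α - β) ^ 2) *
        (1 / (2 * k + (α + β + 1)) * (1 / (2 * k + (α + β - 1)))) +
      (α + β) ^ 2 * (α - β) ^ 2 * (1 / (2 * k + (α + β)) * (1 / (2 * k + (α + β))) *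
        (1 / (2 * k + (α + β + 1)) * (1 / (2 * k + (α + β - 1))))) := by
  have hk' : (2 : ℝ) ≤ k := by exact_mod_cast hk
  rw [jacobiOffDiag_eq hα hβ hk, ← add_assoc, ← add_assoc, ← add_sub_assoc, ← add_assoc]
  obtain ⟨D, hD⟩ : ∃ D, D = 2 * k + α + β := ⟨_, rfl⟩
  have h₀ : D ≠ 0 := by linarith
  have h₁ : D + 1 ≠ 0 := by linarith
  have h₂ : D - 1 ≠ 0 := by linarith
  rw [← hD]
  field_simp
  rw [hD]
  ring

section Symbols

variable {ι : Type*} {N : ι → ℝ} {d : ι → ℕ} {c : ℝ}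

variable (hN : ∀ i, 1 ≤ N i) (hd : ∀ i, 2 ≤ d i) (hc : 0 < c) (hcd : ∀ i, c * N i ≤ d i)
include hN hd hc hcd

lemma isSymbol_one_div_two_mul_add {b : ℝ} (hb : -3 ≤ b) :
    IsSymbol N d (fun i => 1 / N i) fun _ k => 1 / (2 * k + b) := by
  refine IsSymbol.one_div_affine (half_pos hc) (fun i => one_pos.trans_le (hN i)) fun i k hk => ?_
  have hk' : (d i : ℝ) ≤ k := by exact_mod_cast hk
  have hd' : (2 : ℝ) ≤ d i := by exact_mod_cast hd i
  linarith [hcd i]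

variable (hα : -1 < α) (hβ : -1 < β)
include hα hβ

lemma isSymbol_jacobiDiag : IsSymbol N d (fun i => 1 / N i ^ 2) fun _ => jacobiDiag α β := by
  have hsymb {b : ℝ} := isSymbol_one_div_two_mul_add hN hd hc hcd (b := b)
  have hmul := ((hsymb (b := α + β) (by linarith)).mul
    (hsymb (b := α + β + 2) (by linarith))).const_smul (2 * (β ^ 2 - α ^ 2))
  refine (hmul.congr fun i k hk => ?_).mono (fun i => zero_le_one.trans (hN i)) fun i => ?_
  · rw [jacobiDiag_eq hα hβ (by linarith [hd i]), one_div_mul_one_div, mul_one_div]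
    simp only [add_assoc]
  · rw [one_div_mul_one_div, sq]

lemma isSymbol_jacobiOffDiag_sub_one :
    IsSymbol N d (fun i => 1 / N i ^ 2) fun _ k => jacobiOffDiag α β k - 1 := by
  have hN0 (i : ι) : 0 < N i := one_pos.trans_le (hN i)
  have hsymb {b : ℝ} := isSymbol_one_div_two_mul_add hN hd hc hcd (b := b)
  have hmain := (hsymb (b := α + β + 1) (by linarith)).mul (hsymb (b := α + β - 1) (by linarith))
  have hsq := (hsymb (b := α + β) (by linarith)).mul (hsymb (b := α + β) (by linarith))
  have hrest := (hsq.mul hmain).mono (B' := fun i => 1 / N i * (1 / N i))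
    (fun i => (hN0 i).le) fun i => by
      have h0 : 0 ≤ 1 / N i := (one_div_pos.2 (hN0 i)).le
      have h1 : 1 / N i ≤ 1 := (div_le_one (hN0 i)).2 (hN i)
      exact mul_le_of_le_one_left (mul_nonneg h0 h0) (mul_le_one₀ h1 h0 h1)
  refine (((hmain.const_smul _).add (hrest.const_smul _)).congr fun i k hk =>
    jacobiOffDiag_sub_one_eq hα hβ ((hd i).trans hk)).mono (fun i => (hN0 i).le) fun i => ?_
  rw [one_div_mul_one_div, sq]

end Symbols

lemma exists_forall_abs_le_mul_of_eventually {a g : ℕ → ℝ} {C : ℝ} (hg : ∀ k, 0 < g k)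
    (h : ∀ᶠ k in atTop, |a k| ≤ C * g k) : ∃ B, 0 < B ∧ ∀ k, |a k| ≤ B * g k := by
  have hO : a =O[atTop] g := Asymptotics.IsBigO.of_bound C (h.mono fun k hk => by
    rwa [Real.norm_eq_abs, Real.norm_of_nonneg (hg k).le])
  obtain ⟨B, hB⟩ :=
    (Asymptotics.isBigO_nat_atTop_iff fun k hk => absurd hk (hg k).ne').1 hO
  refine ⟨max B 1, lt_max_of_lt_right one_pos, fun k => ?_⟩
  have hk := hB k
  rw [Real.norm_eq_abs, Real.norm_of_nonneg (hg k).le] at hk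
  exact hk.trans (mul_le_mul_of_nonneg_right (le_max_left _ _) (hg k).le)

lemma exists_forall_abs_le_of_isSymbol {a : ℕ → ℝ}
    (h : IsSymbol (fun i : ℕ => (i : ℝ) + 3) (fun i => i + 2) (fun i => 1 / ((i : ℝ) + 3) ^ 2)
      fun _ => a) : ∃ B, 0 < B ∧ ∀ k, |a k| ≤ B / (k + 1) ^ 2 := by
  obtain ⟨C, -, hC⟩ := h.tailBounded
  have hev : ∀ᶠ k : ℕ in atTop, |a k| ≤ C * (1 / ((k : ℝ) + 1) ^ 2) := by
    filter_upwards [eventually_ge_atTop 2] with k hk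
    obtain ⟨i, rfl⟩ := Nat.exists_eq_add_of_le' hk
    exact (hC i (i + 2) le_rfl).trans_eq (by push_cast; ring)
  obtain ⟨B, hB, hle⟩ := exists_forall_abs_le_mul_of_eventually (fun k => by positivity) hev
  exact ⟨B, hB, fun k => (hle k).trans_eq (mul_one_div _ _)⟩

lemma exists_abs_jacobiDiag_le (hα : -1 < α) (hβ : -1 < β) :
    ∃ B, 0 < B ∧ ∀ k, |jacobiDiag α β k| ≤ B / (k + 1) ^ 2 :=
  exists_forall_abs_le_of_isSymbol (isSymbol_jacobiDiag (c := 1 / 2) (fun i => by linarith)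
    (fun i => by omega) (by norm_num) (fun i => by push_cast; linarith) hα hβ)

lemma exists_abs_jacobiOffDiag_sub_one_le (hα : -1 < α) (hβ : -1 < β) :
    ∃ B, 0 < B ∧ ∀ k, |jacobiOffDiag α β k - 1| ≤ B / (k + 1) ^ 2 :=
  exists_forall_abs_le_of_isSymbol (isSymbol_jacobiOffDiag_sub_one (c := 1 / 2)
    (fun i => by linarith) (fun i => by omega) (by norm_num) (fun i => by push_cast; linarith)
    hα hβ)

lemma one_add_div_le_exp_mul_rpow {e C t : ℝ} (hC : 0 ≤ C) (ht : 1 ≤ t) :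
    1 + e / t + C / t ^ 2 ≤
      Real.exp (2 * (C + |e|) * (1 / t - 1 / (t + 1))) * ((t + 1) / t) ^ e := by
  have ht0 : 0 < t := one_pos.trans_le ht
  have hq : 0 < (t + 1) / t := by positivity
  have hlog : |1 / t - Real.log ((t + 1) / t)| ≤ 1 / t - 1 / (t + 1) := by
    have hlow := Real.one_sub_inv_le_log_of_pos hq
    have hupp := Real.log_le_sub_one_of_pos hq
    rw [show 1 - ((t + 1) / t)⁻¹ = 1 / (t + 1) by field_simp; ring] at hlow
    rw [show (t + 1) / t - 1 = 1 / t by field_simp; ring] at hupp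
    rw [abs_of_nonneg (by linarith)]
    linarith
  have he : e / t - Real.log ((t + 1) / t) * e ≤ |e| * (1 / t - 1 / (t + 1)) :=
    calc e / t - Real.log ((t + 1) / t) * e = e * (1 / t - Real.log ((t + 1) / t)) := by ring
      _ ≤ |e| * |1 / t - Real.log ((t + 1) / t)| := (le_abs_self _).trans (abs_mul _ _).le
      _ ≤ _ := mul_le_mul_of_nonneg_left hlog (abs_nonneg e)
  have hgap : 1 / t ^ 2 ≤ 2 * (1 / t - 1 / (t + 1)) := by
    rw [show 2 * (1 / t - 1 / (t + 1)) = 2 / (t * (t + 1)) by field_simp; ring,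
      div_le_div_iff₀ (by positivity) (by positivity)]
    nlinarith
  have hgapC := mul_le_mul_of_nonneg_left hgap hC
  have hgape := mul_nonneg (abs_nonneg e) ((one_div_pos.2 (pow_pos ht0 2)).le.trans hgap)
  rw [mul_one_div] at hgapC
  rw [Real.rpow_def_of_pos hq, ← Real.exp_add]
  refine le_trans ?_ (Real.add_one_le_exp _)
  linarith

lemma le_exp_mul_rpow_mul_of_ratio_le {a : ℕ → ℝ} {e C : ℝ} {m k : ℕ} (hC : 0 ≤ C)
    (ha : ∀ l, m ≤ l → 0 ≤ a l)
    (h : ∀ l, m ≤ l → a (l + 1) ≤ (1 + e / (l + 1) + C / (l + 1) ^ 2) * a l) (hk : m ≤ k) :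
    a k ≤ Real.exp (2 * (C + |e|) / (m + 1)) * ((k + 1) / (m + 1)) ^ e * a m := by
  have key : a k ≤ Real.exp (2 * (C + |e|) * (1 / (m + 1) - 1 / (k + 1))) *
      ((k + 1) / (m + 1)) ^ e * a m := by
    induction k, hk using Nat.le_induction with
    | base => simp [div_self (Nat.cast_add_one_ne_zero (R := ℝ) m)]
    | succ k hk ih =>
      have hk' : (0 : ℝ) < k + 1 := k.cast_add_one_pos
      calc a (k + 1) ≤ (1 + e / (k + 1) + C / (k + 1) ^ 2) * a k := h k hk
        _ ≤ Real.exp (2 * (C + |e|) * (1 / (k + 1) - 1 / (k + 1 + 1))) *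
              ((k + 1 + 1) / (k + 1)) ^ e *
              (Real.exp (2 * (C + |e|) * (1 / (m + 1) - 1 / (k + 1))) *
                ((k + 1) / (m + 1)) ^ e * a m) :=
          mul_le_mul (one_add_div_le_exp_mul_rpow hC (by linarith [k.cast_nonneg (α := ℝ)])) ih
            (ha k hk) (by positivity)
        _ = Real.exp (2 * (C + |e|) * (1 / (k + 1) - 1 / (k + 1 + 1)) +
              2 * (C + |e|) * (1 / (m + 1) - 1 / (k + 1))) *
              ((k + 1 + 1) / (k + 1) * ((k + 1) / (m + 1))) ^ e * a m := by
          rw [Real.exp_add, Real.mul_rpow (by positivity) (by positivity)]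
          ring
        _ = _ := by
          rw [div_mul_div_cancel₀ hk'.ne']
          push_cast
          congr 3
          ring
  have hexp : 2 * (C + |e|) * (1 / (m + 1) - 1 / (k + 1)) ≤ 2 * (C + |e|) / (m + 1) := by
    rw [div_eq_mul_one_div (2 * (C + |e|))]
    exact mul_le_mul_of_nonneg_left (sub_le_self _ (by positivity)) (by positivity)
  refine key.trans ?_
  have := ha m le_rfl
  gcongr

lemma exists_le_mul_rpow_of_ratio_le {a : ℕ → ℝ} {e C : ℝ} (hC : 0 ≤ C) (ha : ∀ k, 0 ≤ a k)
    (h : ∀ᶠ k : ℕ in atTop, a (k + 1) ≤ (1 + e / (k + 1) + C / (k + 1) ^ 2) * a k) :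
    ∃ B, 0 < B ∧ ∀ k, a k ≤ B * ((k : ℝ) + 1) ^ e := by
  obtain ⟨m, hm⟩ := eventually_atTop.1 h
  have hev : ∀ᶠ k : ℕ in atTop, |a k| ≤
      Real.exp (2 * (C + |e|) / (m + 1)) * (a m / ((m : ℝ) + 1) ^ e) * ((k : ℝ) + 1) ^ e := by
    filter_upwards [eventually_ge_atTop m] with k hk
    rw [abs_of_nonneg (ha k)]
    refine (le_exp_mul_rpow_mul_of_ratio_le hC (fun l _ => ha l) hm hk).trans_eq ?_
    rw [Real.div_rpow (by positivity) (by positivity)]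
    ring
  obtain ⟨B, hB, hle⟩ := exists_forall_abs_le_mul_of_eventually (fun k => by positivity) hev
  exact ⟨B, hB, fun k => (le_abs_self _).trans (hle k)⟩

lemma exists_scaledJacobiNormSq_ge (hα : -1 < α) (hβ : -1 < β) :
    ∃ c, 0 < c ∧ ∀ k, c ≤ scaledJacobiNormSq α β k := by
  obtain ⟨B, hB, hc⟩ := exists_abs_jacobiOffDiag_sub_one_le hα hβ
  have hpos := scaledJacobiNormSq_pos hα hβ
  have hev : ∀ᶠ k : ℕ in atTop, 1 / scaledJacobiNormSq α β (k + 1) ≤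
      (1 + 0 / (k + 1) + 2 * B / (k + 1) ^ 2) * (1 / scaledJacobiNormSq α β k) := by
    obtain ⟨m, hm⟩ := exists_nat_gt (2 * B)
    filter_upwards [eventually_ge_atTop m] with k hk
    have hmk : (m : ℝ) ≤ k := by exact_mod_cast hk
    have hsmall : B / (k + 1) ^ 2 ≤ 1 / 2 := by
      rw [div_le_div_iff₀ (by positivity) two_pos]
      nlinarith
    have hlow : 1 - B / (k + 1) ^ 2 ≤ jacobiOffDiag α β (k + 1) := by
      have hle : B / ((k + 1 : ℕ) + 1) ^ 2 ≤ B / ((k : ℝ) + 1) ^ 2 := by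
        gcongr
        linarith
      linarith [(abs_le.1 (hc (k + 1))).1]
    rw [scaledJacobiNormSq_succ hα hβ, zero_div, add_zero, ← one_div_mul_one_div]
    refine mul_le_mul_of_nonneg_right ?_ (one_div_pos.2 (hpos k)).le
    rw [div_le_iff₀ (by linarith), mul_div_assoc]
    have : 0 ≤ B / ((k : ℝ) + 1) ^ 2 := by positivity
    nlinarith
  obtain ⟨A, hA, h⟩ := exists_le_mul_rpow_of_ratio_le (by positivity)
    (fun k => (one_div_pos.2 (hpos k)).le) hev
  refine ⟨1 / A, by positivity, fun k => ?_⟩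
  have hk := h k
  rwa [Real.rpow_zero, mul_one, one_div_le (hpos k) hA] at hk

lemma exists_jacobiScale_ratio_le (hα : -1 < α) (hβ : -1 < β) :
    ∃ C, 0 ≤ C ∧ ∀ k : ℕ, 1 ≤ k →
      4 * (k + α + 1) * (k + α + β + 1) / ((2 * k + α + β + 1) * (2 * k + α + β + 2)) ≤
        1 + (α + 1 / 2) / (k + 1) + C / (k + 1) ^ 2 := by
  set s := α + β with hs
  set A := s * (s - 1) + 2 * (α + 1 / 2) * (2 * s - 1) - 4 * α * s with hA
  set B := (α + 1 / 2) * (s * (s - 1)) with hB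
  refine ⟨2 * (|A| + |B|), by positivity, fun k hk => ?_⟩
  have hk' : (1 : ℝ) ≤ k := by exact_mod_cast hk
  have hden : ((k : ℝ) + 1) ^ 2 / 2 ≤ (2 * k + α + β + 1) * (2 * k + α + β + 2) := by nlinarith
  have hdiff : (1 + (α + 1 / 2) / (k + 1) + 2 * (|A| + |B|) / (k + 1) ^ 2) *
      ((2 * k + α + β + 1) * (2 * k + α + β + 2)) -
        4 * (k + α + 1) * (k + α + β + 1) = A + B / (k + 1) + 2 * (|A| + |B|) *
          ((2 * k + α + β + 1) * (2 * k + α + β + 2) / (k + 1) ^ 2) := by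
    rw [hA, hB, hs]
    field_simp
    ring
  have hB' : -|B| ≤ B / (k + 1) := by
    rw [neg_le]
    refine (neg_le_abs _).trans ?_
    rw [abs_div]
    exact div_le_self (abs_nonneg B) ((le_abs_self _).trans' (by linarith))
  have hratio : 1 / 2 ≤ (2 * k + α + β + 1) * (2 * k + α + β + 2) / ((k : ℝ) + 1) ^ 2 := by
    rw [le_div_iff₀ (by positivity)]
    linarith
  rw [div_le_iff₀ (hden.trans_lt' (by positivity)), ← sub_nonneg, hdiff]
  nlinarith [neg_abs_le A, abs_nonneg A, abs_nonneg B]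

lemma exists_jacobiScale_le (hα : -1 < α) (hβ : -1 < β) :
    ∃ B, 0 < B ∧ ∀ k, jacobiScale α β k ≤ B * ((k : ℝ) + 1) ^ (α + 1 / 2) := by
  obtain ⟨C, hC, hratio⟩ := exists_jacobiScale_ratio_le hα hβ
  refine exists_le_mul_rpow_of_ratio_le hC (fun k => (jacobiScale_pos hα hβ k).le) ?_
  filter_upwards [eventually_ge_atTop 1] with k hk
  rw [jacobiScale_succ_eq_ratio_mul hα hβ hk]
  exact mul_le_mul_of_nonneg_right (hratio k hk) (jacobiScale_pos hα hβ k).le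

end Coefficients

/-! ### Pointwise bounds -/

lemma rpow_le_rpow_abs_mul_rpow {x y M : ℝ} (a : ℝ) (hx : 0 < x) (hy : 0 < y) (hxy : x ≤ M * y)
    (hyx : y ≤ M * x) : x ^ a ≤ M ^ |a| * y ^ a := by
  have hM : 0 < M := pos_of_mul_pos_left (hx.trans_le hxy) hy.le
  rcases le_total 0 a with ha | ha
  · rw [abs_of_nonneg ha, ← Real.mul_rpow hM.le hy.le]
    exact Real.rpow_le_rpow hx.le hxy ha
  · rw [abs_of_nonpos ha, Real.rpow_neg hM.le, inv_mul_eq_div, le_div_iff₀' (by positivity),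
      ← Real.mul_rpow hM.le hx.le]
    exact Real.rpow_le_rpow_of_nonpos hy hyx ha

section NearEndpoint

open Polynomial Filter

variable {α β : ℝ}

variable (α β) in
/-- The eigenvalue `k (k + α + β + 1)` of the Jacobi differential operator, divided by `α + 1`. -/
def jacobiEigen (k : ℕ) : ℝ := k * (k + α + β + 1) / (α + 1)

section EigenBounds

open scoped Nat

variable (hα : -1 < α) (hβ : -1 < β)
include hα hβ

lemma jacobiEigen_monotone : Monotone (jacobiEigen α β) := by
  refine monotone_nat_of_le_succ fun k => ?_
  have : 0 < α + 1 := by linarith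
  unfold jacobiEigen
  gcongr ?_ / _
  push_cast
  nlinarith [k.cast_nonneg (α := ℝ)]

lemma jacobiEigen_nonneg (k : ℕ) : 0 ≤ jacobiEigen α β k :=
  (jacobiEigen_monotone hα hβ k.zero_le).trans_eq' (by simp [jacobiEigen])

omit hβ in
lemma jacobiSeriesCoeff_succ_eq (k i : ℕ) :
    jacobiSeriesCoeff α β k (i + 1) = -((α + 1) / (α + 1 + i) *
      ((jacobiEigen α β k - jacobiEigen α β i) * jacobiSeriesCoeff α β k i / (i + 1))) := by
  have h1 : α + 1 + i ≠ 0 := by linarith [i.cast_nonneg (α := ℝ)]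
  have h2 : α + 1 ≠ 0 := by linarith
  have h := jacobiSeriesCoeff_succ (β := β) hα k i
  unfold jacobiEigen
  field_simp
  linarith

omit hβ in
lemma add_one_div_add_one_add_le_one (i : ℕ) :
    0 ≤ (α + 1) / (α + 1 + i) ∧ (α + 1) / (α + 1 + i) ≤ 1 := by
  have ha : 0 < α + 1 := by linarith
  exact ⟨by positivity, div_le_one_of_le₀ (le_add_of_nonneg_right i.cast_nonneg) (by positivity)⟩

lemma abs_jacobiEigen_sub_mul_le {k i : ℕ} {a b : ℝ} (hab : |a| ≤ b) (ha : k < i → a = 0) :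
    |(jacobiEigen α β k - jacobiEigen α β i) * a| ≤ jacobiEigen α β k * b := by
  have hk := jacobiEigen_nonneg hα hβ k
  rcases le_or_gt i k with h | h
  · have hmono := jacobiEigen_monotone hα hβ h
    rw [abs_mul, abs_of_nonneg (sub_nonneg.2 hmono)]
    exact mul_le_mul (sub_le_self _ (jacobiEigen_nonneg hα hβ i)) hab (abs_nonneg a) hk
  · rw [ha h, mul_zero, abs_zero]
    exact mul_nonneg hk ((abs_nonneg a).trans hab)

lemma abs_jacobiSeriesCoeff_le (k i : ℕ) :
    |jacobiSeriesCoeff α β k i| ≤ jacobiEigen α β k ^ i / i ! := by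
  induction i with
  | zero => simp [jacobiSeriesCoeff_zero]
  | succ i ih =>
    obtain ⟨hr0, hr1⟩ := add_one_div_add_one_add_le_one hα i
    rw [jacobiSeriesCoeff_succ_eq hα, abs_neg, abs_mul, abs_of_nonneg hr0, abs_div,
      abs_of_pos (a := (i : ℝ) + 1) i.cast_add_one_pos]
    calc _ ≤ 1 * (jacobiEigen α β k * (jacobiEigen α β k ^ i / i !) / (i + 1)) := by
          gcongr
          exact abs_jacobiEigen_sub_mul_le hα hβ ih jacobiSeriesCoeff_eq_zero
      _ = jacobiEigen α β k ^ (i + 1) / (i + 1) ! := by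
          rw [Nat.factorial_succ]
          push_cast
          field_simp
          ring

lemma abs_jacobiSeriesCoeff_succ_sub_le (k i : ℕ) :
    |jacobiSeriesCoeff α β (k + 1) (i + 1) - jacobiSeriesCoeff α β k (i + 1)| ≤
      (jacobiEigen α β (k + 1) - jacobiEigen α β k) * (jacobiEigen α β (k + 1) ^ i / i !) := by
  have hmono := sub_nonneg.2 (jacobiEigen_monotone hα hβ k.le_succ)
  induction i with
  | zero =>
    have ha : α + 1 ≠ 0 := by linarith
    simp only [jacobiSeriesCoeff_succ_eq hα, jacobiSeriesCoeff_zero, Nat.cast_zero, add_zero,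
      zero_add, div_self ha, mul_one, one_mul, div_one, pow_zero, Nat.factorial_zero, Nat.cast_one]
    rw [neg_sub_neg, sub_sub_sub_cancel_right, abs_sub_comm, abs_of_nonneg hmono]
  | succ i ih =>
    obtain ⟨hr0, hr1⟩ := add_one_div_add_one_add_le_one hα (i + 1)
    set E := jacobiEigen α β k
    set E' := jacobiEigen α β (k + 1)
    have hE : 0 ≤ E := jacobiEigen_nonneg hα hβ k
    have hstep : jacobiSeriesCoeff α β (k + 1) (i + 2) - jacobiSeriesCoeff α β k (i + 2) =
        -((α + 1) / (α + 1 + (i + 1 : ℕ)) * (((E' - jacobiEigen α β (i + 1)) *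
          (jacobiSeriesCoeff α β (k + 1) (i + 1) - jacobiSeriesCoeff α β k (i + 1)) +
            (E' - E) * jacobiSeriesCoeff α β k (i + 1)) / ((i + 1 : ℕ) + 1))) := by
      rw [jacobiSeriesCoeff_succ_eq hα, jacobiSeriesCoeff_succ_eq hα k]
      ring
    have hvanish : k + 1 < i + 1 →
        jacobiSeriesCoeff α β (k + 1) (i + 1) - jacobiSeriesCoeff α β k (i + 1) = 0 := fun h => by
      rw [jacobiSeriesCoeff_eq_zero h, jacobiSeriesCoeff_eq_zero (by omega), sub_zero]
    rw [hstep, abs_neg, abs_mul, abs_of_nonneg hr0, abs_div,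
      abs_of_pos (a := (((i + 1 : ℕ) : ℝ) + 1)) (by positivity)]
    calc _ ≤ 1 * ((E' * ((E' - E) * (E' ^ i / i !)) +
            (E' - E) * (E' ^ (i + 1) / (i + 1) !)) / ((i + 1 : ℕ) + 1)) := by
          gcongr
          refine (abs_add_le _ _).trans
            (add_le_add (abs_jacobiEigen_sub_mul_le hα hβ ih hvanish) ?_)
          rw [abs_mul, abs_of_nonneg hmono]
          gcongr
          exact (abs_jacobiSeriesCoeff_le hα hβ k (i + 1)).trans (by gcongr; linarith)
      _ = (E' - E) * (E' ^ (i + 1) / (i + 1) !) := by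
          rw [Nat.factorial_succ]
          push_cast
          field_simp
          ring

lemma abs_eval_jacobiSeries_le (k : ℕ) {z : ℝ} (hz : 0 ≤ z) :
    |(jacobiSeries α β k).eval z| ≤ Real.exp (jacobiEigen α β k * z) := by
  have hE := jacobiEigen_nonneg hα hβ k
  refine le_trans ?_ (Real.sum_le_exp_of_nonneg (mul_nonneg hE hz) (k + 1))
  simp only [jacobiSeries, eval_finsetSum, eval_monomial]
  refine (Finset.abs_sum_le_sum_abs _ _).trans (Finset.sum_le_sum fun i _ => ?_)
  rw [abs_mul, abs_of_nonneg (pow_nonneg hz i), mul_pow, mul_div_right_comm]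
  exact mul_le_mul_of_nonneg_right (abs_jacobiSeriesCoeff_le hα hβ k i) (pow_nonneg hz i)

omit hα hβ in
lemma eval_jacobiSeries_succ_sub (k : ℕ) (z : ℝ) :
    (jacobiSeries α β (k + 1)).eval z - (jacobiSeries α β k).eval z =
      z * ∑ i ∈ Finset.range (k + 1),
        (jacobiSeriesCoeff α β (k + 1) (i + 1) - jacobiSeriesCoeff α β k (i + 1)) * z ^ i := by
  have heval (l : ℕ) (hl : l < k + 2) : (jacobiSeries α β l).eval z =
      ∑ i ∈ Finset.range (k + 2), jacobiSeriesCoeff α β l i * z ^ i := by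
    simp only [jacobiSeries, eval_finsetSum, eval_monomial]
    refine Finset.sum_subset (Finset.range_mono hl) fun i _ hi => ?_
    rw [jacobiSeriesCoeff_eq_zero (by simpa using hi), zero_mul]
  rw [heval _ (by omega), heval _ (by omega), ← Finset.sum_sub_distrib, Finset.sum_range_succ',
    Finset.mul_sum]
  simp only [jacobiSeriesCoeff_zero, sub_self, add_zero]
  exact Finset.sum_congr rfl fun i _ => by ring

lemma abs_eval_jacobiSeries_succ_sub_le (k : ℕ) {z : ℝ} (hz : 0 ≤ z) :
    |(jacobiSeries α β (k + 1)).eval z - (jacobiSeries α β k).eval z| ≤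
      (jacobiEigen α β (k + 1) - jacobiEigen α β k) *
        (z * Real.exp (jacobiEigen α β (k + 1) * z)) := by
  have hmono := sub_nonneg.2 (jacobiEigen_monotone hα hβ k.le_succ)
  have hE := jacobiEigen_nonneg hα hβ (k + 1)
  have hexp := Real.sum_le_exp_of_nonneg (mul_nonneg hE hz) (k + 1)
  rw [eval_jacobiSeries_succ_sub, abs_mul, abs_of_nonneg hz, mul_left_comm]
  refine mul_le_mul_of_nonneg_left ?_ hz
  refine le_trans ?_ (mul_le_mul_of_nonneg_left hexp hmono)
  rw [Finset.mul_sum]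
  refine (Finset.abs_sum_le_sum_abs _ _).trans (Finset.sum_le_sum fun i _ => ?_)
  rw [abs_mul, abs_of_nonneg (pow_nonneg hz i), mul_pow, mul_div_right_comm, ← mul_assoc]
  exact mul_le_mul_of_nonneg_right (abs_jacobiSeriesCoeff_succ_sub_le hα hβ k i)
    (pow_nonneg hz i)

end EigenBounds

lemma add_one_sq_mul_one_sub_div_two_le {x : ℝ} {k : ℕ} (hx0 : 0 ≤ x) (hx1 : x ≤ 1)
    (hk : k * √(1 - x ^ 2) ≤ 1) : ((k : ℝ) + 1) ^ 2 * ((1 - x) / 2) ≤ 2 := by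
  have hsq : (k * √(1 - x ^ 2)) ^ 2 ≤ 1 := pow_le_one₀ (by positivity) hk
  rw [mul_pow, Real.sq_sqrt (by nlinarith)] at hsq
  have hle : (k : ℝ) ^ 2 * (1 - x) ≤ k ^ 2 * (1 - x ^ 2) := by
    gcongr
    nlinarith
  nlinarith [sq_nonneg ((k : ℝ) - 1)]

lemma exists_jacobiEigen_succ_mul_le (hα : -1 < α) (hβ : -1 < β) :
    ∃ A, 0 < A ∧ ∀ (k : ℕ) (z : ℝ), 0 ≤ z → ((k : ℝ) + 1) ^ 2 * z ≤ 2 →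
      jacobiEigen α β (k + 1) * z ≤ A ∧
      (jacobiEigen α β (k + 1) - jacobiEigen α β k) * z ≤ A / (k + 1) := by
  have ha : 0 < α + 1 := by linarith
  have hs : 0 < α + β + 4 := by linarith
  refine ⟨2 * (α + β + 4) / (α + 1), by positivity, fun k z hz0 hz => ⟨?_, ?_⟩⟩
  · calc jacobiEigen α β (k + 1) * z ≤
          ((k : ℝ) + 1) * ((k + 1) * (α + β + 4)) / (α + 1) * z := by
          unfold jacobiEigen
          push_cast
          gcongr
          nlinarith [k.cast_nonneg (α := ℝ)]
      _ = ((k : ℝ) + 1) ^ 2 * z * (α + β + 4) / (α + 1) := by ring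
      _ ≤ 2 * (α + β + 4) / (α + 1) := by gcongr
  · calc _ = (2 * k + α + β + 2) / (α + 1) * z := by
          unfold jacobiEigen
          push_cast
          ring
      _ ≤ ((k + 1) * (α + β + 4)) / (α + 1) * z := by
          gcongr
          nlinarith [k.cast_nonneg (α := ℝ)]
      _ = ((k : ℝ) + 1) ^ 2 * z * (α + β + 4) / (α + 1) / (k + 1) := by
          field_simp
      _ ≤ 2 * (α + β + 4) / (α + 1) / (k + 1) := by gcongr

lemma exists_abs_eval_jacobiSeries_le (hα : -1 < α) (hβ : -1 < β) :
    ∃ C, 0 < C ∧ ∀ (x : ℝ) (k : ℕ), 0 ≤ x → x ≤ 1 → k * √(1 - x ^ 2) ≤ 1 →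
      |(jacobiSeries α β k).eval ((1 - x) / 2)| ≤ C ∧
      |(jacobiSeries α β (k + 1)).eval ((1 - x) / 2) - (jacobiSeries α β k).eval ((1 - x) / 2)| ≤
        C / (k + 1) := by
  obtain ⟨A, hA, heigen⟩ := exists_jacobiEigen_succ_mul_le hα hβ
  refine ⟨(1 + A) * Real.exp A, by positivity, fun x k hx0 hx1 hk => ?_⟩
  have hz0 : 0 ≤ (1 - x) / 2 := by linarith
  obtain ⟨hE, hΔ⟩ := heigen k _ hz0 (add_one_sq_mul_one_sub_div_two_le hx0 hx1 hk)
  set z := (1 - x) / 2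
  have hexp : Real.exp (jacobiEigen α β (k + 1) * z) ≤ Real.exp A := Real.exp_le_exp.2 hE
  constructor
  · refine (abs_eval_jacobiSeries_le hα hβ k hz0).trans ?_
    have hmono := mul_le_mul_of_nonneg_right (jacobiEigen_monotone hα hβ k.le_succ) hz0
    refine ((Real.exp_le_exp.2 hmono).trans hexp).trans ?_
    exact le_mul_of_one_le_left (Real.exp_pos A).le (le_add_of_nonneg_right hA.le)
  · calc _ ≤ _ := abs_eval_jacobiSeries_succ_sub_le hα hβ k hz0
      _ = (jacobiEigen α β (k + 1) - jacobiEigen α β k) * z *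
            Real.exp (jacobiEigen α β (k + 1) * z) := (mul_assoc _ _ _).symm
      _ ≤ A / (k + 1) * Real.exp A := by gcongr
      _ ≤ (1 + A) / (k + 1) * Real.exp A := by
          gcongr
          linarith
      _ = _ := by ring

lemma exists_abs_jacobiScale_succ_sub_le (hα : -1 < α) (hβ : -1 < β) :
    ∃ B, 0 < B ∧ ∀ k : ℕ, |jacobiScale α β (k + 1) - jacobiScale α β k| ≤
      B * (((k : ℝ) + 1) ^ (α + 1 / 2) / (k + 1)) := by
  obtain ⟨B, hB, hscale⟩ := exists_jacobiScale_le hα hβ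
  set D := 4 * α * (α + β) - (α + β) ^ 2 + (α + β) with hD
  refine exists_forall_abs_le_mul_of_eventually (C := 2 * (|4 * α + 2| + |D|) * B)
    (fun k => by positivity) ?_
  filter_upwards [eventually_ge_atTop 1] with k hk
  have hk' : (1 : ℝ) ≤ k := by exact_mod_cast hk
  have hden : ((k : ℝ) + 1) ^ 2 / 2 ≤ (2 * k + α + β + 1) * (2 * k + α + β + 2) := by nlinarith
  have hden0 : 0 < (2 * k + α + β + 1) * (2 * k + α + β + 2) := hden.trans_lt' (by positivity)
  have hnum : |(k + 1) * (4 * α + 2) + D| ≤ (k + 1) * (|4 * α + 2| + |D|) := by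
    refine (abs_add_le _ _).trans ?_
    rw [abs_mul, abs_of_nonneg (by positivity : (0 : ℝ) ≤ k + 1)]
    nlinarith [abs_nonneg D]
  rw [jacobiScale_succ_eq_ratio_mul hα hβ hk, ← sub_one_mul, div_sub_one hden0.ne', abs_mul,
    abs_div, abs_of_pos hden0, abs_of_pos (jacobiScale_pos hα hβ k),
    show 4 * (k + α + 1) * (k + α + β + 1) - (2 * k + α + β + 1) * (2 * k + α + β + 2) =
      (k + 1) * (4 * α + 2) + D by rw [hD]; ring]
  calc _ ≤ (k + 1) * (|4 * α + 2| + |D|) / (((k : ℝ) + 1) ^ 2 / 2) *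
        (B * ((k : ℝ) + 1) ^ (α + 1 / 2)) := by
        gcongr
        · exact (jacobiScale_pos hα hβ k).le
        · exact hscale k
    _ = _ := by field_simp

lemma exists_abs_jacobiScale_succ_le (hα : -1 < α) (hβ : -1 < β) :
    ∃ B, 0 < B ∧ ∀ k : ℕ, |jacobiScale α β (k + 1)| ≤ B * ((k : ℝ) + 1) ^ (α + 1 / 2) := by
  obtain ⟨B, hB, hscale⟩ := exists_jacobiScale_le hα hβ
  obtain ⟨B', hB', hdiff⟩ := exists_abs_jacobiScale_succ_sub_le hα hβ
  refine ⟨B + B', by positivity, fun k => ?_⟩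
  have hle : ((k : ℝ) + 1) ^ (α + 1 / 2) / (k + 1) ≤ ((k : ℝ) + 1) ^ (α + 1 / 2) :=
    div_le_self (by positivity) (by linarith [k.cast_nonneg (α := ℝ)])
  have htri := abs_sub_abs_le_abs_sub (jacobiScale α β (k + 1)) (jacobiScale α β k)
  rw [abs_of_pos (jacobiScale_pos hα hβ k)] at htri
  nlinarith [hdiff k, hscale k]

lemma exists_abs_scaledJacobi_le_of_mul_sqrt_le (hα : -1 < α) (hβ : -1 < β) :
    ∃ C, 0 < C ∧ ∀ (x : ℝ) (k : ℕ), 0 ≤ x → x ≤ 1 → k * √(1 - x ^ 2) ≤ 1 →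
      |scaledJacobi α β k x| ≤ C * ((k : ℝ) + 1) ^ (α + 1 / 2) ∧
      |scaledJacobi α β (k + 1) x - x * scaledJacobi α β k x| ≤
        C * (((k : ℝ) + 1) ^ (α + 1 / 2) / (k + 1)) := by
  obtain ⟨C, hC, hφ⟩ := exists_abs_eval_jacobiSeries_le hα hβ
  obtain ⟨A, hA, hsucc⟩ := exists_abs_jacobiScale_succ_le hα hβ
  obtain ⟨B, hB, hscale⟩ := exists_jacobiScale_le hα hβ
  obtain ⟨B', hB', hdiff⟩ := exists_abs_jacobiScale_succ_sub_le hα hβ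
  refine ⟨(A + B' + 4 * B) * C, by positivity, fun x k hx0 hx1 hk => ?_⟩
  obtain ⟨hφk, hφdiff⟩ := hφ x k hx0 hx1 hk
  have hz := add_one_sq_mul_one_sub_div_two_le hx0 hx1 hk
  set R := ((k : ℝ) + 1) ^ (α + 1 / 2)
  have : 0 < R := by positivity
  have hek : |jacobiScale α β k| ≤ B * R :=
    (abs_of_pos (jacobiScale_pos hα hβ k)).trans_le (hscale k)
  have hx : |1 - x| ≤ 4 / (k + 1) := by
    rw [abs_of_nonneg (by linarith), le_div_iff₀ k.cast_add_one_pos]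
    nlinarith [k.cast_nonneg (α := ℝ)]
  set φ := (jacobiSeries α β k).eval ((1 - x) / 2) with hφ_def
  set φ' := (jacobiSeries α β (k + 1)).eval ((1 - x) / 2) with hφ'_def
  constructor
  · rw [scaledJacobi, abs_mul]
    calc _ ≤ B * R * C := by gcongr
      _ ≤ (A + B' + 4 * B) * C * R := by
        rw [mul_right_comm]
        gcongr
        linarith
  · have hsplit : scaledJacobi α β (k + 1) x - x * scaledJacobi α β k x =
        jacobiScale α β (k + 1) * (φ' - φ) +
          (jacobiScale α β (k + 1) - jacobiScale α β k) * φ +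
          (1 - x) * (jacobiScale α β k * φ) := by
      rw [scaledJacobi, scaledJacobi, ← hφ_def, ← hφ'_def]
      ring
    rw [hsplit]
    calc _ ≤ A * R * (C / (k + 1)) + B' * (R / (k + 1)) * C + 4 / (k + 1) * (B * R * C) := by
          refine (abs_add_three _ _ _).trans ?_
          simp only [abs_mul]
          gcongr
          exacts [hsucc k, hdiff k]
      _ = _ := by ring

end NearEndpoint

section PointwiseBounds

variable {α β : ℝ}

variable (α β) in
/-- `v (k + 1) - exp (i θ) * v k` at `x = cos θ`. For the Chebyshev recurrence
`v (k + 1) = 2 * x * v k - v (k - 1)` its absolute value does not depend on `k`. -/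
def scaledJacobiPhase (k : ℕ) (x : ℝ) : ℂ :=
  scaledJacobi α β (k + 1) x - (x + √(1 - x ^ 2) * Complex.I) * scaledJacobi α β k x

lemma scaledJacobiPhase_re (k : ℕ) (x : ℝ) :
    (scaledJacobiPhase α β k x).re = scaledJacobi α β (k + 1) x - x * scaledJacobi α β k x := by
  simp [scaledJacobiPhase]

lemma scaledJacobiPhase_im (k : ℕ) (x : ℝ) :
    (scaledJacobiPhase α β k x).im = -(√(1 - x ^ 2) * scaledJacobi α β k x) := by
  simp [scaledJacobiPhase]

lemma sqrt_mul_abs_scaledJacobi_le (k : ℕ) (x : ℝ) :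
    √(1 - x ^ 2) * |scaledJacobi α β k x| ≤ ‖scaledJacobiPhase α β k x‖ := by
  have h := Complex.abs_im_le_norm (scaledJacobiPhase α β k x)
  rwa [scaledJacobiPhase_im, abs_neg, abs_mul, abs_of_nonneg (Real.sqrt_nonneg _)] at h

lemma abs_scaledJacobi_succ_sub_le (k : ℕ) (x : ℝ) :
    |scaledJacobi α β (k + 1) x - x * scaledJacobi α β k x| ≤ ‖scaledJacobiPhase α β k x‖ := by
  rw [← scaledJacobiPhase_re]
  exact Complex.abs_re_le_norm _

lemma scaledJacobiPhase_succ (hα : -1 < α) (hβ : -1 < β) (k : ℕ) {x : ℝ} (hx : x ^ 2 ≤ 1) :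
    scaledJacobiPhase α β (k + 1) x =
      (x - √(1 - x ^ 2) * Complex.I) * scaledJacobiPhase α β k x -
        (jacobiDiag α β (k + 1) * scaledJacobi α β (k + 1) x +
          (jacobiOffDiag α β (k + 1) - 1) * scaledJacobi α β k x) := by
  have hs : ((√(1 - x ^ 2) : ℝ) : ℂ) ^ 2 = 1 - (x : ℂ) ^ 2 := by
    exact_mod_cast Real.sq_sqrt (sub_nonneg.2 hx)
  have hunit : ((x : ℂ) - √(1 - x ^ 2) * Complex.I) * (x + √(1 - x ^ 2) * Complex.I) = 1 := by
    linear_combination hs - ((√(1 - x ^ 2) : ℝ) : ℂ) ^ 2 * Complex.I_sq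
  rw [scaledJacobiPhase, scaledJacobiPhase, scaledJacobi_succ hα hβ (k + 1), Nat.add_sub_cancel]
  push_cast
  linear_combination (scaledJacobi α β k x : ℂ) * hunit

lemma norm_scaledJacobiPhase_succ_le (hα : -1 < α) (hβ : -1 < β) (k : ℕ) {x : ℝ} (hx : x ^ 2 ≤ 1) :
    ‖scaledJacobiPhase α β (k + 1) x‖ ≤ ‖scaledJacobiPhase α β k x‖ +
      (|jacobiDiag α β (k + 1)| * |scaledJacobi α β (k + 1) x| +
        |jacobiOffDiag α β (k + 1) - 1| * |scaledJacobi α β k x|) := by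
  have hunit : ‖(x : ℂ) - √(1 - x ^ 2) * Complex.I‖ = 1 := by
    rw [← sq_eq_sq₀ (norm_nonneg _) zero_le_one, ← Complex.normSq_eq_norm_sq, Complex.normSq_apply]
    have := Real.mul_self_sqrt (sub_nonneg.2 hx)
    simp only [Complex.sub_re, Complex.sub_im, Complex.ofReal_re, Complex.ofReal_im,
      Complex.re_ofReal_mul, Complex.im_ofReal_mul, Complex.I_re, Complex.I_im]
    linarith
  rw [scaledJacobiPhase_succ hα hβ k hx]
  refine (norm_sub_le _ _).trans (add_le_add (by rw [norm_mul, hunit, one_mul]) ?_)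
  rw [← Complex.ofReal_one, ← Complex.ofReal_sub, ← Complex.ofReal_mul, ← Complex.ofReal_mul,
    ← Complex.ofReal_add, Complex.norm_real, ← abs_mul, ← abs_mul]
  exact abs_add_le _ _

lemma exists_norm_scaledJacobiPhase_succ_le (hα : -1 < α) (hβ : -1 < β) :
    ∃ C, 0 < C ∧ ∀ (k : ℕ) (x : ℝ), |x| < 1 → ‖scaledJacobiPhase α β (k + 1) x‖ ≤
      (1 + C / √(1 - x ^ 2) / (k + 1) ^ 2) * ‖scaledJacobiPhase α β k x‖ := by
  obtain ⟨B, hB, hb⟩ := exists_abs_jacobiDiag_le hα hβ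
  obtain ⟨B', hB', hc⟩ := exists_abs_jacobiOffDiag_sub_one_le hα hβ
  refine ⟨2 * B + B', by positivity, fun k x hx => ?_⟩
  have hx2 : x ^ 2 < 1 := (sq_lt_one_iff_abs_lt_one x).2 hx
  refine (norm_scaledJacobiPhase_succ_le hα hβ k hx2.le).trans ?_
  have hs : 0 < √(1 - x ^ 2) := Real.sqrt_pos.2 (sub_pos.2 hx2)
  have hs1 : √(1 - x ^ 2) ≤ 1 := Real.sqrt_le_one.2 (by linarith [sq_nonneg x])
  set s := √(1 - x ^ 2)
  set N := ‖scaledJacobiPhase α β k x‖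
  have hv : |scaledJacobi α β k x| ≤ N / s := by
    rw [le_div_iff₀' hs]
    exact sqrt_mul_abs_scaledJacobi_le k x
  have hN : N ≤ N / s := le_div_self (norm_nonneg _) hs hs1
  have hvsucc : |scaledJacobi α β (k + 1) x| ≤ 2 * (N / s) := by
    have h := (abs_sub_abs_le_abs_sub _ _).trans
      (abs_scaledJacobi_succ_sub_le (α := α) (β := β) k x)
    rw [abs_mul] at h
    nlinarith [abs_nonneg (scaledJacobi α β k x)]
  have hsq {A : ℝ} (hA : 0 < A) : A / ((k + 1 : ℕ) + 1) ^ 2 ≤ A / ((k : ℝ) + 1) ^ 2 := by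
    gcongr
    linarith
  calc _ ≤ N + (B / ((k : ℝ) + 1) ^ 2 * (2 * (N / s)) + B' / ((k : ℝ) + 1) ^ 2 * (N / s)) := by
        gcongr
        · exact (hb (k + 1)).trans (hsq hB)
        · exact (hc (k + 1)).trans (hsq hB')
    _ = _ := by ring

lemma exists_norm_scaledJacobiPhase_le_of_mul_sqrt_le (hα : -1 < α) (hβ : -1 < β) :
    ∃ C, 0 < C ∧ ∀ (x : ℝ) (m : ℕ), 0 ≤ x → x ≤ 1 → m * √(1 - x ^ 2) ≤ 1 →
      1 ≤ ((m : ℝ) + 1) * √(1 - x ^ 2) →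
      ‖scaledJacobiPhase α β m x‖ ≤ C * (√(1 - x ^ 2) ^ (-(α + 1 / 2)) * √(1 - x ^ 2)) := by
  obtain ⟨B, hB, hnear⟩ := exists_abs_scaledJacobi_le_of_mul_sqrt_le hα hβ
  refine ⟨2 * B * 2 ^ |α + 1 / 2|, by positivity, fun x m hx0 hx1 hm hm' => ?_⟩
  obtain ⟨hv, hvdiff⟩ := hnear x m hx0 hx1 hm
  have hm1 : (0 : ℝ) < m + 1 := m.cast_add_one_pos
  have hs : 0 < √(1 - x ^ 2) := pos_of_mul_pos_right (one_pos.trans_le hm') hm1.le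
  have hs1 : √(1 - x ^ 2) ≤ 1 := Real.sqrt_le_one.2 (by linarith [sq_nonneg x])
  set s := √(1 - x ^ 2)
  have hinv : 1 / ((m : ℝ) + 1) ≤ s := (div_le_iff₀' hm1).2 hm'
  have hpow : ((m : ℝ) + 1) ^ (α + 1 / 2) ≤ 2 ^ |α + 1 / 2| * s ^ (-(α + 1 / 2)) := by
    rw [Real.rpow_neg hs.le, ← Real.inv_rpow hs.le, ← one_div s]
    have hle : m ≤ 1 / s := (le_div_iff₀ hs).2 hm
    have : 1 ≤ 1 / s := (one_le_div hs).2 hs1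
    have : 1 / s ≤ m + 1 := (div_le_iff₀ hs).2 hm'
    exact rpow_le_rpow_abs_mul_rpow _ hm1 (by positivity) (by linarith) (by linarith)
  refine (Complex.norm_le_abs_re_add_abs_im _).trans ?_
  rw [scaledJacobiPhase_re, scaledJacobiPhase_im, abs_neg, abs_mul, abs_of_pos hs]
  calc _ ≤ B * (((m : ℝ) + 1) ^ (α + 1 / 2) * (1 / (m + 1))) +
        s * (B * ((m : ℝ) + 1) ^ (α + 1 / 2)) := by
        gcongr
        rwa [mul_one_div]
    _ ≤ B * (2 ^ |α + 1 / 2| * s ^ (-(α + 1 / 2)) * s) +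
        s * (B * (2 ^ |α + 1 / 2| * s ^ (-(α + 1 / 2)))) := by
        gcongr
    _ = _ := by ring

lemma exists_norm_scaledJacobiPhase_le (hα : -1 < α) (hβ : -1 < β) :
    ∃ C, 0 < C ∧ ∀ (x : ℝ) (k : ℕ), 0 ≤ x → x ≤ 1 → 1 < k * √(1 - x ^ 2) →
      ‖scaledJacobiPhase α β k x‖ ≤ C * (√(1 - x ^ 2) ^ (-(α + 1 / 2)) * √(1 - x ^ 2)) := by
  obtain ⟨C, hC, hstep⟩ := exists_norm_scaledJacobiPhase_succ_le hα hβ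
  obtain ⟨B, hB, hbase⟩ := exists_norm_scaledJacobiPhase_le_of_mul_sqrt_le hα hβ
  refine ⟨Real.exp (2 * C) * B, by positivity, fun x k hx0 hx1 hk => ?_⟩
  have hs : 0 < √(1 - x ^ 2) := pos_of_mul_pos_right (one_pos.trans hk) k.cast_nonneg
  have hx : |x| < 1 := (sq_lt_one_iff_abs_lt_one x).1 (by linarith [Real.sqrt_pos.1 hs])
  obtain ⟨m, hm⟩ : ∃ m, m = ⌊1 / √(1 - x ^ 2)⌋₊ := ⟨_, rfl⟩
  have hm_le : m ≤ 1 / √(1 - x ^ 2) := hm ▸ Nat.floor_le (by positivity)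
  have hm_lt : 1 / √(1 - x ^ 2) < m + 1 := hm ▸ Nat.lt_floor_add_one _
  have hmk : m ≤ k := by
    have : 1 / √(1 - x ^ 2) < k := (div_lt_iff₀ hs).2 hk
    exact_mod_cast (hm_le.trans_lt this).le
  have hgrow := le_exp_mul_rpow_mul_of_ratio_le (e := 0) (C := C / √(1 - x ^ 2))
    (a := fun l => ‖scaledJacobiPhase α β l x‖) (by positivity)
    (fun _ _ => norm_nonneg _) (fun l _ => by simpa using hstep l x hx) hmk
  have hexp : 2 * (C / √(1 - x ^ 2) + |0|) / (m + 1) ≤ 2 * C := by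
    rw [abs_zero, add_zero, div_le_iff₀ m.cast_add_one_pos, mul_assoc, div_eq_mul_one_div C]
    gcongr
  rw [Real.rpow_zero, mul_one] at hgrow
  rw [mul_assoc]
  refine hgrow.trans ?_
  gcongr
  exact hbase x m hx0 hx1 ((le_div_iff₀ hs).1 hm_le) ((div_le_iff₀ hs).1 hm_lt.le)

/-- `n` times the scale `√(1 - x²) / n + 1 / n²` on which polynomials of degree `n` vary near the
point `x ∈ [-1, 1]`. -/
def polyScale (n : ℕ) (x : ℝ) : ℝ :=
  √(1 - x ^ 2) + 1 / n

lemma exists_scale_abs_scaledJacobi_le (hα : -1 < α) (hβ : -1 < β) :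
    ∃ C, 0 < C ∧ ∀ (x : ℝ) (k : ℕ), 0 ≤ x → x ≤ 1 →
      ∃ y, 0 < y ∧ y ≤ polyScale (k + 1) x ∧ polyScale (k + 1) x ≤ 3 * y ∧
        |scaledJacobi α β k x| ≤ C * y ^ (-(α + 1 / 2)) ∧
        |scaledJacobi α β (k + 1) x - x * scaledJacobi α β k x| ≤
          C * (y ^ (-(α + 1 / 2)) * y) := by
  simp only [polyScale, Nat.cast_add, Nat.cast_one]
  obtain ⟨A, hA, hfar⟩ := exists_norm_scaledJacobiPhase_le hα hβ
  obtain ⟨B, hB, hnear⟩ := exists_abs_scaledJacobi_le_of_mul_sqrt_le hα hβ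
  refine ⟨A + B, by positivity, fun x k hx0 hx1 => ?_⟩
  have hs0 : 0 ≤ √(1 - x ^ 2) := Real.sqrt_nonneg _
  have hs1 : √(1 - x ^ 2) ≤ 1 := Real.sqrt_le_one.2 (by linarith [sq_nonneg x])
  have hk1 : (0 : ℝ) < k + 1 := k.cast_add_one_pos
  rcases le_or_gt (k * √(1 - x ^ 2)) 1 with hk | hk
  · obtain ⟨hv, hvdiff⟩ := hnear x k hx0 hx1 hk
    have hpow : ((k : ℝ) + 1) ^ (α + 1 / 2) = (1 / ((k : ℝ) + 1)) ^ (-(α + 1 / 2)) := by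
      rw [one_div ((k : ℝ) + 1), Real.inv_rpow hk1.le, ← Real.rpow_neg hk1.le, neg_neg]
    rw [hpow] at hv hvdiff
    rw [div_eq_mul_one_div _ ((k : ℝ) + 1)] at hvdiff
    refine ⟨1 / (k + 1), by positivity, le_add_of_nonneg_left hs0, ?_, hv.trans ?_,
      hvdiff.trans ?_⟩
    · have : √(1 - x ^ 2) ≤ 2 * (1 / (k + 1)) := by
        rw [mul_one_div, le_div_iff₀ hk1]
        linarith
      linarith
    all_goals gcongr; linarith
  · have hs : 0 < √(1 - x ^ 2) := pos_of_mul_pos_right (one_pos.trans hk) k.cast_nonneg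
    have hphase := hfar x k hx0 hx1 hk
    have hv := (sqrt_mul_abs_scaledJacobi_le k x).trans hphase
    rw [← mul_assoc, mul_comm, mul_le_mul_iff_left₀ hs] at hv
    refine ⟨√(1 - x ^ 2), hs, le_add_of_nonneg_right (by positivity), ?_, hv.trans ?_,
      ((abs_scaledJacobi_succ_sub_le k x).trans hphase).trans ?_⟩
    · have : 1 / ((k : ℝ) + 1) ≤ √(1 - x ^ 2) := by
        rw [div_le_iff₀ hk1]
        linarith
      linarith
    all_goals gcongr; linarith

lemma exists_abs_scaledJacobi_le (hα : -1 < α) (hβ : -1 < β) :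
    ∃ C, 0 < C ∧ ∀ (x : ℝ) (k : ℕ), 0 ≤ x → x ≤ 1 →
      |scaledJacobi α β k x| ≤ C * polyScale (k + 1) x ^ (-(α + 1 / 2)) ∧
      |scaledJacobi α β (k + 1) x - x * scaledJacobi α β k x| ≤
        C * (polyScale (k + 1) x ^ (-(α + 1 / 2)) * polyScale (k + 1) x) := by
  obtain ⟨C, hC, hscale⟩ := exists_scale_abs_scaledJacobi_le hα hβ
  refine ⟨C * 3 ^ |-(α + 1 / 2)|, by positivity, fun x k hx0 hx1 => ?_⟩
  obtain ⟨y, hy, hyT, hTy, hv, hvdiff⟩ := hscale x k hx0 hx1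
  have hT := hy.trans_le hyT
  have hpow := rpow_le_rpow_abs_mul_rpow (-(α + 1 / 2)) hy hT (M := 3) (by linarith) hTy
  constructor
  · refine hv.trans ?_
    rw [mul_assoc]
    gcongr
  · refine hvdiff.trans ?_
    rw [mul_assoc, ← mul_assoc (3 ^ |-(α + 1 / 2)|)]
    gcongr

end PointwiseBounds

/-! ### Moments of the kernel -/

section Moments

variable {α β : ℝ} {η : ℝ → ℝ}

lemma polyScale_pos {n : ℕ} (hn : 1 ≤ n) (x : ℝ) : 0 < polyScale n x :=
  add_pos_of_nonneg_of_pos (Real.sqrt_nonneg _) (by positivity)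

lemma sqrt_one_sub_sq_le_polyScale (n : ℕ) (x : ℝ) : √(1 - x ^ 2) ≤ polyScale n x :=
  le_add_of_nonneg_right (by positivity)

lemma one_le_polyScale_mul {n : ℕ} (hn : 1 ≤ n) (x : ℝ) : 1 ≤ polyScale n x * n := by
  have hn0 : (0 : ℝ) < n := by exact_mod_cast hn
  rw [polyScale, add_mul, one_div_mul_cancel hn0.ne']
  exact le_add_of_nonneg_left (by positivity)

lemma one_sub_sq_le_polyScale_sq (n : ℕ) (x : ℝ) : 1 - x ^ 2 ≤ polyScale n x ^ 2 :=
  Real.sqrt_le_left (add_nonneg (Real.sqrt_nonneg _) (by positivity)) |>.1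
    (sqrt_one_sub_sq_le_polyScale n x)

lemma polyScale_le_mul_polyScale {m n : ℕ} {M : ℝ} (hn : 1 ≤ n) (hM : 1 ≤ M) (h : n ≤ M * m)
    (x : ℝ) : polyScale m x ≤ M * polyScale n x := by
  have hn0 : (0 : ℝ) < n := by exact_mod_cast hn
  have hm0 : (0 : ℝ) < m := pos_of_mul_pos_right (hn0.trans_le h) (by linarith)
  rw [polyScale, polyScale, mul_add]
  gcongr
  · exact le_mul_of_one_le_left (Real.sqrt_nonneg _) hM
  · rwa [mul_one_div, div_le_div_iff₀ hm0 hn0, one_mul]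

lemma exists_abs_jacobiMatrixSub_iterate_le_of_le {ι : Type*} {n : ι → ℕ} {x : ι → ℝ}
    (hα : -1 < α) (hβ : -1 < β) (hη : Admissible η) (j : ℕ) (hn : ∀ i, 4 ≤ n i)
    (hj : ∀ i, 4 * j ≤ n i) (hx : ∀ i, |x i| ≤ 1) :
    ∃ C, 0 ≤ C ∧ ∀ i k, n i - 2 * j ≤ k →
      |(jacobiMatrixSub (jacobiDiag α β) (jacobiOffDiag α β) (x i))^[j]
          (fun k => η (k / n i) * scaledJacobi α β k (x i)) (k + j)| ≤
        C * (polyScale (n i) (x i) / n i) ^ j * (|scaledJacobi α β (k + j) (x i)| +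
          |scaledJacobi α β (k + j + 1) (x i) - x i * scaledJacobi α β (k + j) (x i)| /
            polyScale (n i) (x i)) := by
  have hn1 (i : ι) : 1 ≤ n i := (by norm_num : 1 ≤ 4).trans (hn i)
  have hN (i : ι) : (1 : ℝ) ≤ n i := by exact_mod_cast hn1 i
  have hd (i : ι) : 2 ≤ n i - 2 * j := by
    have := hn i
    have := hj i
    omega
  have hdN (i : ι) : 1 / 2 * (n i : ℝ) ≤ (n i - 2 * j : ℕ) := by
    have := hj i
    have : (n i : ℝ) ≤ 2 * (n i - 2 * j : ℕ) := by
      exact_mod_cast (by omega : n i ≤ 2 * (n i - 2 * j))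
    linarith
  have hηsymb : IsSymbol (fun i => (n i : ℝ)) (fun i => n i - 2 * j) (fun _ => 1)
      fun i k => η (k / n i) :=
    .of_contDiff (fun i => one_pos.trans_le (hN i)) (fun _ => hη.1) fun l => by
      obtain ⟨C, hC, h⟩ := hη.exists_abs_iteratedDeriv_le l
      exact ⟨C, hC, fun _ t ht => (h t ht).trans_eq (mul_one C).symm⟩
  obtain ⟨f, g, hf, hg, hfg⟩ := exists_symbol_jacobiMatrixSub_iterate
    (σ := fun i => polyScale (n i) (x i)) (v := fun i k => scaledJacobi α β k (x i)) hN
    (fun i => one_le_polyScale_mul (hn1 i) _) hx (fun _ => one_sub_sq_le_polyScale_sq _ _)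
    (isSymbol_jacobiDiag hN hd one_half_pos hdN hα hβ)
    (isSymbol_jacobiOffDiag_sub_one hN hd one_half_pos hdN hα hβ)
    (fun i k => scaledJacobi_succ hα hβ (k + 1) _) hηsymb j
  obtain ⟨A, hA, hf⟩ := hf.tailBounded
  obtain ⟨B, hB, hg⟩ := hg.tailBounded
  refine ⟨A + B, by positivity, fun i k hk => ?_⟩
  have hσ := polyScale_pos (hn1 i) (x i)
  rw [hfg i k hk]
  refine (abs_add_le _ _).trans ?_
  rw [abs_mul, abs_mul, mul_add, mul_div_assoc', mul_div_right_comm, mul_div_assoc (A + B)]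
  gcongr
  · exact (hf i k hk).trans (by gcongr; exact le_add_of_nonneg_right hB)
  · exact (hg i k hk).trans (by gcongr; exact le_add_of_nonneg_left hA)

lemma exists_abs_jacobiMatrixSub_iterate_le (hα : -1 < α) (hβ : -1 < β) (hη : Admissible η)
    (j : ℕ) :
    ∃ C, 0 ≤ C ∧ ∀ (n : ℕ) (x : ℝ) (k : ℕ), 4 * (j + 1) ≤ n → 0 ≤ x → x ≤ 1 → k + 1 ≤ 3 * n →
      |(jacobiMatrixSub (jacobiDiag α β) (jacobiOffDiag α β) x)^[j + 1]
          (fun k => η (k / n) * scaledJacobi α β k x) k| ≤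
        C * ((polyScale n x / n) ^ (j + 1) * polyScale n x ^ (-(α + 1 / 2))) := by
  let ι := {p : ℕ × ℝ // 4 * (j + 1) ≤ p.1 ∧ 0 ≤ p.2 ∧ p.2 ≤ 1}
  obtain ⟨A, hA, htail⟩ := exists_abs_jacobiMatrixSub_iterate_le_of_le (ι := ι)
    (n := fun p => p.1.1) (x := fun p => p.1.2) hα hβ hη (j + 1) (fun p => by linarith [p.2.1])
    (fun p => p.2.1) fun p => abs_le.2 ⟨by linarith [p.2.2.1], p.2.2.2⟩
  obtain ⟨B, hB, hpt⟩ := exists_abs_scaledJacobi_le hα hβ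
  set e := -(α + 1 / 2)
  refine ⟨A * (3 * B * 3 ^ |e|), by positivity, fun n x k hn hx0 hx1 hk => ?_⟩
  have hσ := polyScale_pos (show 1 ≤ n by omega) x
  set σ := polyScale n x
  rcases le_or_gt (k + (j + 1)) n with hkn | hkn
  · rw [jacobiMatrixSub_iterate_scaledJacobi_eq_zero hα hβ (m := n) (fun l hl => ?_) j hkn,
      abs_zero]
    · positivity
    · rw [hη.2.1 _ (by positivity) (div_le_one_of_le₀ (by exact_mod_cast hl) n.cast_nonneg),
        one_mul]
  obtain ⟨l, rfl⟩ : ∃ l, k = l + (j + 1) := ⟨k - (j + 1), by omega⟩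
  refine (htail ⟨(n, x), hn, hx0, hx1⟩ l (by dsimp only; omega)).trans ?_
  obtain ⟨hv, hvdiff⟩ := hpt x (l + (j + 1)) hx0 hx1
  have hτ := polyScale_pos (show 1 ≤ l + (j + 1) + 1 by omega) x
  have hτσ : polyScale (l + (j + 1) + 1) x ≤ 2 * σ :=
    polyScale_le_mul_polyScale (by omega) one_le_two
      (by exact_mod_cast (by omega : n ≤ 2 * (l + (j + 1) + 1))) x
  have hστ : σ ≤ 3 * polyScale (l + (j + 1) + 1) x :=
    polyScale_le_mul_polyScale (by omega) (by norm_num) (by exact_mod_cast hk) x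
  set τ := polyScale (l + (j + 1) + 1) x
  have hpow : τ ^ e ≤ 3 ^ |e| * σ ^ e :=
    rpow_le_rpow_abs_mul_rpow e hτ hσ (by linarith) hστ
  calc _ ≤ A * (σ / n) ^ (j + 1) * (B * (3 ^ |e| * σ ^ e) +
          B * (3 ^ |e| * σ ^ e * (2 * σ)) / σ) := by
        gcongr
        · exact hv.trans (by gcongr)
        · exact hvdiff.trans (by gcongr)
    _ = _ := by
        field_simp
        ring

lemma exists_integral_sub_pow_succ_mul_kernel_sq_le (hα : -1 < α) (hβ : -1 < β)
    (hη : Admissible η) (j : ℕ) :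
    ∃ C, 0 ≤ C ∧ ∀ (n : ℕ) (x : ℝ), 4 * (j + 1) ≤ n → 0 ≤ x → x ≤ 1 →
      ∫ y, ((y - x) ^ (j + 1) * valleePoussinKernel α β η n x y) ^ 2 ∂jacobiMeasure α β ≤
        C * (n * ((polyScale n x / n) ^ (j + 1) * polyScale n x ^ (-(α + 1 / 2))) ^ 2) := by
  obtain ⟨C, _, hcoeff⟩ := exists_abs_jacobiMatrixSub_iterate_le hα hβ hη j
  obtain ⟨c, hc, hnorm⟩ := exists_scaledJacobiNormSq_ge hα hβ
  refine ⟨3 * (C ^ 2 / c), by positivity, fun n x hn hx0 hx1 => ?_⟩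
  set B := (polyScale n x / n) ^ (j + 1) * polyScale n x ^ (-(α + 1 / 2))
  rw [integral_sub_pow_mul_valleePoussinKernel_sq hα hβ hη (by omega)]
  have hterm (k : ℕ) (hk : k ∈ Finset.range (2 * n + 1 + (j + 1))) :
      ((jacobiMatrixSub (jacobiDiag α β) (jacobiOffDiag α β) x)^[j + 1]
        (fun k => η (k / n) * scaledJacobi α β k x) k) ^ 2 / scaledJacobiNormSq α β k ≤
          (C * B) ^ 2 / c := by
    have hk := Finset.mem_range.1 hk
    rw [← sq_abs]
    gcongr
    · exact hcoeff n x k hn hx0 hx1 (by omega)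
    · exact hnorm k
  calc _ ≤ (2 * n + 1 + (j + 1) : ℕ) * ((C * B) ^ 2 / c) := by
        simpa using Finset.sum_le_sum hterm
    _ ≤ (3 * n : ℕ) * ((C * B) ^ 2 / c) := by
        gcongr
        omega
    _ = _ := by
        push_cast
        ring

lemma sum_range_rpow_neg_le {a : ℝ} (ha0 : 0 ≤ a) (ha : a < 1) (m : ℕ) :
    ∑ k ∈ Finset.range m, ((k : ℝ) + 1) ^ (-a) ≤ (m : ℝ) ^ (1 - a) / (1 - a) := by
  have h1a : 0 < 1 - a := sub_pos.2 ha
  induction m with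
  | zero => simp [Real.zero_rpow h1a.ne']
  | succ m ih =>
    have hm : (0 : ℝ) < m + 1 := m.cast_add_one_pos
    have hinv : 1 / ((m : ℝ) + 1) ≤ 1 := (div_le_one hm).2 (by simp)
    have hbern := _root_.rpow_one_add_le_one_add_mul_self (s := -(1 / ((m : ℝ) + 1)))
      (neg_le_neg hinv) h1a.le (by linarith)
    have hfactor : (m : ℝ) ^ (1 - a) =
        ((m : ℝ) + 1) ^ (1 - a) * (1 + -(1 / ((m : ℝ) + 1))) ^ (1 - a) := by
      rw [← Real.mul_rpow hm.le (by linarith)]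
      congr 1
      field_simp
      ring
    have hsplit : ((m : ℝ) + 1) ^ (1 - a) = ((m : ℝ) + 1) ^ (-a) * (m + 1) := by
      rw [sub_eq_neg_add, Real.rpow_add hm, Real.rpow_one]
    rw [Finset.sum_range_succ]
    refine (add_le_add_left ih _).trans ?_
    rw [div_add' _ _ _ h1a.ne', Nat.cast_succ, hfactor]
    gcongr
    calc _ ≤ ((m : ℝ) + 1) ^ (1 - a) * (1 + (1 - a) * -(1 / ((m : ℝ) + 1))) +
          ((m : ℝ) + 1) ^ (-a) * (1 - a) := by gcongr
      _ = _ := by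
        rw [hsplit]
        field_simp
        ring

lemma sum_polyScale_rpow_le_of_nonpos {a : ℝ} (ha : a ≤ 0) {n : ℕ} (hn : 1 ≤ n) (x : ℝ) :
    ∑ k ∈ Finset.range (2 * n + 1), polyScale (k + 1) x ^ a ≤
      3 * 3 ^ (-a) * (n * polyScale n x ^ a) := by
  have hσ := polyScale_pos hn x
  have hterm (k : ℕ) (hk : k ∈ Finset.range (2 * n + 1)) :
      polyScale (k + 1) x ^ a ≤ 3 ^ (-a) * polyScale n x ^ a := by
    have hk := Finset.mem_range.1 hk
    have hle : polyScale n x ≤ 3 * polyScale (k + 1) x :=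
      polyScale_le_mul_polyScale k.succ_pos (by norm_num)
        (by exact_mod_cast (by omega : k + 1 ≤ 3 * n)) x
    have hpow := Real.rpow_le_rpow_of_nonpos hσ hle ha
    rw [Real.mul_rpow (by norm_num) (polyScale_pos k.succ_pos x).le] at hpow
    rwa [Real.rpow_neg (by norm_num), ← div_eq_inv_mul, le_div_iff₀' (by positivity)]
  calc _ ≤ (2 * n + 1 : ℕ) * (3 ^ (-a) * polyScale n x ^ a) := by
        simpa using Finset.sum_le_sum hterm
    _ ≤ (3 * n : ℕ) * (3 ^ (-a) * polyScale n x ^ a) := by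
        gcongr
        omega
    _ = _ := by
        push_cast
        ring

lemma sum_polyScale_rpow_le_of_nonneg {a : ℝ} (ha0 : 0 ≤ a) (ha : a < 1) {n : ℕ} (hn : 1 ≤ n)
    (x : ℝ) :
    ∑ k ∈ Finset.range (2 * n + 1), polyScale (k + 1) x ^ a ≤
      3 / (1 - a) * (n * polyScale n x ^ a) := by
  have : 0 < 1 - a := sub_pos.2 ha
  have hσ := polyScale_pos hn x
  have hn3 : (0 : ℝ) < 3 * n := by positivity
  have hterm (k : ℕ) (hk : k ∈ Finset.range (2 * n + 1)) :
      polyScale (k + 1) x ^ a ≤ (3 * n) ^ a * polyScale n x ^ a * ((k : ℝ) + 1) ^ (-a) := by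
    have hk := Finset.mem_range.1 hk
    have hk1 : (0 : ℝ) < (k + 1 : ℕ) := by positivity
    have hle : polyScale (k + 1) x ≤ 3 * n / (k + 1 : ℕ) * polyScale n x :=
      polyScale_le_mul_polyScale hn
        ((one_le_div hk1).2 (by exact_mod_cast (by omega : k + 1 ≤ 3 * n)))
        (by rw [div_mul_cancel₀ _ hk1.ne']; linarith) x
    refine (Real.rpow_le_rpow (polyScale_pos k.succ_pos x).le hle ha0).trans_eq ?_
    rw [Real.mul_rpow (by positivity) hσ.le, Real.div_rpow hn3.le hk1.le,
      Real.rpow_neg (by positivity), Nat.cast_succ]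
    ring
  calc _ ≤ (3 * n) ^ a * polyScale n x ^ a *
        ∑ k ∈ Finset.range (2 * n + 1), ((k : ℝ) + 1) ^ (-a) := by
        rw [Finset.mul_sum]
        exact Finset.sum_le_sum hterm
    _ ≤ (3 * n) ^ a * polyScale n x ^ a * ((3 * n) ^ (1 - a) / (1 - a)) := by
        gcongr
        refine (sum_range_rpow_neg_le ha0 ha _).trans ?_
        gcongr
        exact_mod_cast (by omega : 2 * n + 1 ≤ 3 * n)
    _ = (3 * n) ^ (a + (1 - a)) * polyScale n x ^ a / (1 - a) := by
        rw [Real.rpow_add hn3]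
        ring
    _ = _ := by
        rw [add_sub_cancel, Real.rpow_one]
        ring

lemma exists_sum_polyScale_rpow_le {a : ℝ} (ha : a < 1) :
    ∃ C, 0 ≤ C ∧ ∀ (n : ℕ) (x : ℝ), 1 ≤ n →
      ∑ k ∈ Finset.range (2 * n + 1), polyScale (k + 1) x ^ a ≤ C * (n * polyScale n x ^ a) := by
  have : 0 < 1 - a := sub_pos.2 ha
  rcases le_total a 0 with ha0 | ha0
  · exact ⟨3 * 3 ^ (-a), by positivity, fun _ x hn => sum_polyScale_rpow_le_of_nonpos ha0 hn x⟩
  · exact ⟨3 / (1 - a), by positivity, fun _ x hn => sum_polyScale_rpow_le_of_nonneg ha0 ha hn x⟩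

lemma exists_integral_kernel_sq_le (hα : -1 < α) (hβ : -1 < β) (hη : Admissible η) :
    ∃ C, 0 ≤ C ∧ ∀ (n : ℕ) (x : ℝ), 1 ≤ n → 0 ≤ x → x ≤ 1 →
      ∫ y, valleePoussinKernel α β η n x y ^ 2 ∂jacobiMeasure α β ≤
        C * (n * (polyScale n x ^ (-(α + 1 / 2))) ^ 2) := by
  obtain ⟨A, hA, hηA⟩ := hη.exists_abs_iteratedDeriv_le 0
  obtain ⟨B, _, hpt⟩ := exists_abs_scaledJacobi_le hα hβ
  obtain ⟨c, hc, hnorm⟩ := exists_scaledJacobiNormSq_ge hα hβ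
  obtain ⟨D, hD, hsum⟩ := exists_sum_polyScale_rpow_le (a := -(α + 1 / 2) * 2) (by linarith)
  have hsq {m : ℕ} (hm : 1 ≤ m) (x : ℝ) :
      (polyScale m x ^ (-(α + 1 / 2))) ^ 2 = polyScale m x ^ (-(α + 1 / 2) * 2) := by
    rw [← Real.rpow_mul_natCast (polyScale_pos hm x).le, Nat.cast_ofNat]
  refine ⟨(A * B) ^ 2 / c * D, by positivity, fun n x hn hx0 hx1 => ?_⟩
  have hmoment := integral_sub_pow_mul_valleePoussinKernel_sq hα hβ hη hn x 0
  simp only [pow_zero, one_mul, Function.iterate_zero, id, add_zero] at hmoment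
  rw [hmoment, hsq hn, mul_assoc]
  have hterm (k : ℕ) : (η (k / n) * scaledJacobi α β k x) ^ 2 / scaledJacobiNormSq α β k ≤
      (A * B) ^ 2 / c * polyScale (k + 1) x ^ (-(α + 1 / 2) * 2) := by
    rw [← hsq k.succ_pos, ← sq_abs, abs_mul]
    calc _ ≤ (A * (B * polyScale (k + 1) x ^ (-(α + 1 / 2)))) ^ 2 / c := by
          gcongr
          · simpa using hηA (k / n) (by positivity)
          · exact (hpt x k hx0 hx1).1
          · exact hnorm k
      _ = _ := by ring
  refine (Finset.sum_le_sum fun k _ => hterm k).trans ?_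
  rw [← Finset.mul_sum]
  gcongr
  exact hsum n x hn

theorem exists_integral_sub_pow_mul_kernel_sq_le (hα : -1 < α) (hβ : -1 < β) (hη : Admissible η)
    (j : ℕ) :
    ∃ C, 0 ≤ C ∧ ∀ (n : ℕ) (x : ℝ), 1 ≤ n → 4 * j ≤ n → 0 ≤ x → x ≤ 1 →
      ∫ y, ((y - x) ^ j * valleePoussinKernel α β η n x y) ^ 2 ∂jacobiMeasure α β ≤
        C * (n * ((polyScale n x / n) ^ j * polyScale n x ^ (-(α + 1 / 2))) ^ 2) := by
  cases j with
  | zero =>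
    obtain ⟨C, hC, h⟩ := exists_integral_kernel_sq_le hα hβ hη
    exact ⟨C, hC, fun n x hn _ hx0 hx1 => by simpa using h n x hn hx0 hx1⟩
  | succ j =>
    obtain ⟨C, hC, h⟩ := exists_integral_sub_pow_succ_mul_kernel_sq_le hα hβ hη j
    exact ⟨C, hC, fun n x _ hn hx0 hx1 => h n x hn hx0 hx1⟩

end Moments

/-! ### The localisation integral -/

section Localisation

variable {α β : ℝ}

lemma one_add_abs_rpow_div_le {a : ℝ} {m : ℕ} (hm : |a| + 2 ≤ 2 * m) (z : ℝ) :
    (1 + |z|) ^ |a| / (1 + z ^ (2 * m)) ≤ 2 ^ (2 * m) * (1 + z ^ 2)⁻¹ := by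
  have hm1 : 1 ≤ m := by
    have : (0 : ℝ) < m := by linarith [abs_nonneg a]
    exact_mod_cast this
  have hz := abs_nonneg z
  rw [← div_eq_mul_inv, ← (even_two_mul m).pow_abs, ← sq_abs,
    div_le_div_iff₀ (by positivity) (by positivity)]
  have hexp : (1 + |z|) ^ |a| ≤ (1 + |z|) ^ (2 * m - 2) := by
    rw [← Real.rpow_natCast]
    refine Real.rpow_le_rpow_of_exponent_le (by linarith) ?_
    rw [Nat.cast_sub (by omega)]
    push_cast
    linarith
  calc _ ≤ (1 + |z|) ^ (2 * m - 2) * (1 + |z|) ^ 2 := by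
        gcongr
        linarith
    _ = (1 + |z|) ^ (2 * m) := by rw [← pow_add, Nat.sub_add_cancel (by omega)]
    _ ≤ 2 ^ (2 * m - 1) * (1 ^ (2 * m) + |z| ^ (2 * m)) := add_pow_le zero_le_one hz _
    _ ≤ 2 ^ (2 * m) * (1 + |z| ^ (2 * m)) := by
        rw [one_pow]
        gcongr
        · exact one_le_two
        · omega

lemma rpow_le_mul_one_add_rpow {a S t u : ℝ} (hS : 0 < S) (hu : 0 ≤ u) (ht : S / 16 ≤ t)
    (htS : t ≤ S * (1 + u)) : t ^ a ≤ 16 ^ |a| * S ^ a * (1 + u) ^ |a| := by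
  have ht0 : 0 < t := lt_of_lt_of_le (by positivity) ht
  rcases le_total 0 a with ha | ha
  · rw [abs_of_nonneg ha, mul_assoc, ← Real.mul_rpow hS.le (by linarith)]
    exact (Real.rpow_le_rpow ht0.le htS ha).trans
      (le_mul_of_one_le_left (by positivity) (Real.one_le_rpow (by norm_num) ha))
  · have hpow : t ^ a ≤ 16 ^ |a| * S ^ a := by
      refine (Real.rpow_le_rpow_of_nonpos (by positivity) ht ha).trans_eq ?_
      rw [Real.div_rpow hS.le (by norm_num), abs_of_nonpos ha, Real.rpow_neg (by norm_num)]
      field_simp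
    exact hpow.trans (le_mul_of_one_le_right (by positivity)
      (Real.one_le_rpow (by linarith) (abs_nonneg _)))

lemma one_div_one_add_pow_le {S L t t₀ : ℝ} {m : ℕ} (hm : 1 ≤ m) (hS : 0 < S) (hL : 0 < L)
    (h : S / 8 ≤ t₀ ∨ S / 2 ≤ L) (ht : t < S / 16) :
    1 / (1 + ((t - t₀) / L) ^ (2 * m)) ≤ 16 * L / S := by
  have hpow : 0 ≤ ((t - t₀) / L) ^ (2 * m) := (even_two_mul m).pow_nonneg _
  rw [div_le_div_iff₀ (by linarith) hS, one_mul]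
  rcases h with h | h
  · have hfar : S ≤ 16 * L * |(t - t₀) / L| := by
      rw [abs_div, abs_of_pos hL, mul_assoc, mul_div_cancel₀ _ hL.ne', abs_sub_comm]
      linarith [le_abs_self (t₀ - t)]
    have hself : |(t - t₀) / L| ≤ 1 + ((t - t₀) / L) ^ (2 * m) := by
      rw [← (even_two_mul m).pow_abs] at hpow ⊢
      rcases le_total |(t - t₀) / L| 1 with hz | hz
      · linarith
      · linarith [le_self_pow₀ hz (by omega : 2 * m ≠ 0)]
    exact hfar.trans (by gcongr)
  · nlinarith

lemma rpow_div_one_add_pow_le {a S L t t₀ : ℝ} {m : ℕ} (hm : |a| + 2 ≤ 2 * m) (hL : 0 < L)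
    (hLS : L ≤ S) (ht : 0 < t) (ht₀ : t₀ ≤ S) (h : S / 8 ≤ t₀ ∨ S / 2 ≤ L) :
    t ^ a / (1 + ((t - t₀) / L) ^ (2 * m)) ≤
      16 ^ |a| * 2 ^ (2 * m) * S ^ a * (1 + ((t - t₀) / L) ^ 2)⁻¹ +
        16 * L / S * (Ioo 0 (S / 16)).indicator (fun t => t ^ a) t := by
  have hS : 0 < S := hL.trans_le hLS
  have hD : 0 < 1 + ((t - t₀) / L) ^ (2 * m) :=
    add_pos_of_pos_of_nonneg one_pos ((even_two_mul m).pow_nonneg _)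
  rcases le_or_gt (S / 16) t with hts | hts
  · have htS : t ≤ S * (1 + |(t - t₀) / L|) := by
      have : t - t₀ ≤ L * |(t - t₀) / L| := by
        rw [abs_div, abs_of_pos hL, mul_div_cancel₀ _ hL.ne']
        exact le_abs_self _
      nlinarith [abs_nonneg ((t - t₀) / L)]
    have hnum := rpow_le_mul_one_add_rpow (a := a) hS (abs_nonneg _) hts htS
    rw [indicator_of_notMem fun h => hts.not_gt h.2, mul_zero, add_zero]
    calc _ ≤ 16 ^ |a| * S ^ a * ((1 + |(t - t₀) / L|) ^ |a| / (1 + ((t - t₀) / L) ^ (2 * m))) := by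
          rw [mul_div_assoc']
          gcongr
      _ ≤ 16 ^ |a| * S ^ a * (2 ^ (2 * m) * (1 + ((t - t₀) / L) ^ 2)⁻¹) := by
          gcongr
          exact one_add_abs_rpow_div_le hm _
      _ = _ := by ring
  · have hm1 : 1 ≤ m := by
      have : (0 : ℝ) < m := by linarith [abs_nonneg a]
      exact_mod_cast this
    rw [indicator_of_mem (show t ∈ Ioo 0 (S / 16) from ⟨ht, hts⟩), div_eq_mul_one_div, mul_comm]
    refine le_add_of_nonneg_of_le (by positivity) ?_
    exact mul_le_mul_of_nonneg_right (one_div_one_add_pow_le hm1 hS hL h hts) (by positivity)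

lemma integrable_indicator_Ioo_rpow {a : ℝ} (ha : -1 < a) {S : ℝ} (hS : 0 ≤ S) :
    Integrable ((Ioo 0 S).indicator fun t : ℝ => t ^ a) := by
  rw [integrable_indicator_iff measurableSet_Ioo, ← integrableOn_Ioc_iff_integrableOn_Ioo,
    ← intervalIntegrable_iff_integrableOn_Ioc_of_le hS]
  exact intervalIntegral.intervalIntegrable_rpow' ha

lemma integral_indicator_Ioo_rpow {a : ℝ} (ha : -1 < a) {S : ℝ} (hS : 0 ≤ S) :
    ∫ t, (Ioo 0 S).indicator (fun t : ℝ => t ^ a) t = S ^ (a + 1) / (a + 1) := by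
  rw [integral_indicator measurableSet_Ioo, ← integral_Ioc_eq_integral_Ioo,
    ← intervalIntegral.integral_of_le hS, integral_rpow (.inl ha),
    Real.zero_rpow (by linarith), sub_zero]

lemma integrable_inv_one_add_sub_div_sq (x : ℝ) {L : ℝ} (hL : L ≠ 0) :
    Integrable fun y => (1 + ((y - x) / L) ^ 2)⁻¹ :=
  (integrable_inv_one_add_sq.comp_div hL).comp_sub_right x

lemma integral_inv_one_add_sub_div_sq (x L : ℝ) :
    ∫ y, (1 + ((y - x) / L) ^ 2)⁻¹ = |L| * Real.pi := by
  rw [integral_sub_right_eq_self (fun y : ℝ => (1 + (y / L) ^ 2)⁻¹) x,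
    Measure.integral_comp_div (fun y : ℝ => (1 + y ^ 2)⁻¹) L, integral_univ_inv_one_add_sq,
    smul_eq_mul]

lemma polyScale_le_two {n : ℕ} (hn : 1 ≤ n) (x : ℝ) : polyScale n x ≤ 2 := by
  have hsqrt : √(1 - x ^ 2) ≤ 1 := Real.sqrt_le_one.2 (by nlinarith)
  have hinv : 1 / (n : ℝ) ≤ 1 := div_le_one_of_le₀ (by exact_mod_cast hn) (by positivity)
  rw [polyScale]
  linarith

lemma polyScale_div_le_sq {n : ℕ} (hn : 1 ≤ n) (x : ℝ) : polyScale n x / n ≤ polyScale n x ^ 2 := by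
  have hσ := polyScale_pos hn x
  rw [div_le_iff₀ (by exact_mod_cast hn), sq, mul_assoc]
  exact le_mul_of_one_le_right hσ.le (one_le_polyScale_mul hn x)

lemma one_sub_le_polyScale_sq (n : ℕ) {x : ℝ} (hx₀ : 0 ≤ x) (hx₁ : x ≤ 1) :
    1 - x ≤ polyScale n x ^ 2 := by
  nlinarith [one_sub_sq_le_polyScale_sq n x]

lemma polyScale_sq_le_or {n : ℕ} (hn : 1 ≤ n) {x : ℝ} (hx₀ : 0 ≤ x) (hx₁ : x ≤ 1) :
    polyScale n x ^ 2 / 8 ≤ 1 - x ∨ polyScale n x ^ 2 / 2 ≤ polyScale n x / n := by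
  have hσ := polyScale_pos hn x
  rcases le_or_gt (polyScale n x / 2) √(1 - x ^ 2) with h | h
  · left
    have := (Real.le_sqrt' (by positivity)).1 h
    nlinarith
  · right
    have hinv : polyScale n x / 2 < 1 / n := by
      rw [polyScale] at h ⊢
      linarith
    rw [div_eq_mul_one_div (polyScale n x) (n : ℝ)]
    nlinarith

lemma rpow_le_two_rpow_abs {a t : ℝ} (h₁ : 1 / 2 ≤ t) (h₂ : t ≤ 2) : t ^ a ≤ 2 ^ |a| := by
  simpa using rpow_le_rpow_abs_mul_rpow a (by linarith) one_pos (by linarith) (by linarith)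

lemma one_div_one_add_pow_le_mul_pow {x y L : ℝ} (m : ℕ) (hL : 0 < L) (hxy : 1 / 2 ≤ x - y) :
    1 / (1 + ((y - x) / L) ^ (2 * m)) ≤ (2 * L) ^ (2 * m) := by
  have hinv : 1 / (2 * L) ≤ |(y - x) / L| := by
    rw [abs_div, abs_of_pos hL, div_le_div_iff₀ (by positivity) hL, abs_sub_comm,
      abs_of_nonneg (by linarith)]
    nlinarith
  rw [← (even_two_mul m).pow_abs, div_le_iff₀ (by positivity)]
  calc (1 : ℝ) = (2 * L) ^ (2 * m) * (1 / (2 * L)) ^ (2 * m) := by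
        rw [← mul_pow, mul_one_div_cancel (by positivity), one_pow]
    _ ≤ (2 * L) ^ (2 * m) * (1 + |(y - x) / L| ^ (2 * m)) := by
        gcongr
        exact (pow_le_pow_left₀ (by positivity) hinv _).trans (by linarith)

lemma one_div_one_add_pow_mul_w_le {S L x y : ℝ} {m : ℕ} (hm : |α| + 2 ≤ 2 * m) (hL : 0 < L)
    (hLS : L ≤ S) (hx₀ : 0 ≤ x) (hxS : 1 - x ≤ S) (h : S / 8 ≤ 1 - x ∨ S / 2 ≤ L)
    (hy : y ∈ Ioo (-1) 1) :
    1 / (1 + ((y - x) / L) ^ (2 * m)) * w α β y ≤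
      2 ^ |β| * (16 ^ |α| * 2 ^ (2 * m) * S ^ α * (1 + ((y - x) / L) ^ 2)⁻¹ +
        16 * L / S * (Ioo 0 (S / 16)).indicator (fun t => t ^ α) (1 - y)) +
      (2 * L) ^ (2 * m) * w α β y := by
  have hS : 0 < S := hL.trans_le hLS
  have hw := w_pos (α := α) (β := β) hy
  have hy₁ : 0 < 1 - y := by linarith [hy.2]
  have : 0 < 1 + y := by linarith [hy.1]
  have hD : 0 ≤ ((y - x) / L) ^ (2 * m) := (even_two_mul m).pow_nonneg _
  have hind : 0 ≤ (Ioo 0 (S / 16)).indicator (fun t : ℝ => t ^ α) (1 - y) :=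
    indicator_nonneg (fun t ht => Real.rpow_nonneg ht.1.le _) _
  rcases le_total (-1 / 2) y with hyh | hyh
  · refine le_add_of_le_of_nonneg ?_ (by positivity)
    have hmain := rpow_div_one_add_pow_le hm hL hLS hy₁ hxS h
    have hdiv : (1 - y - (1 - x)) / L = -((y - x) / L) := by ring
    rw [hdiv, (even_two_mul m).neg_pow, neg_sq] at hmain
    calc _ = (1 + y) ^ β * ((1 - y) ^ α / (1 + ((y - x) / L) ^ (2 * m))) := by
          rw [w]
          ring
      _ ≤ _ := by
          gcongr
          exact rpow_le_two_rpow_abs (by linarith) (by linarith [hy.2])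
  · refine le_add_of_nonneg_of_le (by positivity) ?_
    gcongr
    exact one_div_one_add_pow_le_mul_pow m hL (by linarith)

lemma integral_one_div_one_add_pow_le {S L x : ℝ} {m : ℕ} (hα : -1 < α) (hβ : -1 < β)
    (hm : |α| + 2 ≤ 2 * m) (hL : 0 < L) (hLS : L ≤ S) (hx₀ : 0 ≤ x) (hxS : 1 - x ≤ S)
    (h : S / 8 ≤ 1 - x ∨ S / 2 ≤ L) :
    ∫ y, 1 / (1 + ((y - x) / L) ^ (2 * m)) ∂jacobiMeasure α β ≤
      2 ^ |β| * (16 ^ |α| * 2 ^ (2 * m) * S ^ α * (L * Real.pi) +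
        16 * L / S * ((S / 16) ^ (α + 1) / (α + 1))) +
      (2 * L) ^ (2 * m) * ∫ y in Ioo (-1) 1, w α β y := by
  have hS : 0 < S := hL.trans_le hLS
  have hbump := integrable_inv_one_add_sub_div_sq x hL.ne'
  have hind := (integrable_indicator_Ioo_rpow hα (by positivity : 0 ≤ S / 16)).comp_sub_left 1
  have hbump_le : ∫ y in Ioo (-1 : ℝ) 1, (1 + ((y - x) / L) ^ 2)⁻¹ ≤ L * Real.pi := by
    refine (setIntegral_le_integral hbump (.of_forall fun y => ?_)).trans_eq ?_
    · exact inv_nonneg.2 (by positivity)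
    · rw [integral_inv_one_add_sub_div_sq, abs_of_pos hL]
  have hind_le : ∫ y in Ioo (-1 : ℝ) 1, (Ioo 0 (S / 16)).indicator (fun t => t ^ α) (1 - y) ≤
      (S / 16) ^ (α + 1) / (α + 1) := by
    refine (setIntegral_le_integral hind (.of_forall fun y => ?_)).trans_eq ?_
    · exact indicator_nonneg (fun t ht => Real.rpow_nonneg ht.1.le _) _
    · rw [integral_sub_left_eq_self _ _ (1 : ℝ), integral_indicator_Ioo_rpow hα (by positivity)]
  have hA := (hbump.integrableOn (s := Ioo (-1) 1)).const_mul (16 ^ |α| * 2 ^ (2 * m) * S ^ α)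
  have hB := (hind.integrableOn (s := Ioo (-1) 1)).const_mul (16 * L / S)
  have hW := (integrableOn_w hα hβ).const_mul ((2 * L) ^ (2 * m))
  rw [integral_jacobiMeasure]
  refine (integral_mono_of_nonneg ?_ (((hA.add hB).const_mul (2 ^ |β|)).add hW) ?_).trans ?_
  · filter_upwards [ae_restrict_mem measurableSet_Ioo] with y hy
    have := w_pos (α := α) (β := β) hy
    have : 0 ≤ ((y - x) / L) ^ (2 * m) := (even_two_mul m).pow_nonneg _
    positivity
  · filter_upwards [ae_restrict_mem measurableSet_Ioo] with y hy
      using one_div_one_add_pow_mul_w_le hm hL hLS hx₀ hxS h hy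
  · rw [integral_add' ((hA.add hB).const_mul _) hW, integral_const_mul, integral_const_mul,
      integral_add' hA hB, integral_const_mul, integral_const_mul]
    gcongr

lemma pow_le_rpow_mul {S L M : ℝ} {m : ℕ} (hm : 1 ≤ m) (hαm : α + 1 ≤ m) (hL : 0 < L)
    (hLS : L ≤ S) (hSM : S ≤ M) : L ^ m ≤ M ^ (m - 1 - α) * (S ^ α * L) := by
  have hS : 0 < S := hL.trans_le hLS
  calc L ^ m = L ^ (m - 1) * L := by rw [← pow_succ, Nat.sub_add_cancel hm]
    _ ≤ S ^ (m - 1) * L := by gcongr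
    _ = S ^ (m - 1 - α) * S ^ α * L := by
        rw [← Real.rpow_add hS, ← Real.rpow_natCast, Nat.cast_sub hm]
        norm_num
    _ ≤ M ^ (m - 1 - α) * S ^ α * L := by
        gcongr
        linarith
    _ = _ := mul_assoc _ _ _

lemma exists_integral_one_div_one_add_pow_le (hα : -1 < α) (hβ : -1 < β) {m : ℕ}
    (hm : |α| + 2 ≤ 2 * m) :
    ∃ C, 0 ≤ C ∧ ∀ (n : ℕ) (x : ℝ), 1 ≤ n → 0 ≤ x → x ≤ 1 →
      ∫ y, 1 / (1 + ((y - x) / (polyScale n x / n)) ^ (2 * m)) ∂jacobiMeasure α β ≤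
        C * ((polyScale n x ^ 2) ^ α * (polyScale n x / n)) := by
  have : 0 < α + 1 := by linarith
  have hW : 0 ≤ ∫ y in Ioo (-1) 1, w α β y :=
    setIntegral_nonneg measurableSet_Ioo fun y hy => (w_pos hy).le
  refine ⟨2 ^ |β| * (16 ^ |α| * 2 ^ (2 * m) * Real.pi + 16 * (1 / 16) ^ (α + 1) / (α + 1)) +
    2 ^ (2 * m) * 4 ^ ((2 * m : ℕ) - 1 - α) * ∫ y in Ioo (-1) 1, w α β y,
    by positivity, fun n x hn hx₀ hx₁ => ?_⟩
  have hσ := polyScale_pos hn x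
  have hσ2 := polyScale_le_two hn x
  have hLS := polyScale_div_le_sq hn x
  have hlocal := integral_one_div_one_add_pow_le hα hβ hm (by positivity) hLS hx₀
    (one_sub_le_polyScale_sq n hx₀ hx₁) (polyScale_sq_le_or hn hx₀ hx₁)
  set S := polyScale n x ^ 2
  set L := polyScale n x / n
  have hS0 : 0 < S := by positivity
  have hm1 : 1 ≤ 2 * m := by
    have : (1 : ℝ) ≤ (2 * m : ℕ) := by
      push_cast
      linarith [abs_nonneg α]
    exact_mod_cast this
  have hpow : L ^ (2 * m) ≤ 4 ^ ((2 * m : ℕ) - 1 - α) * (S ^ α * L) := by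
    refine pow_le_rpow_mul hm1 ?_ (by positivity) hLS (by nlinarith)
    push_cast
    linarith [le_abs_self α]
  have hrpow : (S / 16) ^ (α + 1) = (1 / 16) ^ (α + 1) * (S ^ α * S) := by
    rw [div_eq_mul_one_div, mul_comm, Real.mul_rpow (by norm_num) hS0.le,
      Real.rpow_add_one hS0.ne']
  refine hlocal.trans ?_
  rw [mul_pow, hrpow]
  calc _ ≤ 2 ^ |β| * (16 ^ |α| * 2 ^ (2 * m) * S ^ α * (L * Real.pi) +
          16 * L / S * ((1 / 16) ^ (α + 1) * (S ^ α * S) / (α + 1))) +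
        2 ^ (2 * m) * (4 ^ ((2 * m : ℕ) - 1 - α) * (S ^ α * L)) *
          ∫ y in Ioo (-1) 1, w α β y := by gcongr
    _ = _ := by field_simp

end Localisation

/-! ### Lebesgue constants -/

section LebesgueConstant

variable {α β : ℝ} {η : ℝ → ℝ}

lemma valleePoussinKernel_comm (α β : ℝ) (η : ℝ → ℝ) (n : ℕ) (x y : ℝ) :
    valleePoussinKernel α β η n x y = valleePoussinKernel α β η n y x := by
  unfold valleePoussinKernel jacobiSum
  exact Finset.sum_congr rfl fun k _ => by ring

lemma continuous_uncurry_valleePoussinKernel (α β : ℝ) (η : ℝ → ℝ) (n : ℕ) :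
    Continuous (valleePoussinKernel α β η n).uncurry := by
  unfold valleePoussinKernel jacobiSum Function.uncurry
  fun_prop

@[fun_prop]
lemma continuous_valleePoussinKernel (α β : ℝ) (η : ℝ → ℝ) (n : ℕ) (x : ℝ) :
    Continuous (valleePoussinKernel α β η n x) :=
  (continuous_uncurry_valleePoussinKernel α β η n).uncurry_left x

lemma valleePoussinKernel_neg_neg (hα : -1 < α) (hβ : -1 < β) (η : ℝ → ℝ) (n : ℕ) (x y : ℝ) :
    valleePoussinKernel β α η n (-x) (-y) = valleePoussinKernel α β η n x y := by
  unfold valleePoussinKernel jacobiSum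
  refine Finset.sum_congr rfl fun k _ => ?_
  simp only [scaledJacobi_neg hα hβ, scaledJacobiNormSq_symm hα hβ]
  have hsign : (-1 : ℝ) ^ k * (-1) ^ k = 1 := by rw [← mul_pow]; norm_num
  linear_combination
    (η (k / n) * scaledJacobi α β k x * scaledJacobi α β k y / scaledJacobiNormSq α β k) * hsign

lemma exists_integral_abs_kernel_le_of_fixed (hα : -1 < α) (hβ : -1 < β) (η : ℝ → ℝ) (n : ℕ) :
    ∃ C, 0 ≤ C ∧ ∀ x ∈ Icc (-1 : ℝ) 1,
      ∫ y, |valleePoussinKernel α β η n x y| ∂jacobiMeasure α β ≤ C := by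
  have := isFiniteMeasure_jacobiMeasure hα hβ
  obtain ⟨C, hC⟩ := (isCompact_Icc.prod isCompact_Icc).exists_bound_of_continuousOn
    (s := Icc (-1 : ℝ) 1 ×ˢ Icc (-1 : ℝ) 1)
    (continuous_uncurry_valleePoussinKernel α β η n).continuousOn
  have hC0 : 0 ≤ C := (norm_nonneg _).trans (hC (0, 0) (by simp))
  refine ⟨∫ _, C ∂jacobiMeasure α β, integral_nonneg fun _ => hC0, fun x hx => ?_⟩
  refine integral_mono_ae (integrable_of_continuous hα hβ (by fun_prop)) (integrable_const C) ?_
  filter_upwards [ae_jacobiMeasure_mem_Ioo] with y hy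
    using hC (x, y) ⟨hx, hy.1.le, hy.2.le⟩

lemma abs_le_mul_sq_add_inv (z : ℝ) {lam : ℝ} (hlam : 0 < lam) : |z| ≤ lam * z ^ 2 + lam⁻¹ := by
  refine le_of_mul_le_mul_left ?_ hlam
  have : 0 ≤ lam * |z| := by positivity
  rw [mul_add, mul_inv_cancel₀ hlam.ne', ← sq_abs]
  nlinarith [sq_nonneg (lam * |z| - 1)]

/-- Weighted AM-GM, with the weight `lam * (1 + ((y - x) / L) ^ (2 * m))`. -/
lemma integral_abs_le_of_integral_sq_le {K : ℝ → ℝ} (hα : -1 < α) (hβ : -1 < β)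
    (hK : Continuous K) (m : ℕ) (x : ℝ) {L lam : ℝ} (hL : 0 < L) (hlam : 0 < lam) :
    ∫ y, |K y| ∂jacobiMeasure α β ≤
      lam * ∫ y, K y ^ 2 ∂jacobiMeasure α β +
      lam / (L ^ m) ^ 2 * ∫ y, ((y - x) ^ m * K y) ^ 2 ∂jacobiMeasure α β +
      lam⁻¹ * ∫ y, 1 / (1 + ((y - x) / L) ^ (2 * m)) ∂jacobiMeasure α β := by
  have hD (y : ℝ) : 0 < 1 + ((y - x) / L) ^ (2 * m) :=
    add_pos_of_pos_of_nonneg one_pos ((even_two_mul m).pow_nonneg _)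
  have hA : Integrable (fun y => lam * K y ^ 2) (jacobiMeasure α β) :=
    integrable_of_continuous hα hβ (by fun_prop)
  have hB : Integrable (fun y => lam / (L ^ m) ^ 2 * ((y - x) ^ m * K y) ^ 2)
      (jacobiMeasure α β) := integrable_of_continuous hα hβ (by fun_prop)
  have hC : Integrable (fun y => lam⁻¹ * (1 / (1 + ((y - x) / L) ^ (2 * m))))
      (jacobiMeasure α β) := integrable_of_continuous hα hβ
    (continuous_const.mul (.div (by fun_prop) (by fun_prop) fun y => (hD y).ne'))
  rw [← integral_const_mul, ← integral_const_mul, ← integral_const_mul, ← integral_add' hA hB,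
    ← integral_add' (hA.add hB) hC]
  refine integral_mono (integrable_of_continuous hα hβ hK.abs) ((hA.add hB).add hC) fun y => ?_
  refine (abs_le_mul_sq_add_inv (K y) (mul_pos hlam (hD y))).trans_eq ?_
  change _ = lam * K y ^ 2 + lam / (L ^ m) ^ 2 * ((y - x) ^ m * K y) ^ 2 +
    lam⁻¹ * (1 / (1 + ((y - x) / L) ^ (2 * m)))
  have := hL.ne'
  rw [mul_inv, one_div]
  congr 1
  rw [mul_comm 2 m, pow_mul, div_pow, div_pow]
  ring

lemma sq_rpow_mul_rpow_sq {σ : ℝ} (hσ : 0 < σ) (a : ℝ) :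
    (σ ^ (-(a + 1 / 2))) ^ 2 * ((σ ^ 2) ^ a * σ) = 1 := by
  rw [← Real.rpow_natCast, ← Real.rpow_natCast, ← Real.rpow_mul hσ.le, ← Real.rpow_mul hσ.le,
    ← Real.rpow_add_one hσ.ne', ← Real.rpow_add hσ]
  convert Real.rpow_zero σ using 2
  push_cast
  ring

lemma exists_integral_abs_kernel_le_of_large (hα : -1 < α) (hβ : -1 < β) (hη : Admissible η) :
    ∃ (C : ℝ) (N : ℕ), 0 ≤ C ∧ ∀ (n : ℕ) (x : ℝ), N ≤ n → 0 ≤ x → x ≤ 1 →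
      ∫ y, |valleePoussinKernel α β η n x y| ∂jacobiMeasure α β ≤ C := by
  obtain ⟨m, hm⟩ := exists_nat_ge (|α| + 2)
  obtain ⟨C₀, hC₀, h₀⟩ := exists_integral_sub_pow_mul_kernel_sq_le hα hβ hη 0
  obtain ⟨C₁, hC₁, h₁⟩ := exists_integral_sub_pow_mul_kernel_sq_le hα hβ hη m
  obtain ⟨C₂, hC₂, h₂⟩ := exists_integral_one_div_one_add_pow_le hα hβ (m := m)
    (by linarith [abs_nonneg α])
  refine ⟨C₀ + C₁ + C₂, 4 * m + 1, by positivity, fun n x hn hx₀ hx₁ => ?_⟩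
  have hn1 : 1 ≤ n := by omega
  specialize h₀ n x hn1 (by omega) hx₀ hx₁
  specialize h₁ n x hn1 (by omega) hx₀ hx₁
  specialize h₂ n x hn1 hx₀ hx₁
  have : (0 : ℝ) < n := by exact_mod_cast hn1
  have hσ := polyScale_pos hn1 x
  have hunit := sq_rpow_mul_rpow_sq hσ α
  have he : 0 < polyScale n x ^ (-(α + 1 / 2)) := Real.rpow_pos_of_pos hσ _
  set σ := polyScale n x
  set e := σ ^ (-(α + 1 / 2))
  simp only [pow_zero, one_mul] at h₀
  have hL : 0 < σ / n := by positivity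
  have hlam : 0 < (n * e ^ 2)⁻¹ := by positivity
  refine (integral_abs_le_of_integral_sq_le hα hβ (by fun_prop) m x hL hlam).trans ?_
  rw [inv_inv]
  gcongr ?_ + ?_ + ?_
  · rwa [inv_mul_le_iff₀ (by positivity), mul_comm _ C₀]
  · calc _ ≤ (n * e ^ 2)⁻¹ / ((σ / n) ^ m) ^ 2 * (C₁ * (n * ((σ / n) ^ m * e) ^ 2)) := by gcongr
      _ = C₁ := by field_simp
  · calc _ ≤ n * e ^ 2 * (C₂ * ((σ ^ 2) ^ α * (σ / n))) := by gcongr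
      _ = C₂ * (e ^ 2 * ((σ ^ 2) ^ α * σ)) := by field_simp
      _ = C₂ := by rw [hunit, mul_one]

lemma exists_integral_abs_kernel_le (hα : -1 < α) (hβ : -1 < β) (hη : Admissible η) :
    ∃ C, 0 ≤ C ∧ ∀ (n : ℕ), ∀ x ∈ Icc (-1 : ℝ) 1,
      ∫ y, |valleePoussinKernel α β η n x y| ∂jacobiMeasure α β ≤ C := by
  obtain ⟨C₁, N₁, hC₁, h₁⟩ := exists_integral_abs_kernel_le_of_large hα hβ hη
  obtain ⟨C₂, N₂, hC₂, h₂⟩ := exists_integral_abs_kernel_le_of_large hβ hα hη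
  choose D hD₀ hD using exists_integral_abs_kernel_le_of_fixed hα hβ η
  have hsum : 0 ≤ ∑ n ∈ Finset.range (N₁ + N₂), D n := Finset.sum_nonneg fun n _ => hD₀ n
  refine ⟨C₁ + C₂ + ∑ n ∈ Finset.range (N₁ + N₂), D n, by positivity, fun n x hx => ?_⟩
  rcases lt_or_ge n (N₁ + N₂) with hn | hn
  · have := Finset.single_le_sum (f := D) (fun n _ => hD₀ n) (Finset.mem_range.2 hn)
    linarith [hD n x hx]
  rcases le_total 0 x with hx₀ | hx₀
  · linarith [h₁ n x (by omega) hx₀ hx.2]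
  · have hneg := h₂ n (-x) (by omega) (by linarith) (by linarith [hx.1])
    rw [← integral_jacobiMeasure_comp_neg] at hneg
    simp only [valleePoussinKernel_neg_neg hα hβ] at hneg
    linarith

end LebesgueConstant

/-! ### The Schur test -/

section SchurTest

variable {X Y : Type*} [MeasurableSpace X] [MeasurableSpace Y]

lemma rpow_lintegral_mul_le {μ : Measure X} {k f : X → ℝ≥0∞} (hk : AEMeasurable k μ)
    (hf : AEMeasurable f μ) {r : ℝ} (hr : 1 ≤ r) :
    (∫⁻ x, k x * f x ∂μ) ^ r ≤ (∫⁻ x, k x ∂μ) ^ (r - 1) * ∫⁻ x, k x * f x ^ r ∂μ := by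
  have hr0 : 0 < r := by linarith
  have hconj : 0 ≤ 1 - r⁻¹ := sub_nonneg.2 (inv_le_one_of_one_le₀ hr)
  have hinv : 0 ≤ r⁻¹ := inv_nonneg.2 hr0.le
  have hsplit (x : X) : k x * f x = k x ^ (1 - r⁻¹) * (k x * f x ^ r) ^ r⁻¹ := by
    rw [ENNReal.mul_rpow_of_nonneg _ _ hinv, ENNReal.rpow_rpow_inv hr0.ne', ← mul_assoc,
      ← ENNReal.rpow_add_of_nonneg _ _ hconj hinv, sub_add_cancel, ENNReal.rpow_one]
  simp only [hsplit]
  calc _ ≤ ((∫⁻ x, k x ∂μ) ^ (1 - r⁻¹) * (∫⁻ x, k x * f x ^ r ∂μ) ^ r⁻¹) ^ r := by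
        gcongr
        exact ENNReal.lintegral_mul_norm_pow_le hk (hk.mul (hf.pow_const r)) hconj hinv
          (sub_add_cancel _ _)
    _ = _ := by
        rw [ENNReal.mul_rpow_of_nonneg _ _ hr0.le, ENNReal.rpow_inv_rpow hr0.ne',
          ← ENNReal.rpow_mul, sub_mul, one_mul, inv_mul_cancel₀ hr0.ne']

lemma lintegral_rpow_lintegral_mul_le {μ : Measure X} {ν : Measure Y} [SFinite μ] [SFinite ν]
    {k : X → Y → ℝ≥0∞} {f : Y → ℝ≥0∞} {C : ℝ≥0} (hk : Measurable k.uncurry) (hf : Measurable f)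
    (hrow : ∀ᵐ x ∂μ, ∫⁻ y, k x y ∂ν ≤ C) (hcol : ∀ᵐ y ∂ν, ∫⁻ x, k x y ∂μ ≤ C) {r : ℝ}
    (hr : 1 ≤ r) :
    ∫⁻ x, (∫⁻ y, k x y * f y ∂ν) ^ r ∂μ ≤ C ^ r * ∫⁻ y, f y ^ r ∂ν := by
  have hr1 : 0 ≤ r - 1 := sub_nonneg.2 hr
  calc _ ≤ ∫⁻ x, (C : ℝ≥0∞) ^ (r - 1) * ∫⁻ y, k x y * f y ^ r ∂ν ∂μ := by
        refine lintegral_mono_ae ?_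
        filter_upwards [hrow] with x hx
        refine (rpow_lintegral_mul_le hk.of_uncurry_left.aemeasurable hf.aemeasurable hr).trans ?_
        gcongr
    _ = C ^ (r - 1) * ∫⁻ y, ∫⁻ x, k x y * f y ^ r ∂μ ∂ν := by
        rw [lintegral_const_mul' _ _ (ENNReal.rpow_ne_top_of_nonneg hr1 ENNReal.coe_ne_top),
          lintegral_lintegral_swap]
        exact (hk.mul ((hf.comp measurable_snd).pow_const r)).aemeasurable
    _ ≤ C ^ (r - 1) * ∫⁻ y, C * f y ^ r ∂ν := by
        gcongr 1
        refine lintegral_mono_ae ?_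
        filter_upwards [hcol] with y hy
        rw [lintegral_mul_const _ hk.of_uncurry_right]
        gcongr
    _ = C ^ r * ∫⁻ y, f y ^ r ∂ν := by
        rw [lintegral_const_mul' _ _ ENNReal.coe_ne_top, ← mul_assoc]
        nth_rewrite 2 [← ENNReal.rpow_one (C : ℝ≥0∞)]
        rw [← ENNReal.rpow_add_of_nonneg _ _ hr1 zero_le_one, sub_add_cancel]

lemma eLpNorm_integral_mul_le {𝕜 : Type*} [RCLike 𝕜] {μ : Measure X} {ν : Measure Y} [SFinite μ]
    [SFinite ν] {K : X → Y → 𝕜} {f : Y → 𝕜} {C : ℝ≥0} (hK : Measurable K.uncurry)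
    (hf : Measurable f) (hrow : ∀ᵐ x ∂μ, ∫⁻ y, ‖K x y‖ₑ ∂ν ≤ C)
    (hcol : ∀ᵐ y ∂ν, ∫⁻ x, ‖K x y‖ₑ ∂μ ≤ C) {p : ℝ≥0∞} (hp : 1 ≤ p) (hp_top : p ≠ ⊤) :
    eLpNorm (fun x => ∫ y, f y * K x y ∂ν) p μ ≤ C * eLpNorm f p ν := by
  have hp0 : p ≠ 0 := (zero_lt_one.trans_le hp).ne'
  have hr : 1 ≤ p.toReal := by simpa using ENNReal.toReal_mono hp_top hp
  have hr0 : p.toReal ≠ 0 := by positivity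
  have hmain : ∫⁻ x, ‖∫ y, f y * K x y ∂ν‖ₑ ^ p.toReal ∂μ ≤
      C ^ p.toReal * ∫⁻ y, ‖f y‖ₑ ^ p.toReal ∂ν := by
    refine (lintegral_mono fun x => ?_).trans
      (lintegral_rpow_lintegral_mul_le (k := fun x y => ‖K x y‖ₑ) hK.enorm hf.enorm hrow hcol hr)
    gcongr
    refine (enorm_integral_le_lintegral_enorm _).trans_eq (lintegral_congr fun y => ?_)
    rw [enorm_mul, mul_comm]
  rw [eLpNorm_eq_lintegral_rpow_enorm_toReal hp0 hp_top,
    eLpNorm_eq_lintegral_rpow_enorm_toReal hp0 hp_top]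
  calc _ ≤ ((C : ℝ≥0∞) ^ p.toReal * ∫⁻ y, ‖f y‖ₑ ^ p.toReal ∂ν) ^ (1 / p.toReal) := by gcongr
    _ = _ := by
      rw [ENNReal.mul_rpow_of_nonneg _ _ (by positivity), ← ENNReal.rpow_mul,
        mul_one_div_cancel hr0, ENNReal.rpow_one]

end SchurTest

/-! ### Boundedness of the operators `V` -/

section Boundedness

variable {α β : ℝ} {η : ℝ → ℝ} {p : ℝ≥0∞} {f g : ℝ → ℝ} {n : ℕ}

lemma LpW_eq_toReal_eLpNorm (hp0 : p ≠ 0) (hp_top : p ≠ ⊤) (hf : Measurable f) :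
    LpW α β p f = (eLpNorm f p (jacobiMeasure α β)).toReal := by
  rw [LpW, if_neg hp_top, eLpNorm_eq_lintegral_rpow_enorm_toReal hp0 hp_top, ← ENNReal.toReal_rpow,
    ← integral_jacobiMeasure fun x => |f x| ^ p.toReal,
    integral_eq_lintegral_of_nonneg_ae (.of_forall fun x => by positivity)
      (hf.abs.pow_const _).aestronglyMeasurable]
  simp only [← ENNReal.ofReal_rpow_of_nonneg (abs_nonneg _) ENNReal.toReal_nonneg,
    Real.enorm_eq_ofReal_abs]

lemma memLpW_iff_memLp (hp0 : p ≠ 0) (hp_top : p ≠ ⊤) :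
    MemLpW α β p f ↔ Measurable f ∧ MemLp f p (jacobiMeasure α β) := by
  refine and_congr_right fun hf => ?_
  rw [← integrable_norm_rpow_iff hf.aestronglyMeasurable hp0 hp_top, integrable_jacobiMeasure_iff]
  simp [hp_top]

lemma memLpW_top_iff : MemLpW α β ⊤ f ↔ Measurable f ∧ ContinuousOn f (Icc (-1) 1) := by
  simp [MemLpW]

lemma memLp_of_continuousOn (hα : -1 < α) (hβ : -1 < β) (hf : Measurable f)
    (hfc : ContinuousOn f (Icc (-1) 1)) : MemLp f p (jacobiMeasure α β) := by
  have := isFiniteMeasure_jacobiMeasure hα hβ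
  obtain ⟨M, hM⟩ := isCompact_Icc.exists_bound_of_continuousOn hfc
  refine MemLp.of_bound hf.aestronglyMeasurable M ?_
  filter_upwards [ae_jacobiMeasure_mem_Ioo] with x hx using hM x (Ioo_subset_Icc_self hx)

lemma MemLpW.memLp (hα : -1 < α) (hβ : -1 < β) (hp : 1 ≤ p) (hf : MemLpW α β p f) :
    MemLp f p (jacobiMeasure α β) := by
  by_cases hp_top : p = ⊤
  · exact memLp_of_continuousOn hα hβ hf.1 (hf.2.2 hp_top)
  · exact ((memLpW_iff_memLp (zero_lt_one.trans_le hp).ne' hp_top).1 hf).2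

lemma MemLpW.integrable (hα : -1 < α) (hβ : -1 < β) (hp : 1 ≤ p) (hf : MemLpW α β p f) :
    Integrable f (jacobiMeasure α β) := by
  have := isFiniteMeasure_jacobiMeasure hα hβ
  exact (hf.memLp hα hβ hp).integrable hp

lemma MemLpW.sub_continuous (hα : -1 < α) (hβ : -1 < β) (hp : 1 ≤ p) (hf : MemLpW α β p f)
    (hg : Continuous g) : MemLpW α β p fun x => f x - g x := by
  by_cases hp_top : p = ⊤
  · subst hp_top
    exact memLpW_top_iff.2 ⟨hf.1.sub hg.measurable, (hf.2.2 rfl).sub hg.continuousOn⟩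
  · exact (memLpW_iff_memLp (zero_lt_one.trans_le hp).ne' hp_top).2 ⟨hf.1.sub hg.measurable,
      (hf.memLp hα hβ hp).sub (memLp_of_continuousOn hα hβ hg.measurable hg.continuousOn)⟩

lemma abs_le_LpW_top (hf : ContinuousOn f (Icc (-1) 1)) {x : ℝ} (hx : x ∈ Icc (-1 : ℝ) 1) :
    |f x| ≤ LpW α β ⊤ f := by
  rw [LpW, if_pos rfl]
  exact le_csSup (isCompact_Icc.image_of_continuousOn hf.abs).bddAbove (mem_image_of_mem _ hx)

lemma LpW_top_le {M : ℝ} (hM : ∀ x ∈ Icc (-1 : ℝ) 1, |f x| ≤ M) : LpW α β ⊤ f ≤ M := by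
  rw [LpW, if_pos rfl]
  exact csSup_le ((nonempty_Icc.2 (by norm_num)).image _) (forall_mem_image.2 hM)

lemma V_sub (hα : -1 < α) (hβ : -1 < β) (hf : Integrable f (jacobiMeasure α β))
    (hg : Integrable g (jacobiMeasure α β)) (x : ℝ) :
    V η α β n (fun y => f y - g y) x = V η α β n f x - V η α β n g x := by
  have hK := continuous_valleePoussinKernel α β η n x
  have hfg : Integrable (fun y => f y - g y) (jacobiMeasure α β) := hf.sub hg
  rw [V_eq_integral hα hβ hfg, V_eq_integral hα hβ hf, V_eq_integral hα hβ hg,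
    ← integral_sub (integrable_mul_continuous hf hK) (integrable_mul_continuous hg hK)]
  simp only [sub_mul]

lemma measurable_V (f : ℝ → ℝ) : Measurable (V η α β n f) := by
  unfold V J JP
  fun_prop

lemma eLpNorm_V_le {C : ℝ≥0} (hα : -1 < α) (hβ : -1 < β)
    (hK : ∀ x ∈ Icc (-1 : ℝ) 1, ∫ y, |valleePoussinKernel α β η n x y| ∂jacobiMeasure α β ≤ C)
    (hp : 1 ≤ p) (hp_top : p ≠ ⊤) (hf : MemLpW α β p f) :
    eLpNorm (V η α β n f) p (jacobiMeasure α β) ≤ C * eLpNorm f p (jacobiMeasure α β) := by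
  have := isFiniteMeasure_jacobiMeasure hα hβ
  have hrow : ∀ᵐ x ∂jacobiMeasure α β,
      ∫⁻ y, ‖valleePoussinKernel α β η n x y‖ₑ ∂jacobiMeasure α β ≤ C := by
    filter_upwards [ae_jacobiMeasure_mem_Ioo] with x hx
    rw [← ofReal_integral_norm_eq_lintegral_enorm
      (integrable_of_continuous hα hβ (continuous_valleePoussinKernel α β η n x))]
    exact (ENNReal.ofReal_le_ofReal (hK x (Ioo_subset_Icc_self hx))).trans_eq
      (ENNReal.ofReal_coe_nnreal)
  rw [funext (V_eq_integral hα hβ (hf.integrable hα hβ hp) n)]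
  refine eLpNorm_integral_mul_le
    (continuous_uncurry_valleePoussinKernel α β η n).measurable hf.1 hrow ?_ hp hp_top
  simpa only [valleePoussinKernel_comm α β η n] using hrow

lemma abs_V_le {C : ℝ} (hα : -1 < α) (hβ : -1 < β) {x : ℝ}
    (hK : ∫ y, |valleePoussinKernel α β η n x y| ∂jacobiMeasure α β ≤ C)
    (hf : MemLpW α β ⊤ f) : |V η α β n f x| ≤ C * LpW α β ⊤ f := by
  have hKc := continuous_valleePoussinKernel α β η n x
  have hfi := hf.integrable hα hβ le_top
  have hf0 : 0 ≤ LpW α β ⊤ f :=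
    (abs_nonneg _).trans (abs_le_LpW_top (hf.2.2 rfl) (x := 0) (by norm_num))
  rw [V_eq_integral hα hβ hfi]
  calc _ ≤ ∫ y, |f y * valleePoussinKernel α β η n x y| ∂jacobiMeasure α β :=
        abs_integral_le_integral_abs
    _ ≤ ∫ y, |valleePoussinKernel α β η n x y| * LpW α β ⊤ f ∂jacobiMeasure α β := by
        refine integral_mono_ae (integrable_mul_continuous hfi hKc).abs
          ((integrable_of_continuous hα hβ hKc.abs).mul_const _) ?_
        filter_upwards [ae_jacobiMeasure_mem_Ioo] with y hy
        rw [abs_mul, mul_comm]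
        gcongr
        exact abs_le_LpW_top (hf.2.2 rfl) (Ioo_subset_Icc_self hy)
    _ ≤ C * LpW α β ⊤ f := by
        rw [integral_mul_const]
        gcongr

lemma LpW_sub_V_le {C : ℝ≥0} (hα : -1 < α) (hβ : -1 < β)
    (hK : ∀ x ∈ Icc (-1 : ℝ) 1, ∫ y, |valleePoussinKernel α β η n x y| ∂jacobiMeasure α β ≤ C)
    (hp : 1 ≤ p) (hf : MemLpW α β p f) :
    LpW α β p (fun x => f x - V η α β n f x) ≤ (1 + C) * LpW α β p f := by
  by_cases hp_top : p = ⊤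
  · subst hp_top
    refine LpW_top_le fun x hx => (abs_sub _ _).trans ?_
    rw [add_mul, one_mul]
    exact add_le_add (abs_le_LpW_top (hf.2.2 rfl) hx) (abs_V_le hα hβ (hK x hx) hf)
  have hp0 := (zero_lt_one.trans_le hp).ne'
  have hV : Measurable (V η α β n f) := measurable_V f
  rw [LpW_eq_toReal_eLpNorm hp0 hp_top (hf.1.fun_sub hV), LpW_eq_toReal_eLpNorm hp0 hp_top hf.1]
  have hnorm : eLpNorm (fun x => f x - V η α β n f x) p (jacobiMeasure α β) ≤
      (1 + C : ℝ≥0) * eLpNorm f p (jacobiMeasure α β) := by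
    refine (eLpNorm_sub_le hf.1.aestronglyMeasurable hV.aestronglyMeasurable hp).trans ?_
    push_cast
    rw [add_mul, one_mul]
    gcongr
    exact eLpNorm_V_le hα hβ hK hp hp_top hf
  have hreal := ENNReal.toReal_mono
    (ENNReal.mul_ne_top ENNReal.coe_ne_top (hf.memLp hα hβ hp).2.ne) hnorm
  rwa [ENNReal.toReal_mul, ENNReal.coe_toReal, NNReal.coe_add, NNReal.coe_one] at hreal

lemma sub_V_eq_sub_V (hα : -1 < α) (hβ : -1 < β) (hη : Admissible η) (hn : 1 ≤ n)
    (hf : Integrable f (jacobiMeasure α β)) {q : Polynomial ℝ} (hq : q.natDegree ≤ n) (x : ℝ) :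
    f x - V η α β n f x = f x - q.eval x - V η α β n (fun y => f y - q.eval y) x := by
  rw [V_sub hα hβ hf (integrable_of_continuous hα hβ q.continuous), V_eval hα hβ hη hn hq,
    sub_sub_sub_cancel_right]

end Boundedness

theorem statement2 (α β : ℝ) (hα : -1 < α) (hβ : -1 < β) (p : ℝ≥0∞) (hp : 1 ≤ p)
    (η : ℝ → ℝ) (hη : Admissible η) :
    ∃ c : ℝ, 0 < c ∧ ∀ f : ℝ → ℝ, MemLpW α β p f → ∀ n : ℕ, 1 ≤ n →
      LpW α β p (fun x => f x - V η α β n f x) ≤ c * E α β p n f := by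
  obtain ⟨C, hC, hK⟩ := exists_integral_abs_kernel_le hα hβ hη
  lift C to ℝ≥0 using hC
  have hc : (0 : ℝ) < 1 + C := by positivity
  refine ⟨1 + C, hc, fun f hf n hn => ?_⟩
  rw [← div_le_iff₀' hc]
  refine le_csInf ⟨_, 0, by simp, rfl⟩ ?_
  rintro _ ⟨q, hq, rfl⟩
  rw [div_le_iff₀' hc]
  simp only [sub_V_eq_sub_V hα hβ hη hn (hf.integrable hα hβ hp) hq]
  exact LpW_sub_V_le hα hβ (hK n) hp (hf.sub_continuous hα hβ hp q.continuous)

end JacobiApprox
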